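/- For every integer j with 0 ≤ j < 12, the space S_{j,2}(Γ₂[2]) of Siegel cusp forms of degree 2 and weight (j,2) on the principal congruence subgroup Γ₂[2] of level 2 is zero; in particular every S₆-isotypic component of S_{j,2}(Γ₂[2]) vanishes for j < 12. -/

import Mathlib

noncomputable section

open Matrix Complex Filter Topology

/-- The standard symplectic form matrix of size 4. -/
def J4 : Matrix (Fin 4) (Fin 4) ℤ := !![0,0,1,0; 0,0,0,1; -1,0,0,0; 0,-1,0,0]

/-- The Siegel modular group `Γ₂ = Sp(4,ℤ)`, as a set of 4×4 integer matrices. -/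
def Sp4Z : Set (Matrix (Fin 4) (Fin 4) ℤ) := {γ | γᵀ * J4 * γ = J4}

/-- The principal congruence subgroup `Γ₂[2]` of level 2. -/
def Sp4Z2 : Set (Matrix (Fin 4) (Fin 4) ℤ) :=
  {γ | γ ∈ Sp4Z ∧ ∀ i j, ((γ i j : ZMod 2) = if i = j then 1 else 0)}

/-- The Siegel upper half space of degree 2: symmetric 2×2 complex matrices with
positive definite imaginary part (encoded as functions `Fin 2 → Fin 2 → ℂ`). -/
def H2 : Set (Fin 2 → Fin 2 → ℂ) :=
  {τ | (Matrix.of τ).IsSymm ∧ (Matrix.of fun i j => (τ i j).im).PosDef}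

/-- The four 2×2 blocks of a 4×4 integer matrix, as complex matrices. -/
def blk (γ : Matrix (Fin 4) (Fin 4) ℤ) (r s : Fin 2) : Matrix (Fin 2) (Fin 2) ℂ :=
  Matrix.of fun i j =>
    ((γ ⟨2 * (r : ℕ) + (i : ℕ), by have h1 := r.isLt; have h2 := i.isLt; omega⟩
        ⟨2 * (s : ℕ) + (j : ℕ), by have h1 := s.isLt; have h2 := j.isLt; omega⟩ : ℤ) : ℂ)

/-- The factor `cτ + d`. -/
def den (γ : Matrix (Fin 4) (Fin 4) ℤ) (τ : Fin 2 → Fin 2 → ℂ) : Matrix (Fin 2) (Fin 2) ℂ :=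
  blk γ 1 0 * Matrix.of τ + blk γ 1 1

/-- The action `γ·τ = (aτ+b)(cτ+d)⁻¹` of `Sp(4)` on the Siegel upper half space. -/
def moeb (γ : Matrix (Fin 4) (Fin 4) ℤ) (τ : Fin 2 → Fin 2 → ℂ) : Fin 2 → Fin 2 → ℂ :=
  fun i j => ((blk γ 0 0 * Matrix.of τ + blk γ 0 1) * (den γ τ)⁻¹) i j

/-- Matrix coefficients of the `j`-th symmetric power of the standard representation of
`GL(2,ℂ)`, in the basis `x₁^(j-i) x₂^i`. -/
def symCoeff (j : ℕ) (m : Matrix (Fin 2) (Fin 2) ℂ) (l i : Fin (j + 1)) : ℂ :=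
  (((Polynomial.C (m 0 0) + Polynomial.C (m 1 0) * Polynomial.X) ^ (j - (l : ℕ)) *
    (Polynomial.C (m 0 1) + Polynomial.C (m 1 1) * Polynomial.X) ^ (l : ℕ)).coeff i)

/-- The `j`-th symmetric power `Sym^j(m)` acting on coordinate vectors. -/
def symAct (j : ℕ) (m : Matrix (Fin 2) (Fin 2) ℂ) (v : Fin (j + 1) → ℂ) : Fin (j + 1) → ℂ :=
  fun i => ∑ l, symCoeff j m l i * v l

lemma symAct_add (j : ℕ) (m : Matrix (Fin 2) (Fin 2) ℂ) (v w : Fin (j + 1) → ℂ) :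
    symAct j m (v + w) = symAct j m v + symAct j m w := by
  funext i
  simp [symAct, mul_add, Finset.sum_add_distrib]

lemma symAct_smul (j : ℕ) (m : Matrix (Fin 2) (Fin 2) ℂ) (a : ℂ) (v : Fin (j + 1) → ℂ) :
    symAct j m (a • v) = a • symAct j m v := by
  funext i
  simp only [symAct, Pi.smul_apply, smul_eq_mul, Finset.mul_sum]
  exact Finset.sum_congr rfl fun l _ => by ring

lemma symAct_zero (j : ℕ) (m : Matrix (Fin 2) (Fin 2) ℂ) : symAct j m 0 = 0 := by
  funext i; simp [symAct]

/-- The weight `(j,k)` automorphy action `Sym^j(m) ⊗ det(m)^k`. -/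
def wt (j : ℕ) (k : ℤ) (m : Matrix (Fin 2) (Fin 2) ℂ) (v : Fin (j + 1) → ℂ) :
    Fin (j + 1) → ℂ :=
  (m.det ^ k) • symAct j m v

lemma wt_add (j : ℕ) (k : ℤ) (m : Matrix (Fin 2) (Fin 2) ℂ) (v w : Fin (j + 1) → ℂ) :
    wt j k m (v + w) = wt j k m v + wt j k m w := by
  simp [wt, symAct_add, smul_add]

lemma wt_smul (j : ℕ) (k : ℤ) (m : Matrix (Fin 2) (Fin 2) ℂ) (a : ℂ) (v : Fin (j + 1) → ℂ) :
    wt j k m (a • v) = a • wt j k m v := by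
  rw [wt, wt, symAct_smul, smul_comm]

lemma wt_zero (j : ℕ) (k : ℤ) (m : Matrix (Fin 2) (Fin 2) ℂ) : wt j k m 0 = 0 := by
  simp [wt, symAct_zero]

/-- The slash operation `(F|γ)(τ) = Sym^j(cτ+d)⁻¹ det(cτ+d)⁻ᵏ F(γ·τ)`. -/
def slashS (j : ℕ) (k : ℤ) (γ : Matrix (Fin 4) (Fin 4) ℤ)
    (F : (Fin 2 → Fin 2 → ℂ) → (Fin (j + 1) → ℂ)) (τ : Fin 2 → Fin 2 → ℂ) :
    Fin (j + 1) → ℂ :=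
  ((den γ τ).det ^ (-k)) • symAct j ((den γ τ)⁻¹) (F (moeb γ τ))

lemma slashS_add (j : ℕ) (k : ℤ) (γ : Matrix (Fin 4) (Fin 4) ℤ)
    (F G : (Fin 2 → Fin 2 → ℂ) → (Fin (j + 1) → ℂ)) (τ : Fin 2 → Fin 2 → ℂ) :
    slashS j k γ (F + G) τ = slashS j k γ F τ + slashS j k γ G τ := by
  simp [slashS, symAct_add, smul_add]

lemma slashS_smul (j : ℕ) (k : ℤ) (γ : Matrix (Fin 4) (Fin 4) ℤ) (a : ℂ)
    (F : (Fin 2 → Fin 2 → ℂ) → (Fin (j + 1) → ℂ)) (τ : Fin 2 → Fin 2 → ℂ) :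
    slashS j k γ (a • F) τ = a • slashS j k γ F τ := by
  simp only [slashS, Pi.smul_apply, symAct_smul]
  rw [smul_comm]

lemma slashS_zero (j : ℕ) (k : ℤ) (γ : Matrix (Fin 4) (Fin 4) ℤ) (τ : Fin 2 → Fin 2 → ℂ) :
    slashS j k γ (0 : (Fin 2 → Fin 2 → ℂ) → (Fin (j + 1) → ℂ)) τ = 0 := by
  simp [slashS, symAct_zero]

/-- The diagonal point `diag(τ₁,τ₂)` of the Siegel upper half space. -/
def diagH (τ₁ τ₂ : ℂ) : Fin 2 → Fin 2 → ℂ :=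
  fun i j => if i = j then (if i = 0 then τ₁ else τ₂) else 0

/-- `F` is a Siegel cusp form of degree 2 and weight `(j,k)` on `Γ`, with character `χ`:
holomorphic on `ℍ₂`, transforming by `F(γ·τ) = χ(γ) Sym^j(cτ+d) det(cτ+d)^k F(τ)` for `γ ∈ Γ`,
with `(F|γ)(diag(τ₁,it)) → 0` as `t → ∞` for every `γ ∈ Γ₂`, and (normalization) vanishing
off `ℍ₂`. -/
def IsSiegelCuspForm (j : ℕ) (k : ℤ) (Γ : Set (Matrix (Fin 4) (Fin 4) ℤ))
    (χ : Matrix (Fin 4) (Fin 4) ℤ → ℂ)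
    (F : (Fin 2 → Fin 2 → ℂ) → (Fin (j + 1) → ℂ)) : Prop :=
  DifferentiableOn ℂ F H2 ∧
  (∀ γ ∈ Γ, ∀ τ ∈ H2, F (moeb γ τ) = χ γ • wt j k (den γ τ) (F τ)) ∧
  (∀ γ ∈ Sp4Z, ∀ τ₁ : ℂ, 0 < τ₁.im →
    Tendsto (fun t : ℝ => slashS j k γ F (diagH τ₁ (t * Complex.I))) atTop (𝓝 0)) ∧
  (∀ τ, τ ∉ H2 → F τ = 0)

/-- The space `S_{j,k}(Γ, χ)` of Siegel cusp forms of degree 2 and weight `(j,k)` on `Γ`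
with character `χ`, as a complex vector space. -/
def SiegelCusp (j : ℕ) (k : ℤ) (Γ : Set (Matrix (Fin 4) (Fin 4) ℤ))
    (χ : Matrix (Fin 4) (Fin 4) ℤ → ℂ) :
    Submodule ℂ ((Fin 2 → Fin 2 → ℂ) → (Fin (j + 1) → ℂ)) where
  carrier := {F | IsSiegelCuspForm j k Γ χ F}
  add_mem' := by
    rintro F G hF hG
    refine ⟨hF.1.add hG.1, ?_, ?_, ?_⟩
    · intro γ hγ τ hτ
      show F (moeb γ τ) + G (moeb γ τ) = χ γ • wt j k (den γ τ) (F τ + G τ)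
      rw [wt_add, smul_add, hF.2.1 γ hγ τ hτ, hG.2.1 γ hγ τ hτ]
    · intro γ hγ τ₁ hτ
      have h := (hF.2.2.1 γ hγ τ₁ hτ).add (hG.2.2.1 γ hγ τ₁ hτ)
      rw [add_zero] at h
      exact h.congr fun t => (slashS_add j k γ F G _).symm
    · intro τ hτ
      show F τ + G τ = 0
      rw [hF.2.2.2 τ hτ, hG.2.2.2 τ hτ, add_zero]
  zero_mem' := by
    refine ⟨?_, ?_, ?_, ?_⟩
    · exact differentiableOn_const 0
    · intro γ hγ τ hτ
      show (0 : Fin (j + 1) → ℂ) = χ γ • wt j k (den γ τ) 0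
      rw [wt_zero, smul_zero]
    · intro γ hγ τ₁ hτ
      have : (fun t : ℝ => slashS j k γ (0 : (Fin 2 → Fin 2 → ℂ) → (Fin (j + 1) → ℂ))
          (diagH τ₁ (t * Complex.I))) = fun _ => 0 := by
        funext t; exact slashS_zero j k γ _
      rw [this]
      exact tendsto_const_nhds
    · intro τ _; rfl
  smul_mem' := by
    rintro a F hF
    refine ⟨hF.1.const_smul a, ?_, ?_, ?_⟩
    · intro γ hγ τ hτ
      show a • F (moeb γ τ) = χ γ • wt j k (den γ τ) (a • F τ)
      rw [hF.2.1 γ hγ τ hτ, wt_smul, smul_comm]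
    · intro γ hγ τ₁ hτ
      have h := (hF.2.2.1 γ hγ τ₁ hτ).const_smul a
      rw [smul_zero] at h
      exact h.congr fun t => (slashS_smul j k γ a F _).symm
    · intro τ hτ
      show a • F τ = 0
      rw [hF.2.2.2 τ hτ, smul_zero]

/-- `ε` is (on `Γ₂`) the unique nontrivial homomorphism `Γ₂ → {±1}`. -/
def IsEps (ε : Matrix (Fin 4) (Fin 4) ℤ → ℂ) : Prop :=
  (∀ γ ∈ Sp4Z, ε γ = 1 ∨ ε γ = -1) ∧
  (∀ γ ∈ Sp4Z, ∀ δ ∈ Sp4Z, ε (γ * δ) = ε γ * ε δ) ∧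
  (∃ γ ∈ Sp4Z, ε γ ≠ 1)

/-- Generating polynomial of the components of a Fourier coefficient. -/
def cpol {ι : Type} (j : ℕ) (a : ι → ℕ → ℤ → ℤ → ℤ → ℂ) (x : ι) (m b n : ℤ) : Polynomial ℂ :=
  ∑ i ∈ Finset.range (j + 1), Polynomial.C (a x i m b n) * Polynomial.X ^ i

/-- Moments. -/
def cmom {ι : Type} (a : ι → ℕ → ℤ → ℤ → ℤ → ℂ) (x : ι) (i k : ℕ) (m n : ℤ) : ℂ :=
  ∑ b ∈ Finset.Icc (-(m + n)) (m + n), (b : ℂ) ^ k * a x i m b n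

/-- Coefficient data. -/
structure CD {ι : Type} (j : ℕ) (a : ι → ℕ → ℤ → ℤ → ℤ → ℂ) : Prop where
  deg : ∀ x i m b n, j < i → a x i m b n = 0
  shift : ∀ x (s : ℤ), ∃ y, ∀ m b n, cpol j a y (m + s * b + s ^ 2 * n) (b + 2 * s * n) n
    = (cpol j a x m b n).comp (Polynomial.X + Polynomial.C (s : ℂ))
  swap : ∀ x, ∃ y, ∀ i ≤ j, ∀ m b n, a y i n b m = a x (j - i) m b n
  zsh : ∀ x, ∃ y, ∀ i m b n, a y i m b n = (-1 : ℂ) ^ b * a x i m b n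
  supp : ∀ x i m b n, a x i m b n ≠ 0 → 1 ≤ m ∧ 1 ≤ n
  ml : ∀ (i k : ℕ) (m M : ℤ), i ≤ j → 1 ≤ M → (2 + i + k : ℤ) ≤ 5 * M →
    (∀ l k' : ℕ, l ≤ i → k' + (i - l) ≤ k → ¬ (l = i ∧ k' = k) → ∀ x n, cmom a x l k' m n = 0) →
    (∀ x n, n < M → cmom a x i k m n = 0) → ∀ x n, cmom a x i k m n = 0

namespace CD

variable {ι : Type} {j : ℕ} {a : ι → ℕ → ℤ → ℤ → ℤ → ℂ}

lemma cpol_coeff (x : ι) (m b n : ℤ) (i : ℕ) :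
    (cpol j a x m b n).coeff i = if i < j + 1 then a x i m b n else 0 := by
  simp [cpol, Polynomial.coeff_C_mul, Polynomial.coeff_X_pow]

lemma coeff' (h : CD j a) (x : ι) (m b n : ℤ) (i : ℕ) :
    (cpol j a x m b n).coeff i = a x i m b n := by
  rw [cpol_coeff]; split_ifs with hh
  · rfl
  · rw [h.deg]; omega

lemma cpol_eq_zero (h : CD j a) {x : ι} {m b n : ℤ} (hp : cpol j a x m b n = 0) (i : ℕ) :
    a x i m b n = 0 := by
  rw [← h.coeff', hp]; simp

lemma swap' (h : CD j a) (x : ι) : ∃ y, ∀ i ≤ j, ∀ m b n, a x i m b n = a y (j - i) n b m := by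
  obtain ⟨y, hy⟩ := h.swap x
  refine ⟨y, fun i hi m b n => ?_⟩
  rw [hy (j - i) (by omega)]; congr 1; omega

lemma shiftNZ (h : CD j a) {x : ι} {i : ℕ} {m b n : ℤ} (hx : a x i m b n ≠ 0) (s : ℤ) :
    ∃ y i', a y i' (m + s * b + s ^ 2 * n) (b + 2 * s * n) n ≠ 0 := by
  obtain ⟨y, hy⟩ := h.shift x s
  refine ⟨y, ?_⟩
  by_contra hc
  push Not at hc
  have h0 : cpol j a y (m + s * b + s ^ 2 * n) (b + 2 * s * n) n = 0 := by
    simp [cpol, hc]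
  rw [hy] at h0
  have h1 : cpol j a x m b n = 0 := by
    have := congrArg (fun p => p.comp (Polynomial.X - Polynomial.C (s : ℂ))) h0
    simpa [Polynomial.comp_assoc] using this
  exact hx (h.cpol_eq_zero h1 i)

lemma shiftNZ' (h : CD j a) {x : ι} {i : ℕ} {m b n : ℤ} (hx : a x i m b n ≠ 0) (s : ℤ) :
    ∃ y i', a y i' m (b + 2 * s * m) (n + s * b + s ^ 2 * m) ≠ 0 := by
  have hi : i ≤ j := by by_contra hc; exact hx (h.deg _ _ _ _ _ (by omega))
  obtain ⟨y, hy⟩ := h.swap' x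
  rw [hy i hi] at hx
  obtain ⟨y', i', hy'⟩ := h.shiftNZ hx s
  have hi' : i' ≤ j := by by_contra hc; exact hy' (h.deg _ _ _ _ _ (by omega))
  obtain ⟨y'', h2⟩ := h.swap' y'
  rw [h2 i' hi'] at hy'
  exact ⟨_, _, hy'⟩

lemma bbound (h : CD j a) {x : ι} {i : ℕ} {m b n : ℤ} (hx : a x i m b n ≠ 0) :
    -(m + n) ≤ b ∧ b ≤ m + n := by
  obtain ⟨y, i', h1⟩ := h.shiftNZ hx 1
  obtain ⟨y', i'', h2⟩ := h.shiftNZ hx (-1)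
  have := (h.supp _ _ _ _ _ h1).1
  have := (h.supp _ _ _ _ _ h2).1
  constructor <;> linarith

lemma swapmom (h : CD j a) (x : ι) : ∃ y, ∀ i ≤ j, ∀ k m n,
    cmom a x i k m n = cmom a y (j - i) k n m := by
  obtain ⟨y, hy⟩ := h.swap' x
  refine ⟨y, fun i hi k m n => ?_⟩
  simp only [cmom, hy i hi, add_comm]

lemma mom_nonpos (h : CD j a) (x : ι) (i k : ℕ) (m n : ℤ) (hn : n < 1) : cmom a x i k m n = 0 := by
  refine Finset.sum_eq_zero fun b _ => ?_
  by_contra hc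
  have := (h.supp _ _ _ _ _ (right_ne_zero_of_mul hc)).2
  omega

lemma vander (h : CD j a) (i : ℕ) (m : ℕ) (n : ℤ)
    (hb : ∀ x (b : ℤ), a x i m b n ≠ 0 → |b| ≤ m)
    (hS : ∀ x, ∀ k ≤ m, cmom a x i k m n = 0) (x : ι) (b : ℤ) : a x i m b n = 0 := by
  by_contra hne
  have hbm := hb x b hne
  have hpoly : ∀ (x : ι) (P : Polynomial ℂ), P.natDegree ≤ m →
      ∑ b ∈ Finset.Icc (-((m : ℤ) + n)) (m + n), P.eval (b : ℂ) * a x i m b n = 0 := by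
    intro x P hP
    simp_rw [Polynomial.eval_eq_sum_range, Finset.sum_mul]
    rw [Finset.sum_comm]
    refine Finset.sum_eq_zero fun k hk => ?_
    have := hS x k (by simp at hk; omega)
    rw [cmom] at this
    simp_rw [mul_assoc, ← Finset.mul_sum, this, mul_zero]
  set B : Finset ℤ := (Finset.Icc (-(m : ℤ)) m).filter (fun c => (2 : ℤ) ∣ c - b ∧ c ≠ b) with hB
  have hcard : B.card + 1 ≤ m + 1 := by
    have : (insert b B).card ≤ (Finset.Icc (0 : ℤ) m).card := by
      refine Finset.card_le_card_of_injOn (fun c => (c + m) / 2) ?_ ?_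
      · intro c hc
        simp [hB] at hc ⊢
        rw [abs_le] at hbm
        omega
      · intro c hc d hd hcd
        simp [hB] at hc hd hcd
        omega
    rw [Finset.card_insert_of_notMem (by simp [hB])] at this
    simpa using this
  set P : Polynomial ℂ := ∏ c ∈ B, (Polynomial.X - Polynomial.C (c : ℂ)) with hPdef
  have hdeg : P.natDegree ≤ m := by
    rw [hPdef, Polynomial.natDegree_prod_of_monic _ _ (fun c _ => Polynomial.monic_X_sub_C _)]
    simp only [Polynomial.natDegree_X_sub_C, Finset.sum_const, smul_eq_mul, mul_one]; omega
  obtain ⟨y, hy⟩ := h.zsh x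
  have h1 := hpoly x P hdeg
  have h2 := hpoly y P hdeg
  have h3 : ∑ c ∈ Finset.Icc (-((m : ℤ) + n)) (m + n),
      (1 + (-1 : ℂ) ^ (b + c)) * (P.eval (c : ℂ) * a x i m c n) = 0 := by
    have : ∀ c ∈ Finset.Icc (-((m : ℤ) + n)) (m + n),
      (1 + (-1 : ℂ) ^ (b + c)) * (P.eval (c : ℂ) * a x i m c n) =
        P.eval (c : ℂ) * a x i m c n + (-1 : ℂ) ^ b * (P.eval (c : ℂ) * a y i m c n) := by
      intro c _
      rw [hy, zpow_add₀ (by norm_num)]; ring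
    rw [Finset.sum_congr rfl this, Finset.sum_add_distrib, h1, ← Finset.mul_sum, h2]
    simp
  rw [Finset.sum_eq_single b] at h3
  · have e1 : (-1 : ℂ) ^ (b + b) = 1 := by
      rw [Even.neg_one_zpow]; exact ⟨b, rfl⟩
    rw [e1] at h3
    have e2 : P.eval (b : ℂ) ≠ 0 := by
      rw [hPdef, Polynomial.eval_prod, Finset.prod_ne_zero_iff]
      intro c hc
      simp [hB] at hc
      simp only [Polynomial.eval_sub, Polynomial.eval_X, Polynomial.eval_C, ne_eq, sub_eq_zero]
      norm_cast
      exact fun h => hc.2.2 h.symm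
    have : (1 + 1 : ℂ) ≠ 0 := by norm_num
    simp_all
  · intro c _ hcb
    by_cases hac : a x i m c n = 0
    · simp [hac]
    have hcm := hb x c hac
    rw [abs_le] at hcm
    by_cases hpar : (2 : ℤ) ∣ c - b
    · have : P.eval (c : ℂ) = 0 := by
        rw [hPdef, Polynomial.eval_prod]
        refine Finset.prod_eq_zero (i := c) ?_ (by simp)
        simp [hB, hpar, hcb]; omega
      simp [this]
    · have : (-1 : ℂ) ^ (b + c) = -1 := by
        rw [Odd.neg_one_zpow]; rw [Int.odd_iff]; omega
      simp [this]
  · intro hnb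
    exfalso; apply hnb
    have := h.bbound hne
    simpa using this

end CD

namespace CD

variable {ι : Type} {j : ℕ} {a : ι → ℕ → ℤ → ℤ → ℤ → ℂ}

lemma step1 (h : CD j a) : ∀ N : ℕ, N < 4 → ∀ i k : ℕ, i + k = N → ∀ x m n, cmom a x i k m n = 0 := by
  intro N
  induction N using Nat.strong_induction_on with
  | _ N ih =>
  intro hN i k hik x m n
  by_cases hij : i ≤ j
  · refine h.ml i k m 1 hij le_rfl (by omega) ?_ (fun x n hn => h.mom_nonpos x i k m n hn) x n
    intro l k' hl hk hne x n
    by_cases hlt : l + k' < N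
    · exact ih (l + k') hlt (by omega) l k' rfl x m n
    · exfalso; omega
  · exact Finset.sum_eq_zero fun b _ => by rw [h.deg _ _ _ _ _ (by omega), mul_zero]

lemma babs1 (h : CD j a) {x : ι} {i : ℕ} {m b : ℤ} (hx : a x i m b 1 ≠ 0) : |b| ≤ m := by
  obtain ⟨y, i', h1⟩ := h.shiftNZ hx 1
  obtain ⟨y', i'', h2⟩ := h.shiftNZ hx (-1)
  have := (h.supp _ _ _ _ _ h1).1
  have := (h.supp _ _ _ _ _ h2).1
  rw [abs_le]; constructor <;> linarith

lemma step2a (h : CD j a) (i m : ℕ) (him : i + m < 4) (x : ι) (b : ℤ) : a x i m b 1 = 0 :=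
  h.vander i m 1 (fun _ _ hx => h.babs1 hx)
    (fun x k hk => h.step1 (i + k) (by omega) i k rfl x m 1) x b

lemma dvd_shift (h : CD j a) (x : ι) (s : ℤ) (m b n m' : ℤ) (hm : m + s * b + s ^ 2 * n = m') (r : ℕ)
    (H : ∀ y b, ∀ i < r, a y i m' b n = 0) :
    (Polynomial.X - Polynomial.C (s : ℂ)) ^ r ∣ cpol j a x m b n := by
  obtain ⟨y, hy⟩ := h.shift x s
  have h1 : Polynomial.X ^ r ∣ cpol j a y (m + s * b + s ^ 2 * n) (b + 2 * s * n) n := by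
    rw [Polynomial.X_pow_dvd_iff]
    intro d hd
    rw [h.coeff', hm]; exact H y _ d hd
  rw [hy] at h1
  obtain ⟨q, hq⟩ := h1
  have := congrArg (fun p => p.comp (Polynomial.X - Polynomial.C (s : ℂ))) hq
  refine ⟨q.comp (Polynomial.X - Polynomial.C (s : ℂ)), ?_⟩
  simpa [Polynomial.comp_assoc] using this

lemma copr (s t : ℤ) (hst : s ≠ t) (p q : ℕ) :
    IsCoprime ((Polynomial.X - Polynomial.C (s : ℂ)) ^ p) ((Polynomial.X - Polynomial.C (t : ℂ)) ^ q) := by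
  apply IsCoprime.pow
  apply Polynomial.isCoprime_X_sub_C_of_isUnit_sub
  rw [isUnit_iff_ne_zero, sub_ne_zero]
  exact_mod_cast hst

lemma four_roots (s : Fin 4 → ℤ) (hs : Function.Injective s) (r : Fin 4 → ℕ) (p : Polynomial ℂ)
    (hd : ∀ u, (Polynomial.X - Polynomial.C (s u : ℂ)) ^ (r u) ∣ p)
    (hp : ∀ i, ∑ u, r u ≤ i → p.coeff i = 0) : p = 0 := by
  have h1 : ∏ u, (Polynomial.X - Polynomial.C (s u : ℂ)) ^ (r u) ∣ p := by
    apply Finset.prod_dvd_of_coprime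
    · intro u _ v _ huv
      exact copr _ _ (fun h => huv (hs h)) _ _
    · intro u _; exact hd u
  apply Polynomial.eq_zero_of_dvd_of_degree_lt h1
  rw [Polynomial.degree_prod]
  simp only [Polynomial.degree_pow, Polynomial.degree_X_sub_C, nsmul_eq_mul, mul_one]
  rw [Polynomial.degree_lt_iff_coeff_zero p (∑ u, r u) |>.2 (fun m hm => hp m hm) |>.trans_eq ?_ |> eq_true]
  · trivial
  · push_cast; rfl

lemma ncoeff (h : CD j a) (x : ι) (r : ℕ) (b : ℤ) (hj : j ≤ 10)
    (H : ∀ y, ∀ i < r, a y i 1 b 1 = 0) (i : ℕ) (hi : 11 ≤ i + r) : a x i 1 b 1 = 0 := by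
  by_cases hij : i ≤ j
  · obtain ⟨y, hy⟩ := h.swap' x
    rw [hy i hij]; exact H y _ (by omega)
  · exact h.deg _ _ _ _ _ (by omega)

lemma step2b (h : CD j a) (hj : j ≤ 10) (b : ℤ) (hb : b = 1 ∨ b = -1) (x : ι) (i : ℕ) :
    a x i 1 b 1 = 0 := by
  apply h.cpol_eq_zero
  have A1 : ∀ y b, ∀ i < 3, a y i 1 b 1 = 0 := fun y b i hi => h.step2a i 1 (by omega) y b
  have A3 : ∀ y b, ∀ i < 1, a y i 3 b 1 = 0 := fun y b i hi => h.step2a i 3 (by omega) y b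
  refine four_roots ![0, -b, b, -2 * b] ?_ ![3, 3, 1, 1] _ ?_ ?_
  · rcases hb with rfl | rfl <;> decide
  · intro u
    fin_cases u
    · exact h.dvd_shift x _ 1 b 1 1 (by rcases hb with rfl | rfl <;> simp) 3 A1
    · exact h.dvd_shift x _ 1 b 1 1 (by rcases hb with rfl | rfl <;> simp) 3 A1
    · exact h.dvd_shift x _ 1 b 1 3 (by rcases hb with rfl | rfl <;> simp) 1 A3
    · exact h.dvd_shift x _ 1 b 1 3 (by rcases hb with rfl | rfl <;> simp) 1 A3
  · intro i hi
    rw [h.coeff']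
    exact h.ncoeff x 3 b hj (fun y i hi => A1 y b i hi) i (by simp [Fin.sum_univ_four] at hi; omega)

lemma step2 (h : CD j a) (hj : j ≤ 10) (b : ℤ) (x : ι) (i : ℕ) : a x i 1 b 1 = 0 := by
  by_contra hne
  have hb := h.babs1 hne
  rw [abs_le] at hb
  have hb0 : b = 0 := by
    rcases (by omega : b = 0 ∨ b = 1 ∨ b = -1) with h0 | h0
    · exact h0
    · exact absurd (h.step2b hj b h0 x i) hne
  subst hb0
  revert hne
  simp only [imp_false, not_not]
  apply h.cpol_eq_zero
  have A1 : ∀ y, ∀ i < 4, a y i 1 0 1 = 0 := by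
    intro y i hi
    have := h.step1 i hi i 0 rfl y 1 1
    rw [cmom, Finset.sum_eq_single 0] at this
    · simpa using this
    · intro c _ hc
      by_contra hne
      have hz := right_ne_zero_of_mul hne
      have hb := h.babs1 hz
      rw [abs_le] at hb
      exact hz (h.step2b hj c (by omega) y i)
    · simp
  have A2 : ∀ y b, ∀ i < 2, a y i 2 b 1 = 0 := fun y b i hi => h.step2a i 2 (by omega) y b
  refine four_roots ![0, 1, -1, 2] (by decide) ![4, 2, 2, 0] _ ?_ ?_
  · intro u
    fin_cases u
    · simp only [Fin.zero_eta, Matrix.cons_val_zero, Int.cast_zero, map_zero, sub_zero]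
      rw [Polynomial.X_pow_dvd_iff]
      intro d hd
      rw [h.coeff']; exact A1 x d hd
    · exact h.dvd_shift x _ 1 0 1 2 (by simp) 2 A2
    · exact h.dvd_shift x _ 1 0 1 2 (by simp) 2 A2
    · simp
  · intro i hi
    rw [h.coeff']
    exact h.ncoeff x 4 0 hj (fun y i hi => A1 y i hi) i (by simp [Fin.sum_univ_four] at hi; omega)

lemma mom_deg (h : CD j a) (x : ι) (i k : ℕ) (m n : ℤ) (hi : j < i) : cmom a x i k m n = 0 :=
  Finset.sum_eq_zero fun b _ => by rw [h.deg _ _ _ _ _ hi, mul_zero]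

lemma ml' (h : CD j a) (N : ℕ) (H : ∀ k < N, ∀ x i m n, cmom a x i k m n = 0) (i : ℕ) (hi : i ≤ j)
    (m M : ℤ) (hM : 1 ≤ M) (hw : (2 + i + N : ℤ) ≤ 5 * M)
    (h0 : ∀ x n, n < M → cmom a x i N m n = 0) : ∀ x n, cmom a x i N m n = 0 := by
  refine h.ml i N m M hi hM hw ?_ h0
  intro l k' hl hk hne x n
  exact H k' (by omega) x l m n

lemma step3 (h : CD j a) (hj : j ≤ 10) (N : ℕ) (hN : N ≤ 1)
    (H : ∀ k < N, ∀ x i m n, cmom a x i k m n = 0) (x : ι) (i : ℕ) (m n : ℤ) :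
    cmom a x i N m n = 0 := by
  by_cases hi : i ≤ j
  swap
  · exact h.mom_deg x i N m n (by omega)
  have small : ∀ i ≤ j, i + 2 + N ≤ 5 → ∀ m x n, cmom a x i N m n = 0 := fun i hi hw m =>
    h.ml' N H i hi m 1 le_rfl (by omega) (fun x n hn => h.mom_nonpos x i N m n hn)
  by_cases c1 : i + 2 + N ≤ 5
  · exact small i hi c1 m x n
  by_cases c2 : (j - i) + 2 + N ≤ 5
  · obtain ⟨y, hy⟩ := h.swapmom x
    rw [hy i hi]; exact small _ (by omega) c2 _ _ _
  have z11 : ∀ x i, cmom a x i N 1 1 = 0 := fun x i =>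
    Finset.sum_eq_zero fun b _ => by rw [h.step2 hj, mul_zero]
  have s1 := h.ml' N H (j - i) (by omega) 1 2 (by norm_num) (by omega) (fun x n hn => by
    by_cases hn1 : n < 1
    · exact h.mom_nonpos _ _ _ _ _ hn1
    · obtain rfl : n = 1 := by omega
      exact z11 x _)
  refine h.ml' N H i hi m 2 (by norm_num) (by omega) (fun x n hn => ?_) x n
  by_cases hn1 : n < 1
  · exact h.mom_nonpos _ _ _ _ _ hn1
  · obtain rfl : n = 1 := by omega
    obtain ⟨y, hy⟩ := h.swapmom x
    rw [hy i hi]; exact s1 _ _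

lemma stepV (h : CD j a) (K : ℕ) (H : ∀ k < K, ∀ x i m n, cmom a x i k m n = 0) (m : ℤ) (hm : m < K)
    (x : ι) (i : ℕ) (b n : ℤ) : a x i m b n = 0 := by
  by_contra hne
  have hm1 := (h.supp _ _ _ _ _ hne).1
  obtain ⟨m, rfl⟩ := Int.eq_ofNat_of_zero_le (by omega : 0 ≤ m)
  have hex : ∃ n0 : ℕ, ∃ x i b, a x i m b n0 ≠ 0 := by
    have := (h.supp _ _ _ _ _ hne).2
    exact ⟨n.toNat, x, i, b, by rwa [Int.toNat_of_nonneg (by omega)]⟩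
  classical
  obtain ⟨y, i', b', hy⟩ := Nat.find_spec hex
  refine hy (h.vander i' m _ ?_ (fun x k hk => H k (by omega) _ _ _ _) y b')
  intro x b hx
  have key : ∀ s : ℤ, (Nat.find hex : ℤ) ≤ Nat.find hex + s * b + s ^ 2 * m := by
    intro s
    obtain ⟨y, i', h1⟩ := h.shiftNZ' hx s
    have hp := (h.supp _ _ _ _ _ h1).2
    have := Nat.find_min' hex (m := ((Nat.find hex : ℤ) + s * b + s ^ 2 * m).toNat)
      ⟨y, i', _, by rwa [Int.toNat_of_nonneg (by omega)]⟩
    omega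
  have k1 := key 1
  have k2 := key (-1)
  rw [abs_le]; constructor <;> linarith

lemma stepZ (h : CD j a) (hj : j ≤ 10) (K : ℕ) : ∀ k < K, ∀ x i m n, cmom a x i k m n = 0 := by
  induction K with
  | zero => intro k hk; omega
  | succ K ih =>
  intro k hk
  rcases Nat.lt_succ_iff_lt_or_eq.1 hk with hk | rfl
  · exact ih k hk
  by_cases hK : k ≤ 1
  · exact h.step3 hj k hK ih
  have low : ∀ i, 2 * i ≤ j → ∀ x m n, cmom a x i k m n = 0 := by
    intro i hi x m n
    refine h.ml' k ih i (by omega) m k (by omega) (by omega) (fun x n hn => ?_) x n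
    refine Finset.sum_eq_zero fun b _ => ?_
    obtain ⟨y, hy⟩ := h.swap' x
    rw [hy i (by omega), h.stepV k ih n hn, mul_zero]
  intro x i m n
  by_cases hi : i ≤ j
  swap
  · exact h.mom_deg x i k m n (by omega)
  by_cases c : 2 * i ≤ j
  · exact low i c x m n
  · obtain ⟨y, hy⟩ := h.swapmom x
    rw [hy i hi]; exact low _ (by omega) _ _ _

theorem vanish (h : CD j a) (hj : j ≤ 10) (x : ι) (i : ℕ) (m b n : ℤ) : a x i m b n = 0 := by
  by_contra hne
  have := (h.supp _ _ _ _ _ hne).1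
  exact hne (h.stepV (m.toNat + 1) (h.stepZ hj _) m (by omega) x i b n)

end CD

/-- exponential -/
def ex (n : ℤ) (τ : ℂ) : ℂ := Complex.exp (Real.pi * Complex.I * n * τ)

lemma ex_norm (n : ℤ) (τ : ℂ) : ‖ex n τ‖ = Real.exp (-(Real.pi * n * τ.im)) := by
  rw [ex, Complex.norm_exp]; congr 1; simp

lemma ex_add (n : ℤ) (τ σ : ℂ) : ex n (τ + σ) = ex n τ * ex n σ := by
  rw [ex, ex, ex, ← Complex.exp_add]; ring_nf

lemma ex_add_left (m n : ℤ) (τ : ℂ) : ex (m + n) τ = ex m τ * ex n τ := by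
  rw [ex, ex, ex, ← Complex.exp_add]; push_cast; ring_nf

lemma ex_two (n : ℤ) : ex n 2 = 1 := by
  rw [ex, Complex.exp_eq_one_iff]; exact ⟨n, by ring⟩

lemma ex_one (n : ℤ) : ex n 1 = (-1) ^ n := by
  rw [ex, ← Complex.exp_pi_mul_I, ← Complex.exp_int_mul]; ring_nf

lemma ex_real_norm (n : ℤ) (x : ℝ) : ‖ex n x‖ = 1 := by rw [ex_norm]; simp

lemma ex_cont (n : ℤ) : Continuous (ex n) := by unfold ex; fun_prop

lemma ex_integral (n : ℤ) (hn : n ≠ 0) : ∫ x in (0 : ℝ)..2, ex n x = 0 := by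
  have hc : (Real.pi * Complex.I * n : ℂ) ≠ 0 := by
    simp [Real.pi_ne_zero, hn]
  have := integral_exp_mul_complex (a := 0) (b := 2) hc
  simp only [ex]
  rw [this]
  have h2 := ex_two n
  rw [ex] at h2
  push_cast
  rw [h2]; simp

lemma uniq1 (α : ℤ → ℂ) (hs : Summable fun n => ‖α n‖)
    (h : ∀ x : ℝ, ∑' n, α n * ex n x = 0) (m : ℤ) : α m = 0 := by
  have key := intervalIntegral.hasSum_intervalIntegral_of_summable_norm (a := 0) (b := 2) (ι := ℤ)
    (f := fun n => ⟨fun x : ℝ => α n * ex n x * ex (-m) x, by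
      have := ex_cont n; have := ex_cont (-m); fun_prop⟩) (by
      refine Summable.of_nonneg_of_le (fun _ => norm_nonneg _) (fun n => ?_) hs
      rw [ContinuousMap.norm_le _ (norm_nonneg _)]
      intro x
      simp [ex_real_norm, ContinuousMap.restrict_apply])
  simp only [ContinuousMap.coe_mk] at key
  have e1 : ∀ x : ℝ, ∑' n, α n * ex n x * ex (-m) x = 0 := by
    intro x; rw [tsum_mul_right, h, zero_mul]
  simp only [e1] at key
  have e2 : ∀ n, ∫ x in (0 : ℝ)..2, α n * ex n x * ex (-m) x = if n = m then 2 * α m else 0 := by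
    intro n
    simp_rw [mul_assoc, ← ex_add_left]
    rw [intervalIntegral.integral_const_mul]
    split_ifs with hnm
    · subst hnm; simp [ex]; ring
    · rw [ex_integral _ (by omega), mul_zero]
  simp only [e2] at key
  have := (hasSum_ite_eq m (2 * α m)).unique key
  simpa using this

lemma uniq1' (α : ℤ → ℂ) (y : ℝ) (hs : Summable fun n => α n * ex n (y * I))
    (h : ∀ τ : ℂ, τ.im = y → ∑' n, α n * ex n τ = 0) (m : ℤ) : α m = 0 := by
  have := uniq1 (fun n => α n * ex n (y * I)) hs.norm (fun x => by
    rw [← h (x + y * I) (by simp)]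
    refine tsum_congr fun n => ?_
    rw [ex_add]; ring) m
  have h2 : ex m (y * I) ≠ 0 := Complex.exp_ne_zero _
  simpa [h2] using this

/-- one-variable series -/
def gg (C : ℤ → ℂ) (τ : ℂ) : ℂ := ∑' n : ℤ, C n * ex n τ

/-- invariant norm -/
def NN (w : ℕ) (C : ℤ → ℂ) (τ : ℂ) : ℝ := ‖gg C τ‖ ^ 2 * τ.im ^ w

lemma gg_period (C : ℤ → ℂ) (τ : ℂ) : gg C (τ + 2) = gg C τ := by
  simp only [gg, ex_add, ex_two, mul_one]

lemma coe_S (τ : UpperHalfPlane) : ((ModularGroup.S • τ : UpperHalfPlane) : ℂ) = -1 / (τ : ℂ) := by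
  rw [UpperHalfPlane.modular_S_smul]
  change (-(τ : ℂ))⁻¹ = _
  rw [inv_neg, neg_div, one_div]

lemma coe_T (τ : UpperHalfPlane) : ((ModularGroup.T • τ : UpperHalfPlane) : ℂ) = τ + 1 := by
  have := ModularGroup.coe_T_zpow_smul_eq τ (n := 1); simpa using this

lemma coe_TI (τ : UpperHalfPlane) : ((ModularGroup.T⁻¹ • τ : UpperHalfPlane) : ℂ) = τ - 1 := by
  have := ModularGroup.coe_T_zpow_smul_eq τ (n := -1); simpa [sub_eq_add_neg] using this

lemma S_inv_smul (τ : UpperHalfPlane) : ModularGroup.S⁻¹ • τ = ModularGroup.S • τ := by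
  rw [inv_smul_eq_iff]
  apply UpperHalfPlane.ext
  rw [coe_S, coe_S]
  have : (τ : ℂ) ≠ 0 := UpperHalfPlane.ne_zero τ
  field_simp

/-- invariance property -/
def NNinv {ι : Type} (C : ι → ℤ → ℂ) (w : ℕ) (g : Matrix.SpecialLinearGroup (Fin 2) ℤ) : Prop :=
  ∀ x, ∃ y, ∀ τ : UpperHalfPlane, NN w (C x) (g • τ : UpperHalfPlane) = NN w (C y) τ

lemma NNinv_mul {ι : Type} {C : ι → ℤ → ℂ} {w : ℕ} {g h : Matrix.SpecialLinearGroup (Fin 2) ℤ}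
    (hg : NNinv C w g) (hh : NNinv C w h) : NNinv C w (g * h) := by
  intro x
  obtain ⟨y, hy⟩ := hg x
  obtain ⟨z, hz⟩ := hh y
  exact ⟨z, fun τ => by rw [mul_smul, hy, hz]⟩

lemma NNinv_S {ι : Type} {C : ι → ℤ → ℂ} {w : ℕ}
    (hS : ∀ x, ∃ y, ∀ τ : ℂ, 0 < τ.im → gg (C x) (-1 / τ) = τ ^ w * gg (C y) τ) :
    NNinv C w ModularGroup.S := by
  intro x
  obtain ⟨y, hy⟩ := hS x
  refine ⟨y, fun τ => ?_⟩
  have hne : ‖(τ : ℂ)‖ ≠ 0 := by simp [UpperHalfPlane.ne_zero]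
  have him : (-1 / (τ : ℂ)).im = τ.im / ‖(τ : ℂ)‖ ^ 2 := by
    rw [← Complex.normSq_eq_norm_sq]; simp [Complex.div_im, neg_div]
  rw [NN, NN, coe_S, hy τ τ.im_pos, him, norm_mul, norm_pow, mul_pow, div_pow, UpperHalfPlane.coe_im]
  field_simp
  ring

lemma NNinv_T {ι : Type} {C : ι → ℤ → ℂ} {w : ℕ}
    (hT : ∀ x, ∃ y, ∀ τ : ℂ, 0 < τ.im → gg (C x) (τ + 1) = gg (C y) τ) :
    NNinv C w ModularGroup.T := by
  intro x
  obtain ⟨y, hy⟩ := hT x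
  exact ⟨y, fun τ => by rw [NN, NN, coe_T, hy τ τ.im_pos]; simp⟩

lemma NNinv_TI {ι : Type} {C : ι → ℤ → ℂ} {w : ℕ}
    (hT : ∀ x, ∃ y, ∀ τ : ℂ, 0 < τ.im → gg (C x) (τ + 1) = gg (C y) τ) :
    NNinv C w ModularGroup.T⁻¹ := by
  intro x
  obtain ⟨y, hy⟩ := hT x
  refine ⟨y, fun τ => ?_⟩
  have e2 : gg (C x) ((τ : ℂ) - 1) = gg (C y) τ := by
    rw [← hy τ τ.im_pos, ← gg_period]; ring_nf
  rw [NN, NN, coe_TI, e2]; simp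

lemma NNinv_SI {ι : Type} {C : ι → ℤ → ℂ} {w : ℕ} (h : NNinv C w ModularGroup.S) :
    NNinv C w ModularGroup.S⁻¹ := by
  intro x
  obtain ⟨y, hy⟩ := h x
  exact ⟨y, fun τ => by rw [S_inv_smul, hy]⟩

lemma NNinv_all {ι : Type} {C : ι → ℤ → ℂ} {w : ℕ}
    (hT : ∀ x, ∃ y, ∀ τ : ℂ, 0 < τ.im → gg (C x) (τ + 1) = gg (C y) τ)
    (hS : ∀ x, ∃ y, ∀ τ : ℂ, 0 < τ.im → gg (C x) (-1 / τ) = τ ^ w * gg (C y) τ)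
    (g : Matrix.SpecialLinearGroup (Fin 2) ℤ) : NNinv C w g := by
  have hg : g ∈ Subgroup.closure {ModularGroup.S, ModularGroup.T} := by
    rw [SpecialLinearGroup.SL2Z_generators]; trivial
  induction hg using Subgroup.closure_induction_right with
  | one => exact fun x => ⟨x, fun τ => by rw [one_smul]⟩
  | mul_right g hg s hs ih =>
    refine NNinv_mul ih ?_
    rcases hs with hs | hs
    · rw [hs]; exact NNinv_S hS
    · rw [hs]; exact NNinv_T hT
  | mul_inv_cancel g hg s hs ih =>
    refine NNinv_mul ih ?_
    rcases hs with hs | hs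
    · rw [hs]; exact NNinv_SI (NNinv_S hS)
    · rw [hs]; exact NNinv_TI hT

lemma NN_reduce {ι : Type} (C : ι → ℤ → ℂ) (w : ℕ)
    (hT : ∀ x, ∃ y, ∀ τ : ℂ, 0 < τ.im → gg (C x) (τ + 1) = gg (C y) τ)
    (hS : ∀ x, ∃ y, ∀ τ : ℂ, 0 < τ.im → gg (C x) (-1 / τ) = τ ^ w * gg (C y) τ)
    (x : ι) (τ : ℂ) (hτ : 0 < τ.im) :
    ∃ y, ∃ σ : ℂ, 0 < σ.im ∧ 3 ≤ 4 * σ.im ^ 2 ∧ NN w (C x) τ = NN w (C y) σ := by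
  obtain ⟨z, hz⟩ : ∃ z : UpperHalfPlane, (z : ℂ) = τ := ⟨⟨τ, hτ⟩, rfl⟩
  obtain ⟨g, hg⟩ := ModularGroup.exists_smul_mem_fd z
  obtain ⟨y, hy⟩ := NNinv_all hT hS g⁻¹ x
  have h1 := hy (g • z)
  have h3 := ModularGroup.three_le_four_mul_im_sq_of_mem_fd hg
  rw [inv_smul_smul, hz] at h1
  generalize g • z = σ at h1 h3
  exact ⟨y, (σ : ℂ), σ.im_pos, h3, h1⟩

lemma ex_pow (k : ℕ) (τ : ℂ) : ex k τ = ex 1 τ ^ k := by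
  rw [ex, ex, ← Complex.exp_nat_mul]; push_cast; ring_nf

lemma gg_eq (C : ℤ → ℂ) (M : ℤ) (h0 : ∀ n < M, C n = 0) (τ : ℂ) :
    gg C τ = ex M τ * ∑' k : ℕ, C (k + M) * (ex 1 τ) ^ k := by
  rw [gg, ← tsum_mul_left]
  have hinj : Function.Injective (fun k : ℕ => (k : ℤ) + M) := fun a b h => by simpa using h
  rw [← hinj.tsum_eq (f := fun n : ℤ => C n * ex n τ)]
  · refine tsum_congr fun k => ?_
    rw [ex_add_left, ex_pow]; ring
  · intro n hn
    have : M ≤ n := by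
      by_contra hc
      exact hn (by simp [h0 n (by omega)])
    exact ⟨(n - M).toNat, by simp; omega⟩

lemma gg_max (C : ℤ → ℂ) (M : ℤ) (h0 : ∀ n < M, C n = 0)
    (hs : ∀ τ : ℂ, 0 < τ.im → Summable fun n => C n * ex n τ) (y1 B : ℝ) (hy1 : 0 < y1)
    (hB : ∀ τ : ℂ, τ.im = y1 → ‖gg C τ‖ ≤ B) (τ : ℂ) (hτ : y1 ≤ τ.im) :
    ‖gg C τ‖ ≤ B * Real.exp (-(Real.pi * M * (τ.im - y1))) := by
  set H : ℂ → ℂ := fun q => ∑' k : ℕ, C (k + M) * q ^ k with hH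
  set r0 := Real.exp (-(Real.pi * (y1 / 2))) with hr0
  set r1 := Real.exp (-(Real.pi * y1)) with hr1
  have hpi := Real.pi_pos
  have hr01 : r1 < r0 := by
    rw [hr0, hr1, Real.exp_lt_exp]; nlinarith
  have hsum : Summable fun k : ℕ => ‖C (k + M)‖ * r0 ^ k := by
    have h1 := (hs ((y1 / 2 : ℝ) * I) (by simp [hy1])).norm
    have hinj : Function.Injective (fun k : ℕ => (k : ℤ) + M) := fun a b h => by simpa using h
    have h2 := (h1.comp_injective hinj).mul_right (Real.exp (Real.pi * M * (y1 / 2)))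
    refine h2.congr fun k => ?_
    simp only [Function.comp_apply, norm_mul, ex_norm]
    rw [hr0, ← Real.exp_nat_mul, mul_assoc, ← Real.exp_add]
    congr 2
    simp; ring
  have hdiff : DifferentiableOn ℂ H (Metric.ball 0 r0) := by
    refine differentiableOn_tsum_of_summable_norm hsum (fun k => by fun_prop) Metric.isOpen_ball ?_
    intro k q hq
    rw [norm_mul, norm_pow]
    have : ‖q‖ ≤ r0 := by simpa using (Metric.mem_ball.1 hq).le
    gcongr
  have hr1pos : 0 < r1 := Real.exp_pos _
  have hcl : DiffContOnCl ℂ H (Metric.ball 0 r1) := by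
    apply DifferentiableOn.diffContOnCl
    rw [closure_ball _ hr1pos.ne']
    exact hdiff.mono (Metric.closedBall_subset_ball hr01)
  have hfr : ∀ q ∈ frontier (Metric.ball (0 : ℂ) r1), ‖H q‖ ≤ B * Real.exp (Real.pi * M * y1) := by
    intro q hq
    rw [frontier_ball _ hr1pos.ne', mem_sphere_zero_iff_norm] at hq
    have hq0 : q ≠ 0 := by rw [← norm_pos_iff, hq]; exact hr1pos
    set σ : ℂ := Complex.log q / (Real.pi * I) with hσ
    have hpI : (Real.pi * I : ℂ) ≠ 0 := by simp [hpi.ne']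
    have e1 : ex 1 σ = q := by
      rw [ex, hσ]
      have : (Real.pi * I * ((1 : ℤ) : ℂ) * (Complex.log q / (Real.pi * I)) : ℂ) = Complex.log q := by
        push_cast; field_simp
      rw [this, Complex.exp_log hq0]
    have him : σ.im = y1 := by
      have h1 := ex_norm 1 σ
      rw [e1, hq, hr1] at h1
      have := Real.exp_injective h1
      simp only [Int.cast_one, mul_one, neg_inj] at this
      exact (mul_left_cancel₀ hpi.ne' this).symm
    have h2 := hB σ him
    rw [gg_eq C M h0 σ, e1, norm_mul, ex_norm, him] at h2
    have h3 : ‖H q‖ = Real.exp (-(Real.pi * M * y1)) * ‖H q‖ * Real.exp (Real.pi * M * y1) := by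
      rw [mul_right_comm, ← Real.exp_add]; simp
    rw [h3]
    gcongr
  have hq : ex 1 τ ∈ closure (Metric.ball (0 : ℂ) r1) := by
    rw [closure_ball _ hr1pos.ne', mem_closedBall_zero_iff, ex_norm, hr1, Real.exp_le_exp]
    simp; gcongr
  have := Complex.norm_le_of_forall_mem_frontier_norm_le Metric.isBounded_ball hcl hfr hq
  rw [gg_eq C M h0 τ, norm_mul, ex_norm]
  calc _ ≤ Real.exp (-(Real.pi * M * τ.im)) * (B * Real.exp (Real.pi * M * y1)) := by gcongr
    _ = _ := by
      rw [mul_comm, mul_assoc, ← Real.exp_add]; congr 2; ring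

/-- numeric estimate -/
lemma num_est (w : ℕ) (M : ℤ) (hM : 1 ≤ M) (hw : (w : ℤ) ≤ 5 * M) (y : ℝ) (hy0 : 0 < y) (hy : 3 ≤ 4 * y ^ 2) :
    (Real.exp (-(Real.pi * M * (y - 17 / 20)))) ^ 2 * y ^ w ≤ Real.exp (-(1 / 1000)) * (17 / 20) ^ w := by
  have hyl : (0.866 : ℝ) ≤ y := by nlinarith
  have h1 : y / (17 / 20) ≤ Real.exp ((y - 17 / 20) / (17 / 20)) := by
    have := Real.add_one_le_exp ((y - 17 / 20) / (17 / 20))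
    refine le_trans (le_of_eq ?_) this
    field_simp; ring
  have h2 : y ^ w ≤ Real.exp ((y - 17 / 20) / (17 / 20)) ^ w * (17 / 20) ^ w := by
    rw [← mul_pow]; gcongr
    rwa [div_le_iff₀ (by norm_num)] at h1
  calc _ ≤ (Real.exp (-(Real.pi * M * (y - 17 / 20)))) ^ 2 * (Real.exp ((y - 17 / 20) / (17 / 20)) ^ w * (17 / 20) ^ w) := by gcongr
    _ = Real.exp (-(Real.pi * M * (y - 17 / 20)) * 2 + w * ((y - 17 / 20) / (17 / 20))) * (17 / 20) ^ w := by
      rw [← mul_assoc, Real.exp_add, ← Real.exp_nat_mul, ← Real.exp_nat_mul]; push_cast; ring_nf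
    _ ≤ _ := by
      gcongr
      have hpi := Real.pi_gt_d2
      have hM' : (1 : ℝ) ≤ M := by exact_mod_cast hM
      have hw' : (w : ℝ) ≤ 5 * M := by exact_mod_cast hw
      have hd : 0 < y - 17 / 20 := by linarith
      have a1 : (w : ℝ) * ((y - 17 / 20) / (17 / 20)) ≤ 6 * M * (y - 17 / 20) := by
        rw [mul_div_assoc', div_le_iff₀ (by norm_num)]
        nlinarith
      have a2 : 3.14 * (M * (y - 17 / 20)) ≤ Real.pi * (M * (y - 17 / 20)) := by
        gcongr
      have a3 : (0.016 : ℝ) ≤ M * (y - 17 / 20) := by nlinarith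
      nlinarith

theorem onevar {ι : Type} [Finite ι] (C : ι → ℤ → ℂ) (w : ℕ) (M : ℤ) (hM : 1 ≤ M) (hw : (w : ℤ) ≤ 5 * M)
    (hs : ∀ x, ∀ τ : ℂ, 0 < τ.im → Summable fun n => C x n * ex n τ)
    (h0 : ∀ x, ∀ n < M, C x n = 0)
    (hT : ∀ x, ∃ y, ∀ τ : ℂ, 0 < τ.im → gg (C x) (τ + 1) = gg (C y) τ)
    (hS : ∀ x, ∃ y, ∀ τ : ℂ, 0 < τ.im → gg (C x) (-1 / τ) = τ ^ w * gg (C y) τ) (x : ι) (n : ℤ) :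
    C x n = 0 := by
  have y1w : (0 : ℝ) < (17 / 20) ^ w := by positivity
  have step : ∀ B : ℝ, 0 ≤ B → (∀ x, ∀ τ : ℂ, τ.im = 17 / 20 → ‖gg (C x) τ‖ ^ 2 * (17 / 20) ^ w ≤ B) →
      ∀ x, ∀ τ : ℂ, 0 < τ.im → NN w (C x) τ ≤ Real.exp (-(1 / 1000)) * B := by
    intro B hB0 hB x τ hτ
    obtain ⟨y, σ, hσ, hσ3, e⟩ := NN_reduce C w hT hS x τ hτ
    rw [e, NN]
    have h1 := gg_max (C y) M (h0 y) (hs y) (17 / 20) (Real.sqrt (B / (17 / 20) ^ w)) (by norm_num)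
      (fun τ' hτ' => by
        apply Real.le_sqrt_of_sq_le
        rw [le_div_iff₀ y1w]
        exact hB y τ' hτ') σ (by nlinarith)
    have h2 : ‖gg (C y) σ‖ ^ 2 ≤ (B / (17 / 20) ^ w) * Real.exp (-(Real.pi * M * (σ.im - 17 / 20))) ^ 2 := by
      calc _ ≤ (Real.sqrt (B / (17 / 20) ^ w) * Real.exp (-(Real.pi * M * (σ.im - 17 / 20)))) ^ 2 := by gcongr
        _ = _ := by rw [mul_pow, Real.sq_sqrt (by positivity)]
    have h3 := num_est w M hM hw σ.im hσ hσ3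
    calc _ ≤ (B / (17 / 20) ^ w) * Real.exp (-(Real.pi * M * (σ.im - 17 / 20))) ^ 2 * σ.im ^ w := by gcongr
      _ = (B / (17 / 20) ^ w) * (Real.exp (-(Real.pi * M * (σ.im - 17 / 20))) ^ 2 * σ.im ^ w) := by ring
      _ ≤ (B / (17 / 20) ^ w) * (Real.exp (-(1 / 1000)) * (17 / 20) ^ w) := by gcongr
      _ = _ := by field_simp
  have init : ∃ B : ℝ, 0 ≤ B ∧ ∀ x, ∀ τ : ℂ, τ.im = 17 / 20 → ‖gg (C x) τ‖ ^ 2 * (17 / 20) ^ w ≤ B := by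
    have hx : ∀ x, ∃ A : ℝ, 0 ≤ A ∧ ∀ τ : ℂ, τ.im = 17 / 20 → ‖gg (C x) τ‖ ≤ A := by
      intro x
      have h1 := (hs x ((17 / 20 : ℝ) * I) (by norm_num)).norm
      refine ⟨∑' n, ‖C x n * ex n ((17 / 20 : ℝ) * I)‖, tsum_nonneg (fun n => norm_nonneg (C x n * ex n ((17 / 20 : ℝ) * I))), fun τ hτ => ?_⟩
      have e : ∀ n, ‖C x n * ex n τ‖ = ‖C x n * ex n ((17 / 20 : ℝ) * I)‖ := by
        intro n; rw [norm_mul, norm_mul, ex_norm, ex_norm, hτ]; simp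
      have := norm_tsum_le_tsum_norm (f := fun n => C x n * ex n τ) (by simpa only [e] using h1)
      rw [gg]
      simpa only [e] using this
    choose A hA0 hA using hx
    obtain ⟨A', hA'⟩ := (Set.finite_range A).bddAbove
    refine ⟨(max A' 0) ^ 2 * (17 / 20) ^ w, by positivity, fun x τ hτ => ?_⟩
    gcongr
    exact (hA x τ hτ).trans ((hA' ⟨x, rfl⟩).trans (le_max_left _ _))
  obtain ⟨B, hB0, hB⟩ := init
  have iter : ∀ k : ℕ, ∀ x, ∀ τ : ℂ, 0 < τ.im → NN w (C x) τ ≤ Real.exp (-(1 / 1000)) ^ (k + 1) * B := by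
    intro k
    induction k with
    | zero => intro x τ hτ; simpa using step B hB0 hB x τ hτ
    | succ k ih =>
      intro x τ hτ
      rw [pow_succ' _ (k + 1), mul_assoc]
      refine step _ (by positivity) (fun x τ hτ => ?_) x τ hτ
      have := ih x τ (by rw [hτ]; norm_num)
      rwa [NN, hτ] at this
  have hzero : ∀ x, ∀ τ : ℂ, 0 < τ.im → gg (C x) τ = 0 := by
    intro x τ hτ
    have hlim : Tendsto (fun k : ℕ => Real.exp (-(1 / 1000)) ^ (k + 1) * B) atTop (𝓝 (0 * B)) := by
      refine Tendsto.mul_const _ ?_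
      rw [tendsto_add_atTop_iff_nat (f := fun k : ℕ => Real.exp (-(1 / 1000)) ^ k)]
      exact tendsto_pow_atTop_nhds_zero_of_lt_one (Real.exp_pos _).le (by rw [Real.exp_lt_one_iff]; norm_num)
    have := ge_of_tendsto' hlim (fun k => iter k x τ hτ)
    rw [NN, zero_mul] at this
    have h2 : 0 < τ.im ^ w := by positivity
    have h3 : ‖gg (C x) τ‖ ^ 2 ≤ 0 := by
      by_contra hc
      push Not at hc
      nlinarith [mul_pos hc h2]
    have h4 : ‖gg (C x) τ‖ = 0 := by nlinarith [norm_nonneg (gg (C x) τ)]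
    simpa using h4
  exact uniq1' (C x) 1 (hs x _ (by simp)) (fun τ hτ => hzero x τ (by rw [hτ]; norm_num)) n

section Torus
open MeasureTheory

local instance uacMeasureSpace : MeasureSpace UnitAddCircle := ⟨AddCircle.haarAddCircle⟩

local instance uacHaar : Measure.IsAddHaarMeasure (volume : Measure UnitAddCircle) :=
  inferInstanceAs (Measure.IsAddHaarMeasure AddCircle.haarAddCircle)

local instance uacProb : IsProbabilityMeasure (volume : Measure UnitAddCircle) :=
  inferInstanceAs (IsProbabilityMeasure AddCircle.haarAddCircle)

abbrev Tor := UnitAddTorus (Fin 3)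

/-- projection to the torus -/
def torP (x : Fin 3 → ℝ) : Tor := fun i => (x i : UnitAddCircle)

lemma torP_oq : IsOpenQuotientMap torP := by
  have := IsOpenQuotientMap.piMap (A := fun _ : Fin 3 => ℝ) (B := fun _ : Fin 3 => UnitAddCircle)
    (f := fun _ x => (x : UnitAddCircle)) (fun _ => QuotientAddGroup.isOpenQuotientMap_mk)
  exact this

lemma torP_lift (g : (Fin 3 → ℝ) → ℂ) (hg : Continuous g)
    (hp : ∀ x (n : Fin 3 → ℤ), g (fun i => x i + n i) = g x) :
    ∃ h : C(Tor, ℂ), ∀ x, h (torP x) = g x := by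
  have hf : ∀ x y, torP x = torP y → g x = g y := by
    intro x y hxy
    have : ∀ i, ∃ n : ℤ, x i = y i + n := by
      intro i
      have h1 := congrFun hxy i
      simp only [torP] at h1
      rw [← sub_eq_zero, ← AddCircle.coe_sub, AddCircle.coe_eq_zero_iff] at h1
      obtain ⟨n, hn⟩ := h1
      exact ⟨n, by simp at hn; linarith⟩
    choose n hn using this
    rw [← hp y n]; congr 1; funext i; exact hn i
  have hs := Function.surjInv_eq torP_oq.surjective
  have e : ∀ x, g (Function.surjInv torP_oq.surjective (torP x)) = g x := fun x => hf _ _ (hs _)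
  refine ⟨⟨fun y => g (Function.surjInv torP_oq.surjective y), ?_⟩, e⟩
  rw [torP_oq.isQuotientMap.continuous_iff]
  exact hg.congr (fun x => (e x).symm)

lemma torP_add (x y : Fin 3 → ℝ) : torP (x + y) = torP x + torP y := by
  funext i; simp [torP]

lemma torus_shift (h h' : C(Tor, ℂ)) (e : Fin 3 → ℝ)
    (hh : ∀ x : Fin 3 → ℝ, ∫ s in (0 : ℝ)..1, h (torP (x + s • e)) = ∫ s in (0 : ℝ)..1, h' (torP (x + s • e))) :
    ∫ x, h x = ∫ x, h' x := by
  have key : ∀ h : C(Tor, ℂ), ∫ x, h x = ∫ x : Tor, ∫ s in (0 : ℝ)..1, h (x + torP (s • e)) := by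
    intro h
    rw [← intervalIntegral_integral_swap]
    · simp_rw [integral_add_right_eq_self (fun x => h x)]
      simp
    · have : IsFiniteMeasure (volume.restrict (Set.uIoc (0:ℝ) 1)) := ⟨by simp⟩
      have : IsProbabilityMeasure (volume : Measure Tor) :=
        inferInstanceAs (IsProbabilityMeasure (Measure.pi fun _ : Fin 3 => (volume : Measure UnitAddCircle)))
      have := Measure.prod.instIsFiniteMeasure (volume.restrict (Set.uIoc (0:ℝ) 1)) (volume : Measure Tor)
      refine Integrable.of_bound (C := ‖h‖) ?_ (Eventually.of_forall fun p => h.norm_coe_le_norm _)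
      apply Continuous.aestronglyMeasurable
      have := torP_oq.continuous
      have h2 := h.continuous
      unfold Function.uncurry
      fun_prop
  rw [key h, key h']
  refine integral_congr_ae (Eventually.of_forall fun x => ?_)
  obtain ⟨x, rfl⟩ := torP_oq.surjective x
  have := hh x
  simpa [torP_add] using this

lemma rect1 (p : ℂ → ℂ) (t : ℝ) (hd : DifferentiableOn ℂ p {ζ | ζ.im ∈ Set.uIcc 0 t})
    (hper : ∀ ζ : ℂ, ζ.im ∈ Set.uIcc 0 t → p (ζ + 1) = p ζ) :
    ∫ s in (0 : ℝ)..1, p s = ∫ s in (0 : ℝ)..1, p (s + t * I) := by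
  have h := Complex.integral_boundary_rect_eq_zero_of_differentiableOn p 0 (1 + t * I)
    (hd.mono (fun ζ hζ => by
      have := hζ.2
      simpa using this))
  simp only [zero_re, zero_im, add_re, one_re, mul_re, ofReal_re, I_re, mul_zero, ofReal_im, I_im, mul_one,
    sub_self, add_zero, add_im, one_im, mul_im, zero_add, ofReal_zero, zero_mul, ofReal_one] at h
  have e : ∫ y in (0 : ℝ)..t, p (1 + y * I) = ∫ y in (0 : ℝ)..t, p (y * I) := by
    apply intervalIntegral.integral_congr
    intro y hy
    simp only
    rw [add_comm]
    exact hper _ (by simpa using hy)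
  rw [e, add_sub_cancel_right] at h
  exact sub_eq_zero.1 h

end Torus

section Torus2
open MeasureTheory
attribute [local instance] uacMeasureSpace uacHaar uacProb

def D3 : Set (Fin 3 → ℝ) := {Y | 0 < Y 0 ∧ Y 1 ^ 2 < Y 0 * Y 2}

def T3 : Set (Fin 3 → ℂ) := {ζ | (fun i => (ζ i).im) ∈ D3}

lemma D3_open : IsOpen D3 := by
  apply IsOpen.and
  · exact isOpen_lt (by fun_prop) (by fun_prop)
  · exact isOpen_lt (by fun_prop) (by fun_prop)

lemma D3_pos2 {Y : Fin 3 → ℝ} (h : Y ∈ D3) : 0 < Y 2 := by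
  have h1 := h.1
  have h2 := h.2
  by_contra hc
  nlinarith [sq_nonneg (Y 1)]

lemma D3_seg {Y : Fin 3 → ℝ} (h : Y ∈ D3) (k : Fin 3) (t : ℝ) (h' : Y + Pi.single k t ∈ D3)
    (s : ℝ) (hs : s ∈ Set.uIcc 0 t) : Y + Pi.single k s ∈ D3 := by
  have p2 := D3_pos2 h
  have p2' := D3_pos2 h'
  obtain ⟨a, b⟩ := h
  obtain ⟨a', b'⟩ := h'
  rw [Set.mem_uIcc] at hs
  fin_cases k
  all_goals
    simp at a b a' b' p2 p2'
    constructor <;> simp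
  · rcases hs with hs | hs <;> linarith
  · rcases hs with hs | hs <;> nlinarith
  · assumption
  · rcases hs with hs | hs
    · by_cases hy : 0 ≤ Y 1 + s
      · nlinarith
      · nlinarith
    · by_cases hy : 0 ≤ Y 1 + s
      · nlinarith
      · nlinarith
  · assumption
  · rcases hs with hs | hs <;> nlinarith

def torS (x : Tor) : Fin 3 → ℝ := Function.surjInv torP_oq.surjective x

lemma torP_torS (x : Tor) : torP (torS x) = x := Function.surjInv_eq torP_oq.surjective x

def JJ (P : (Fin 3 → ℂ) → ℂ) (Y : Fin 3 → ℝ) : ℂ :=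
  ∫ x : Tor, P (fun i => ((torS x i : ℝ) : ℂ) + Y i * I)

def Per (P : (Fin 3 → ℂ) → ℂ) : Prop := ∀ ζ ∈ T3, ∀ n : Fin 3 → ℤ, P (fun i => ζ i + n i) = P ζ

lemma mem_T3 {Y : Fin 3 → ℝ} (hY : Y ∈ D3) (x : Fin 3 → ℝ) : (fun i => (x i : ℂ) + Y i * I) ∈ T3 := by
  rw [T3, Set.mem_ofPred_eq]
  convert hY using 1
  funext i; simp

lemma lift_ex {P : (Fin 3 → ℂ) → ℂ} (hd : DifferentiableOn ℂ P T3) (hp : Per P) {Y : Fin 3 → ℝ} (hY : Y ∈ D3) :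
    ∃ h : C(Tor, ℂ), (∀ x, h (torP x) = P (fun i => (x i : ℂ) + Y i * I)) ∧
      (∀ x, h x = P (fun i => ((torS x i : ℝ) : ℂ) + Y i * I)) := by
  obtain ⟨h, hh⟩ := torP_lift (fun x => P (fun i => (x i : ℂ) + Y i * I))
    (by
      rw [← continuousOn_univ]
      refine hd.continuousOn.comp (by fun_prop) (fun x _ => mem_T3 hY x))
    (by
      intro x n
      rw [← hp _ (mem_T3 hY x) n]
      congr 1; funext i; push_cast; ring)
  exact ⟨h, hh, fun x => by rw [← hh, torP_torS]⟩

lemma JJ_step {P : (Fin 3 → ℂ) → ℂ} (hd : DifferentiableOn ℂ P T3) (hp : Per P) {Y : Fin 3 → ℝ} (hY : Y ∈ D3)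
    (k : Fin 3) (t : ℝ) (hY' : Y + Pi.single k t ∈ D3) : JJ P Y = JJ P (Y + Pi.single k t) := by
  obtain ⟨h, h1, h2⟩ := lift_ex hd hp hY
  obtain ⟨h', h1', h2'⟩ := lift_ex hd hp hY'
  have := torus_shift h h' (Pi.single k 1) (by
    intro x
    simp only [h1, h1']
    have hm : ∀ ζ : ℂ, ζ.im ∈ Set.uIcc 0 t →
        (fun i => (x i : ℂ) + Y i * I + (Pi.single k ζ : Fin 3 → ℂ) i) ∈ T3 := by
      intro ζ hζ
      rw [T3, Set.mem_ofPred_eq]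
      convert D3_seg hY k t hY' _ hζ using 1
      funext i
      by_cases hi : i = k
      · subst hi; simp
      · simp [hi]
    have := rect1 (fun ζ => P (fun i => (x i : ℂ) + Y i * I + (Pi.single k ζ : Fin 3 → ℂ) i)) t
      (by
        refine hd.comp (t := T3) ?_ (fun ζ hζ => hm ζ hζ)
        apply Differentiable.differentiableOn
        rw [differentiable_pi]
        intro i
        by_cases hi : i = k
        · subst hi; simp only [Pi.single_eq_same]; fun_prop
        · simp [hi])
      (by
        intro ζ hζ
        rw [← hp _ (hm ζ hζ) (Pi.single k 1)]
        congr 1; funext i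
        by_cases hi : i = k
        · subst hi; simp; ring
        · simp [hi])
    convert this using 4 with s s
    · funext i
      by_cases hi : i = k
      · subst hi; simp; ring
      · simp [hi]
    · funext i
      by_cases hi : i = k
      · subst hi; simp; ring
      · simp [hi])
  simpa only [JJ, ← h2, ← h2'] using this

lemma JJ_const {P : (Fin 3 → ℂ) → ℂ} (hd : DifferentiableOn ℂ P T3) (hp : Per P) {Y Y' : Fin 3 → ℝ} (hY : Y ∈ D3)
    (hY' : Y' ∈ D3) : JJ P Y = JJ P Y' := by
  have up : ∀ {Y Y' : Fin 3 → ℝ}, Y ∈ D3 → Y' ∈ D3 → ![Y 0 + Y' 0, Y 1, Y 2 + Y' 2] ∈ D3 ∧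
      JJ P Y = JJ P ![Y 0 + Y' 0, Y 1, Y 2 + Y' 2] := by
    intro Y Y' hY hY'
    have p := D3_pos2 hY
    have p' := D3_pos2 hY'
    have a := hY.1
    have a' := hY'.1
    have b := hY.2
    have m1 : Y + Pi.single 0 (Y' 0) ∈ D3 := by
      constructor
      · simp; linarith
      · simp; nlinarith
    have e : Y + Pi.single 0 (Y' 0) + Pi.single 2 (Y' 2) = ![Y 0 + Y' 0, Y 1, Y 2 + Y' 2] := by
      funext i; fin_cases i <;> simp
    have m2 : ![Y 0 + Y' 0, Y 1, Y 2 + Y' 2] ∈ D3 := by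
      constructor
      · simp; linarith
      · simp; nlinarith [mul_pos a p, mul_pos a p', mul_pos a' p, mul_pos a' p']
    refine ⟨m2, ?_⟩
    rw [JJ_step hd hp hY 0 _ m1, JJ_step hd hp m1 2 (Y' 2) (by rw [e]; exact m2), e]
  obtain ⟨m, h⟩ := up hY hY'
  obtain ⟨m', h'⟩ := up hY' hY
  have e : ![Y 0 + Y' 0, Y 1, Y 2 + Y' 2] + Pi.single 1 (Y' 1 - Y 1) = ![Y' 0 + Y 0, Y' 1, Y' 2 + Y 2] := by
    funext i; fin_cases i <;> simp <;> ring
  rw [h, h', JJ_step hd hp m 1 (Y' 1 - Y 1) (by rw [e]; exact m'), e]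

end Torus2

section Torus3
open MeasureTheory
attribute [local instance] uacMeasureSpace uacHaar uacProb

def PP (n : Fin 3 → ℤ) (G : (Fin 3 → ℂ) → ℂ) (ζ : Fin 3 → ℂ) : ℂ :=
  Complex.exp (-(2 * Real.pi * I * ∑ i, n i * ζ i)) * G ζ

lemma PP_diff {G : (Fin 3 → ℂ) → ℂ} (n : Fin 3 → ℤ) (hd : DifferentiableOn ℂ G T3) :
    DifferentiableOn ℂ (PP n G) T3 := by
  apply DifferentiableOn.mul _ hd
  apply Differentiable.differentiableOn
  fun_prop

lemma PP_per {G : (Fin 3 → ℂ) → ℂ} (n : Fin 3 → ℤ) (hp : Per G) : Per (PP n G) := by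
  intro ζ hζ m
  unfold PP
  rw [hp ζ hζ m]
  congr 1
  rw [Complex.exp_eq_exp_iff_exists_int]
  refine ⟨-∑ i, n i * m i, ?_⟩
  push_cast
  simp only [mul_add, Finset.sum_add_distrib]
  ring

lemma coeff_eq {G : (Fin 3 → ℂ) → ℂ} (n : Fin 3 → ℤ)
    {Y : Fin 3 → ℝ} (h : C(Tor, ℂ))
    (h2 : ∀ x, h x = G (fun i => ((torS x i : ℝ) : ℂ) + Y i * I)) :
    JJ (PP n G) Y = Complex.exp (2 * Real.pi * ∑ i, n i * Y i) * UnitAddTorus.mFourierCoeff h n := by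
  unfold JJ UnitAddTorus.mFourierCoeff
  rw [← integral_const_mul]
  refine integral_congr_ae (Eventually.of_forall fun x => ?_)
  simp only [h2, PP, smul_eq_mul]
  rw [← mul_assoc]
  congr 1
  have : (UnitAddTorus.mFourier (-n)) x = Complex.exp (-(2 * Real.pi * I * ∑ i, n i * (torS x i : ℂ))) := by
    conv_lhs => rw [← torP_torS x]
    show ∏ i, fourier (-(n i)) ((torS x i : ℝ) : UnitAddCircle) = _
    simp only [fourier_coe_apply]
    rw [← Complex.exp_sum, Finset.mul_sum, ← Finset.sum_neg_distrib]
    congr 1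
    apply Finset.sum_congr rfl
    intro i _
    push_cast; ring
  rw [this, ← Complex.exp_add]
  congr 1
  push_cast
  simp only [Finset.mul_sum, ← Finset.sum_neg_distrib, ← Finset.sum_add_distrib]
  apply Finset.sum_congr rfl
  intro i _
  linear_combination (-(2 * Real.pi * (n i : ℂ) * Y i)) * I_sq

lemma summ_geom (ε : ℝ) (hε : 0 < ε) : Summable fun n : ℤ => Real.exp (-(ε * |(n : ℝ)|)) := by
  have h : Summable fun n : ℕ => Real.exp (-(ε * n)) := by
    have := Real.summable_exp_neg_nat.comp_injective (i := id) Function.injective_id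
    have h3 : Summable fun n : ℕ => (Real.exp (-ε)) ^ n :=
      summable_geometric_of_lt_one (Real.exp_pos _).le (by rw [Real.exp_lt_one_iff]; linarith)
    refine h3.congr fun n => ?_
    rw [← Real.exp_nat_mul]; congr 1; ring
  refine Summable.of_nat_of_neg ?_ ?_
  · simpa using h
  · simpa using h

def e3 : ℤ × ℤ × ℤ ≃ (Fin 3 → ℤ) where
  toFun p := ![p.1, p.2.1, p.2.2]
  invFun n := (n 0, n 1, n 2)
  left_inv p := by simp
  right_inv n := by funext i; fin_cases i <;> rfl

lemma summ_geom3 (ε : ℝ) (hε : 0 < ε) : Summable fun n : Fin 3 → ℤ => Real.exp (-(ε * ∑ i, |(n i : ℝ)|)) := by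
  rw [← e3.summable_iff]
  have h1 := summ_geom ε hε
  have h2 := h1.mul_of_nonneg (h1.mul_of_nonneg h1 (fun _ => (Real.exp_pos _).le) (fun _ => (Real.exp_pos _).le))
    (fun _ => (Real.exp_pos _).le) (fun _ => by positivity)
  refine h2.congr fun p => ?_
  simp only [Function.comp_apply, e3, Fin.sum_univ_three, ← Real.exp_add, Equiv.coe_fn_mk]
  congr 1
  simp
  ring

def sgv (s : Fin 3 → Bool) (i : Fin 3) : ℝ := if s i then 1 else -1

theorem four3 (G : (Fin 3 → ℂ) → ℂ) (hd : DifferentiableOn ℂ G T3) (hp : Per G) :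
    ∃ c : (Fin 3 → ℤ) → ℂ, ∀ ζ ∈ T3,
      HasSum (fun n => c n * Complex.exp (2 * Real.pi * I * ∑ i, n i * ζ i)) (G ζ) := by
  have h0 : (![1, 0, 1] : Fin 3 → ℝ) ∈ D3 := by constructor <;> simp
  let c : (Fin 3 → ℤ) → ℂ := fun n => JJ (PP n G) ![1, 0, 1]
  have hc : ∀ n, ∀ Y ∈ D3, c n = JJ (PP n G) Y := fun n Y hY => JJ_const (PP_diff n hd) (PP_per n hp) h0 hY
  have hb : ∀ Y ∈ D3, ∃ K : ℝ, 0 ≤ K ∧ ∀ n, ‖c n‖ ≤ K * Real.exp (2 * Real.pi * ∑ i, n i * Y i) := by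
    intro Y hY
    obtain ⟨h, h1, h2⟩ := lift_ex hd hp hY
    refine ⟨‖h‖, norm_nonneg _, fun n => ?_⟩
    rw [hc n Y hY, coeff_eq n h h2, norm_mul, mul_comm]
    gcongr
    · have pm : IsProbabilityMeasure (volume : Measure Tor) :=
        inferInstanceAs (IsProbabilityMeasure (Measure.pi fun _ : Fin 3 => (volume : Measure UnitAddCircle)))
      have := norm_integral_le_of_norm_le_const (μ := (volume : Measure Tor))
        (f := fun t => UnitAddTorus.mFourier (-n) t • h t) (C := ‖h‖)
        (Eventually.of_forall fun t => by
          rw [norm_smul]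
          have a := (UnitAddTorus.mFourier (-n)).norm_coe_le_norm t
          rw [UnitAddTorus.mFourier_norm] at a
          have b := h.norm_coe_le_norm t
          nlinarith [norm_nonneg (h t)])
      simpa [UnitAddTorus.mFourierCoeff] using this
    · rw [Complex.norm_exp]
      apply le_of_eq
      congr 1
      rw [← Complex.ofReal_re (2 * Real.pi * ∑ i, n i * Y i)]
      push_cast; rfl
  have hs : ∀ Y ∈ D3, Summable fun n => ‖c n‖ * Real.exp (-(2 * Real.pi * ∑ i, n i * Y i)) := by
    intro Y hY
    obtain ⟨ε, hε, hball⟩ := Metric.isOpen_iff.1 D3_open Y hY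
    have hm : ∀ s, Y - (ε / 2) • sgv s ∈ D3 := by
      intro s
      apply hball
      rw [Metric.mem_ball, dist_pi_lt_iff hε]
      intro i
      rw [Real.dist_eq]
      simp only [Pi.sub_apply, Pi.smul_apply, smul_eq_mul, sub_sub_cancel_left, abs_neg, abs_mul, sgv]
      rw [abs_of_pos (by linarith : (0:ℝ) < ε / 2)]
      split_ifs <;> simp <;> linarith
    choose K hK0 hK using fun s => hb _ (hm s)
    have hsum := (summ_geom3 (Real.pi * ε) (by positivity)).mul_left (∑ s, K s)
    refine Summable.of_nonneg_of_le (fun n => by positivity) (fun n => ?_) hsum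
    let s : Fin 3 → Bool := fun i => decide (0 ≤ n i)
    have h1 := hK s n
    have h2 : K s ≤ ∑ s, K s := Finset.single_le_sum (fun s _ => hK0 s) (Finset.mem_univ s)
    calc _ ≤ (K s * Real.exp (2 * Real.pi * ∑ i, n i * (Y - (ε / 2) • sgv s) i)) *
          Real.exp (-(2 * Real.pi * ∑ i, n i * Y i)) := by gcongr
      _ = K s * Real.exp (-(Real.pi * ε * ∑ i, |(n i : ℝ)|)) := by
        rw [mul_assoc, ← Real.exp_add]
        congr 2
        simp only [Finset.mul_sum, ← Finset.sum_neg_distrib, ← Finset.sum_add_distrib]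
        apply Finset.sum_congr rfl
        intro i _
        have : |(n i : ℝ)| = n i * sgv s i := by
          simp only [sgv, s]
          split_ifs with hh
          · simp at hh
            rw [abs_of_nonneg (by exact_mod_cast hh)]; ring
          · simp at hh
            rw [abs_of_neg (by exact_mod_cast hh)]; ring
        rw [this]
        simp
        ring
      _ ≤ _ := by gcongr
  refine ⟨c, fun ζ hζ => ?_⟩
  set Y : Fin 3 → ℝ := fun i => (ζ i).im with hYd
  have hY : Y ∈ D3 := hζ
  obtain ⟨h, h1, h2⟩ := lift_ex hd hp hY
  have hco : ∀ n, UnitAddTorus.mFourierCoeff h n = c n * Complex.exp (-(2 * Real.pi * ∑ i, n i * Y i)) := by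
    intro n
    rw [hc n Y hY, coeff_eq n h h2, mul_comm, ← mul_assoc, ← Complex.exp_add]
    simp
  have hsm : Summable (UnitAddTorus.mFourierCoeff h) := by
    refine Summable.of_norm ((hs Y hY).congr fun n => ?_)
    rw [hco, norm_mul, Complex.norm_exp]
    congr 2
    rw [← Complex.ofReal_re (-(2 * Real.pi * ∑ i, n i * Y i))]
    push_cast; rfl
  have := UnitAddTorus.hasSum_mFourier_series_apply_of_summable hsm (torP fun i => (ζ i).re)
  rw [h1] at this
  convert this using 1
  · funext n
    rw [hco, smul_eq_mul, mul_assoc (c n)]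
    refine congrArg (c n * ·) ?_
    show _ = _ * ∏ i, fourier ((n i)) (((ζ i).re : ℝ) : UnitAddCircle)
    simp only [fourier_coe_apply]
    rw [← Complex.exp_sum, ← Complex.exp_add]
    congr 1
    push_cast
    simp only [Finset.mul_sum, ← Finset.sum_neg_distrib, ← Finset.sum_add_distrib]
    apply Finset.sum_congr rfl
    intro i _
    conv_lhs => rw [← re_add_im (ζ i)]
    simp only [hYd]
    linear_combination ((2 * Real.pi * (n i : ℂ) * (ζ i).im)) * I_sq
  · congr 1; funext i
    simp [hYd]

end Torus3

def DD : Set (ℂ × ℂ × ℂ) := {p | 0 < p.1.im ∧ p.2.1.im ^ 2 < p.1.im * p.2.2.im}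

/-- monomial -/
def mon (p : ℤ × ℤ × ℤ) (τ z σ : ℂ) : ℂ := ex p.1 τ * ex p.2.1 z * ex p.2.2 σ

theorem fourE (f : ℂ × ℂ × ℂ → ℂ) (hd : DifferentiableOn ℂ f DD)
    (hp : ∀ τ z σ : ℂ, (τ, z, σ) ∈ DD → ∀ a b c : ℤ, f (τ + 2 * a, z + 2 * b, σ + 2 * c) = f (τ, z, σ)) :
    ∃ a : ℤ → ℤ → ℤ → ℂ, ∀ τ z σ : ℂ, (τ, z, σ) ∈ DD →
      HasSum (fun p : ℤ × ℤ × ℤ => a p.1 p.2.1 p.2.2 * mon p τ z σ) (f (τ, z, σ)) := by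
  have hm : ∀ ζ ∈ T3, (2 * ζ 0, 2 * ζ 1, 2 * ζ 2) ∈ DD := by
    intro ζ hζ
    have h := hζ.1
    have h' := hζ.2
    constructor
    · simp; exact h
    · simp; nlinarith
  obtain ⟨c, hc⟩ := four3 (fun ζ => f (2 * ζ 0, 2 * ζ 1, 2 * ζ 2))
    (by
      refine hd.comp (t := DD) ?_ hm
      apply Differentiable.differentiableOn
      fun_prop)
    (by
      intro ζ hζ n
      show f _ = f _
      rw [← hp _ _ _ (hm ζ hζ) (n 0) (n 1) (n 2)]
      simp only [mul_add])
  refine ⟨fun m b n => c ![m, b, n], fun τ z σ h => ?_⟩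
  have := hc ![τ / 2, z / 2, σ / 2] (by
    have h1 := h.1
    have h2 := h.2
    simp only at h1 h2
    constructor
    · simp; exact h1
    · simp; nlinarith)
  rw [← e3.hasSum_iff] at this
  convert this using 1
  · funext p
    simp only [Function.comp_apply, e3, Equiv.coe_fn_mk]
    congr 1
    simp only [mon, ex, ← Complex.exp_add, Fin.sum_univ_three]
    congr 1
    simp
    ring
  · congr 1
    simp
    refine ⟨?_, ?_, ?_⟩ <;> ring

lemma uniq3 (α : ℤ → ℤ → ℤ → ℂ)
    (h : ∀ τ z σ : ℂ, (τ, z, σ) ∈ DD → HasSum (fun p : ℤ × ℤ × ℤ => α p.1 p.2.1 p.2.2 * mon p τ z σ) 0) :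
    ∀ m b n, α m b n = 0 := by
  have h0 : ∀ x1 x2 x3 : ℝ, ((x1 + I : ℂ), (x2 : ℂ), (x3 + I : ℂ)) ∈ DD := by
    intro x1 x2 x3; constructor <;> simp
  have hs : Summable fun p : ℤ × ℤ × ℤ => ‖α p.1 p.2.1 p.2.2 * mon p I 0 I‖ := by
    have := (h _ _ _ (h0 0 0 0)).summable.norm
    simpa using this
  have e : ∀ (p : ℤ × ℤ × ℤ) (x1 x2 x3 : ℝ), mon p (x1 + I) x2 (x3 + I) =
      mon p I 0 I * (ex p.1 x1 * (ex p.2.1 x2 * ex p.2.2 x3)) := by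
    intro p x1 x2 x3
    simp only [mon, ex_add]
    have : ex p.2.1 0 = 1 := by simp [ex]
    rw [this]; ring
  set β : ℤ × ℤ × ℤ → ℂ := fun p => α p.1 p.2.1 p.2.2 * mon p I 0 I with hβ
  have hz : ∀ p, mon p I 0 I ≠ 0 := by intro p; simp [mon, ex, Complex.exp_ne_zero]
  have hsum : ∀ x1 x2 x3 : ℝ, HasSum (fun p : ℤ × ℤ × ℤ => β p * (ex p.1 x1 * (ex p.2.1 x2 * ex p.2.2 x3))) 0 := by
    intro x1 x2 x3
    convert h _ _ _ (h0 x1 x2 x3) using 1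
    funext p
    rw [e, hβ, mul_assoc]
  have hn1 : ∀ m, Summable fun q : ℤ × ℤ => ‖β (m, q)‖ := fun m => hs.prod_factor m
  have key1 : ∀ (x2 x3 : ℝ) m, ∑' q : ℤ × ℤ, β (m, q) * (ex q.1 x2 * ex q.2 x3) = 0 := by
    intro x2 x3
    have nq : ∀ m (q : ℤ × ℤ), ‖β (m, q) * (ex q.1 x2 * ex q.2 x3)‖ = ‖β (m, q)‖ := by
      intro m q; simp [ex_real_norm]
    refine uniq1 (fun m => ∑' q : ℤ × ℤ, β (m, q) * (ex q.1 x2 * ex q.2 x3)) ?_ ?_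
    · refine Summable.of_nonneg_of_le (fun _ => norm_nonneg _) (fun m => ?_) hs.prod
      refine (norm_tsum_le_tsum_norm ((hn1 m).congr fun q => (nq m q).symm)).trans ?_
      rw [tsum_congr (nq m)]
    · intro x1
      have hh := (hsum x1 x2 x3)
      have := hh.summable.tsum_prod
      rw [hh.tsum_eq] at this
      rw [this]
      refine tsum_congr fun m => ?_
      rw [← tsum_mul_right]
      refine tsum_congr fun q => ?_
      ring
  have hn2 : ∀ m b, Summable fun n : ℤ => ‖β (m, b, n)‖ := fun m b => (hn1 m).prod_factor b
  have key2 : ∀ (x3 : ℝ) m b, ∑' n : ℤ, β (m, b, n) * ex n x3 = 0 := by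
    intro x3 m
    have nq : ∀ b n, ‖β (m, b, n) * ex n x3‖ = ‖β (m, b, n)‖ := by
      intro m q; simp [ex_real_norm]
    refine uniq1 (fun b => ∑' n : ℤ, β (m, b, n) * ex n x3) ?_ ?_
    · refine Summable.of_nonneg_of_le (fun _ => norm_nonneg _) (fun b => ?_) (hn1 m).prod
      refine (norm_tsum_le_tsum_norm ((hn2 m b).congr fun q => (nq b q).symm)).trans ?_
      rw [tsum_congr (nq b)]
    · intro x2
      have hh : Summable fun q : ℤ × ℤ => β (m, q) * (ex q.1 x2 * ex q.2 x3) := by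
        refine Summable.of_norm ((hn1 m).congr fun q => ?_)
        simp [ex_real_norm]
      have := hh.tsum_prod
      rw [key1] at this
      rw [this]
      refine tsum_congr fun m => ?_
      rw [← tsum_mul_right]
      refine tsum_congr fun q => ?_
      ring
  intro m b n
  have := uniq1 (fun n => β (m, b, n)) (hn2 m b) (fun x3 => key2 x3 m b) n
  simp only [hβ] at this
  exact (mul_eq_zero.1 this).resolve_right (hz _)

lemma uniq3' (α β : ℤ → ℤ → ℤ → ℂ) (f : ℂ × ℂ × ℂ → ℂ)
    (h : ∀ τ z σ : ℂ, (τ, z, σ) ∈ DD → HasSum (fun p : ℤ × ℤ × ℤ => α p.1 p.2.1 p.2.2 * mon p τ z σ) (f (τ, z, σ)))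
    (h' : ∀ τ z σ : ℂ, (τ, z, σ) ∈ DD → HasSum (fun p : ℤ × ℤ × ℤ => β p.1 p.2.1 p.2.2 * mon p τ z σ) (f (τ, z, σ)))
    (m b n : ℤ) : α m b n = β m b n := by
  have := uniq3 (fun m b n => α m b n - β m b n) (fun τ z σ hm => by
    have := (h τ z σ hm).sub (h' τ z σ hm)
    rw [sub_self] at this
    exact this.congr_fun fun p => by ring) m b n
  exact sub_eq_zero.1 this

/-- The analytic data. -/
structure AD {ι : Type} (j : ℕ) (Φ : ι → ℕ → ℂ × ℂ × ℂ → ℂ) : Prop where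
  zero : ∀ x i p, j < i → Φ x i p = 0
  diff : ∀ x i, DifferentiableOn ℂ (Φ x i) DD
  per : ∀ x i (τ z σ : ℂ), (τ, z, σ) ∈ DD → ∀ a b c : ℤ, Φ x i (τ + 2 * a, z + 2 * b, σ + 2 * c) = Φ x i (τ, z, σ)
  tr2 : ∀ x, ∃ y, ∀ i (τ z σ : ℂ), (τ, z, σ) ∈ DD → Φ x i (τ, z, σ + 1) = Φ y i (τ, z, σ)
  trz : ∀ x, ∃ y, ∀ i (τ z σ : ℂ), (τ, z, σ) ∈ DD → Φ x i (τ, z + 1, σ) = Φ y i (τ, z, σ)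
  shift : ∀ x (s : ℤ), ∃ y, ∀ i (τ z σ : ℂ), (τ, z, σ) ∈ DD → Φ y i (τ, z, σ) =
    ∑ l ∈ Finset.range (j + 1), (l.choose i : ℂ) * (s : ℂ) ^ (l - i) * Φ x l (τ, z + s * τ, σ + 2 * s * z + s ^ 2 * τ)
  swap : ∀ x, ∃ y, ∀ i ≤ j, ∀ (τ z σ : ℂ), (τ, z, σ) ∈ DD → Φ y i (τ, z, σ) = Φ x (j - i) (σ, z, τ)
  inv : ∀ x, ∃ y, ∀ i ≤ j, ∀ (τ z σ : ℂ), (τ, z, σ) ∈ DD → Φ x i (τ - z ^ 2 / σ, z / σ, -1 / σ) =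
    σ ^ 2 * ∑ l ∈ Finset.range (i + 1), ((j - l).choose (i - l) : ℂ) * z ^ (i - l) * σ ^ l * Φ y l (τ, z, σ)
  cusp : ∀ x i (τ : ℂ), 0 < τ.im → Tendsto (fun t : ℝ => Φ x i (τ, 0, t * I)) atTop (𝓝 0)

/-- Fourier expansion predicate -/
def FEx {ι : Type} (Φ : ι → ℕ → ℂ × ℂ × ℂ → ℂ) (a : ι → ℕ → ℤ → ℤ → ℤ → ℂ) : Prop :=
  ∀ x i (τ z σ : ℂ), (τ, z, σ) ∈ DD →
      HasSum (fun p : ℤ × ℤ × ℤ => a x i p.1 p.2.1 p.2.2 * mon p τ z σ) (Φ x i (τ, z, σ))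

lemma AD.fex {ι : Type} {j : ℕ} {Φ : ι → ℕ → ℂ × ℂ × ℂ → ℂ} (h : AD j Φ) : ∃ a, FEx Φ a := by
  choose a ha using fun x i => fourE (Φ x i) (h.diff x i) (h.per x i)
  exact ⟨a, ha⟩

section
variable {ι : Type} {j : ℕ} {Φ : ι → ℕ → ℂ × ℂ × ℂ → ℂ} {a : ι → ℕ → ℤ → ℤ → ℤ → ℂ}

lemma AD.c_deg (h : AD j Φ) (ha : FEx Φ a) (x : ι) (i : ℕ) (m b n : ℤ) (hi : j < i) : a x i m b n = 0 := by
  apply uniq3 (a x i)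
  intro τ z σ hm
  have := ha x i τ z σ hm
  rwa [h.zero x i _ hi] at this

lemma AD.c_tr2 (h : AD j Φ) (ha : FEx Φ a) (x : ι) : ∃ y, ∀ i m b n, a y i m b n = (-1 : ℂ) ^ n * a x i m b n := by
  obtain ⟨y, hy⟩ := h.tr2 x
  refine ⟨y, fun i => uniq3' _ (fun m b n => (-1 : ℂ) ^ n * a x i m b n) (Φ y i) (ha y i) ?_⟩
  intro τ z σ hm
  rw [← hy i τ z σ hm]
  convert ha x i τ z (σ + 1) (by simpa [DD] using hm) using 1
  funext p
  simp only [mon, ex_add, ex_one]; ring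

lemma AD.c_trz (h : AD j Φ) (ha : FEx Φ a) (x : ι) : ∃ y, ∀ i m b n, a y i m b n = (-1 : ℂ) ^ b * a x i m b n := by
  obtain ⟨y, hy⟩ := h.trz x
  refine ⟨y, fun i => uniq3' _ (fun m b n => (-1 : ℂ) ^ b * a x i m b n) (Φ y i) (ha y i) ?_⟩
  intro τ z σ hm
  rw [← hy i τ z σ hm]
  convert ha x i τ (z + 1) σ (by simpa [DD] using hm) using 1
  funext p
  simp only [mon, ex_add, ex_one]; ring

lemma DD_pos {τ z σ : ℂ} (h : (τ, z, σ) ∈ DD) : 0 < σ.im := by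
  have h1 := h.1
  have h2 := h.2
  simp only at h1 h2
  by_contra hc
  nlinarith [sq_nonneg z.im]

lemma AD.c_swap (h : AD j Φ) (ha : FEx Φ a) (x : ι) : ∃ y, ∀ i ≤ j, ∀ m b n, a y i n b m = a x (j - i) m b n := by
  obtain ⟨y, hy⟩ := h.swap x
  refine ⟨y, fun i hi m b n => ?_⟩
  refine uniq3' (a y i) (fun n b m => a x (j - i) m b n) (Φ y i) (ha y i) ?_ n b m
  intro τ z σ hm
  rw [hy i hi τ z σ hm]
  have h2 : (σ, z, τ) ∈ DD := ⟨DD_pos hm, by have := hm.2; simp only at this ⊢; linarith⟩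
  have := ha x (j - i) σ z τ h2
  let e : ℤ × ℤ × ℤ ≃ ℤ × ℤ × ℤ := ⟨fun p => (p.2.2, p.2.1, p.1), fun p => (p.2.2, p.2.1, p.1),
    fun p => rfl, fun p => rfl⟩
  rw [← e.hasSum_iff] at this
  convert this using 1
  funext p
  simp only [mon, e, Function.comp_apply, Equiv.coe_fn_mk]; ring

lemma AD.c_shift (h : AD j Φ) (ha : FEx Φ a) (x : ι) (s : ℤ) : ∃ y, ∀ i m b n,
    a y i (m + s*b + s^2*n) (b + 2*s*n) n = ∑ l ∈ Finset.range (j + 1), (l.choose i : ℂ) * (s : ℂ) ^ (l - i) * a x l m b n := by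
  obtain ⟨y, hy⟩ := h.shift x s
  refine ⟨y, fun i m b n => ?_⟩
  have := uniq3' (a y i) (fun m b n => ∑ l ∈ Finset.range (j + 1), (l.choose i : ℂ) * (s : ℂ) ^ (l - i) *
      a x l (m - s * b + s ^ 2 * n) (b - 2 * s * n) n) (Φ y i) (ha y i) ?_ (m + s*b + s^2*n) (b + 2*s*n) n
  · rw [this]
    apply Finset.sum_congr rfl
    intro l _
    congr 2 <;> ring
  intro τ z σ hm
  rw [hy i τ z σ hm]
  have h2 : (τ, z + s * τ, σ + 2 * s * z + s ^ 2 * τ) ∈ DD := by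
    refine ⟨hm.1, ?_⟩
    have := hm.2
    simp [sq] at this ⊢
    nlinarith
  simp only [Finset.sum_mul]
  refine hasSum_sum fun l _ => ?_
  have := (ha x l _ _ _ h2).mul_left ((l.choose i : ℂ) * (s : ℂ) ^ (l - i))
  let e : ℤ × ℤ × ℤ ≃ ℤ × ℤ × ℤ := ⟨fun p => (p.1 - s * p.2.1 + s ^ 2 * p.2.2, p.2.1 - 2 * s * p.2.2, p.2.2),
    fun p => (p.1 + s * p.2.1 + s ^ 2 * p.2.2, p.2.1 + 2 * s * p.2.2, p.2.2),
    fun p => by ext <;> simp; ring, fun p => by ext <;> simp; ring⟩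
  rw [← e.hasSum_iff] at this
  refine this.congr_fun fun p => ?_
  simp only [mon, e, Function.comp_apply, Equiv.coe_fn_mk, mul_assoc]
  congr 3
  simp only [ex, ← Complex.exp_add]
  congr 1
  push_cast
  ring
end

section
variable {ι : Type} {j : ℕ} {Φ : ι → ℕ → ℂ × ℂ × ℂ → ℂ} {a : ι → ℕ → ℤ → ℤ → ℤ → ℂ}

lemma AD.c_shiftP (h : AD j Φ) (ha : FEx Φ a) (x : ι) (s : ℤ) : ∃ y, ∀ m b n,
    cpol j a y (m + s * b + s ^ 2 * n) (b + 2 * s * n) n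
    = (cpol j a x m b n).comp (Polynomial.X + Polynomial.C (s : ℂ)) := by
  obtain ⟨y, hy⟩ := h.c_shift ha x s
  refine ⟨y, fun m b n => ?_⟩
  ext i
  have e1 : (cpol j a y (m + s * b + s ^ 2 * n) (b + 2 * s * n) n).coeff i =
      a y i (m + s * b + s ^ 2 * n) (b + 2 * s * n) n := by
    rw [CD.cpol_coeff]; split_ifs with hh
    · rfl
    · rw [h.c_deg ha]; omega
  rw [e1, hy]
  simp only [cpol, Polynomial.sum_comp, Polynomial.mul_comp, Polynomial.C_comp, Polynomial.X_pow_comp,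
    Polynomial.finsetSum_coeff, Polynomial.coeff_C_mul, Polynomial.coeff_X_add_C_pow]
  exact Finset.sum_congr rfl fun l _ => by ring

lemma AD.c_bd [Finite ι] (ha : FEx Φ a) : ∃ K : ℝ, 0 ≤ K ∧ ∀ x, ∀ i ≤ j, ∀ m b n,
    ‖a x i m b n‖ ≤ K * Real.exp (Real.pi * (m + n)) := by
  have := Fintype.ofFinite ι
  have h0 : ((I : ℂ), (0 : ℂ), (I : ℂ)) ∈ DD := by constructor <;> simp
  have hs : ∀ x i, Summable fun p : ℤ × ℤ × ℤ => ‖a x i p.1 p.2.1 p.2.2 * mon p I 0 I‖ :=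
    fun x i => (ha x i _ _ _ h0).summable.norm
  refine ⟨∑ x, ∑ i ∈ Finset.range (j + 1), ∑' p : ℤ × ℤ × ℤ, ‖a x i p.1 p.2.1 p.2.2 * mon p I 0 I‖,
    by positivity, fun x i hi m b n => ?_⟩
  have h1 := (hs x i).le_tsum (m, b, n) (fun _ _ => norm_nonneg _)
  have h2 : ∑' p : ℤ × ℤ × ℤ, ‖a x i p.1 p.2.1 p.2.2 * mon p I 0 I‖ ≤
      ∑ i ∈ Finset.range (j + 1), ∑' p : ℤ × ℤ × ℤ, ‖a x i p.1 p.2.1 p.2.2 * mon p I 0 I‖ :=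
    Finset.single_le_sum (f := fun i => ∑' p : ℤ × ℤ × ℤ, ‖a x i p.1 p.2.1 p.2.2 * mon p I 0 I‖)
      (fun _ _ => tsum_nonneg fun _ => norm_nonneg _) (Finset.mem_range.2 (by omega))
  have h3 := Finset.single_le_sum (s := Finset.univ)
    (f := fun x => ∑ i ∈ Finset.range (j + 1), ∑' p : ℤ × ℤ × ℤ, ‖a x i p.1 p.2.1 p.2.2 * mon p I 0 I‖)
      (fun _ _ => Finset.sum_nonneg fun _ _ => tsum_nonneg fun _ => norm_nonneg _) (Finset.mem_univ x)
  have h4 := h1.trans (h2.trans h3)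
  simp only [norm_mul, mon, ex_norm] at h4 ⊢
  have h5 : Real.exp (-(Real.pi * m * I.im)) * Real.exp (-(Real.pi * b * (0 : ℂ).im)) * Real.exp (-(Real.pi * n * I.im))
      = (Real.exp (Real.pi * (m + n)))⁻¹ := by
    rw [← Real.exp_add, ← Real.exp_add, ← Real.exp_neg]; congr 1; simp; ring
  rw [h5, ← div_eq_mul_inv, div_le_iff₀ (Real.exp_pos _)] at h4
  exact h4

lemma AD.koecher [Finite ι] (h : AD j Φ) (ha : FEx Φ a) (x : ι) (i : ℕ) (m b n : ℤ)
    (hn : n < 0 ∨ (n = 0 ∧ b ≠ 0)) : a x i m b n = 0 := by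
  by_cases hi : j < i
  · exact h.c_deg ha x i m b n hi
  suffices hp : cpol j a x m b n = 0 by
    have := CD.cpol_coeff (j := j) (a := a) x m b n i
    rw [hp, if_pos (by omega)] at this
    simpa using this.symm
  obtain ⟨K, hK0, hK⟩ := AD.c_bd (j := j) ha
  have hs : ∀ N : ℕ, ∃ s : ℤ, |s| = N ∧ m + s * b + s ^ 2 * n ≤ m - N := by
    intro N
    by_cases hb : 0 ≤ b
    · refine ⟨-N, by simp, ?_⟩
      rcases hn with hn | ⟨rfl, hn⟩
      · have : (N : ℤ) ≤ N ^ 2 := by exact_mod_cast Nat.le_self_pow (by norm_num) N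
        nlinarith [mul_nonneg (Int.natCast_nonneg N) hb]
      · have : 1 ≤ b := by omega
        nlinarith [Int.natCast_nonneg N]
    · refine ⟨N, by simp, ?_⟩
      rcases hn with hn | ⟨rfl, hn⟩
      · have : (N : ℤ) ≤ N ^ 2 := by exact_mod_cast Nat.le_self_pow (by norm_num) N
        nlinarith [Int.natCast_nonneg N]
      · have : b ≤ -1 := by omega
        nlinarith [Int.natCast_nonneg N]
  apply Polynomial.funext
  intro u
  rw [Polynomial.eval_zero, ← norm_eq_zero]
  have bd : ∀ N : ℕ, ‖(cpol j a x m b n).eval u‖ ≤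
      (K * Real.exp (Real.pi * (m + n)) * (j + 1)) * ((‖u‖ + 1 + N) ^ j * Real.exp (-(1 * N))) := by
    intro N
    obtain ⟨s, hsN, hsm⟩ := hs N
    obtain ⟨y, hy⟩ := h.c_shiftP ha x s
    have e : (cpol j a x m b n).eval u = (cpol j a y (m + s * b + s ^ 2 * n) (b + 2 * s * n) n).eval (u - s) := by
      rw [hy]; simp
    rw [e]
    set m' := m + s * b + s ^ 2 * n
    set b' := b + 2 * s * n
    have hm' : (m' : ℝ) ≤ m - N := by exact_mod_cast hsm
    have hus : ‖u - s‖ ≤ ‖u‖ + 1 + N := by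
      refine (norm_sub_le _ _).trans ?_
      have : ‖(s : ℂ)‖ = N := by
        rw [Complex.norm_intCast]; exact_mod_cast congrArg (fun z : ℤ => (z : ℝ)) hsN
      rw [this]; linarith
    simp only [cpol, Polynomial.eval_finsetSum, Polynomial.eval_mul, Polynomial.eval_C, Polynomial.eval_pow, Polynomial.eval_X]
    calc _ ≤ ∑ l ∈ Finset.range (j + 1), ‖a y l m' b' n * (u - s) ^ l‖ := norm_sum_le _ _
      _ ≤ ∑ l ∈ Finset.range (j + 1), (K * Real.exp (Real.pi * (m + n)) * ((‖u‖ + 1 + N) ^ j * Real.exp (-(1 * N)))) := by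
        apply Finset.sum_le_sum
        intro l hl
        rw [Finset.mem_range] at hl
        rw [norm_mul, norm_pow]
        have h1 := hK y l (by omega) m' b' n
        have h2 : ‖u - s‖ ^ l ≤ (‖u‖ + 1 + N) ^ j :=
          (pow_le_pow_left₀ (norm_nonneg _) hus l).trans
            (pow_le_pow_right₀ (by have := norm_nonneg u; have : (0:ℝ) ≤ N := Nat.cast_nonneg N; linarith) (by omega))
        have h3 : Real.exp (Real.pi * (m' + n)) ≤ Real.exp (Real.pi * (m + n)) * Real.exp (-(1 * N)) := by
          rw [← Real.exp_add]
          apply Real.exp_le_exp.2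
          have := Real.pi_gt_three
          have : (0:ℝ) ≤ N := Nat.cast_nonneg N
          nlinarith
        calc _ ≤ (K * (Real.exp (Real.pi * (m + n)) * Real.exp (-(1 * N)))) * (‖u‖ + 1 + N) ^ j := by
              gcongr
              exact h1.trans (by gcongr)
          _ = _ := by ring
      _ = _ := by simp; ring
  have lim : Tendsto (fun N : ℕ => (K * Real.exp (Real.pi * (m + n)) * (j + 1)) *
      ((‖u‖ + 1 + N) ^ j * Real.exp (-(1 * N)))) atTop (𝓝 0) := by
    have h1 := Real.tendsto_pow_mul_exp_neg_atTop_nhds_zero j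
    have h2 : Tendsto (fun N : ℕ => ‖u‖ + 1 + (N : ℝ)) atTop atTop :=
      tendsto_atTop_add_const_left _ _ tendsto_natCast_atTop_atTop
    have h3 := ((h1.comp h2).mul_const (Real.exp (‖u‖ + 1))).const_mul (K * Real.exp (Real.pi * (m + n)) * (j + 1))
    simp only [zero_mul, mul_zero] at h3
    refine h3.congr fun N => ?_
    simp only [Function.comp_apply]
    congr 1
    rw [mul_assoc, ← Real.exp_add]
    congr 2
    ring
  exact le_antisymm (ge_of_tendsto' lim bd) (norm_nonneg _)

lemma AD.c_cusp [Finite ι] (h : AD j Φ) (ha : FEx Φ a) (x : ι) (i : ℕ) (m : ℤ) : a x i m 0 0 = 0 := by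
  have hmem : ∀ (τ : ℂ) (t : ℝ), 0 < τ.im → 0 < t → (τ, (0:ℂ), (t * I : ℂ)) ∈ DD := by
    intro τ t h1 h2
    refine ⟨h1, ?_⟩
    simp; positivity
  have key : ∀ τ : ℂ, 0 < τ.im → HasSum (fun m => a x i m 0 0 * ex m τ) 0 := by
    intro τ hτ
    have hs := (ha x i _ _ _ (hmem τ 1 hτ one_pos)).summable.norm
    set g : ℤ × ℤ × ℤ → ℂ := fun p => if p.2 = (0, 0) then a x i p.1 0 0 * ex p.1 τ else 0 with hg
    have ez : ∀ b, ex b 0 = 1 := by intro b; simp [ex]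
    have lim := tendsto_tsum_of_dominated_convergence (𝓕 := atTop)
      (f := fun (t : ℝ) (p : ℤ × ℤ × ℤ) => a x i p.1 p.2.1 p.2.2 * mon p τ 0 (t * I)) (g := g) hs
      (by
        rintro ⟨m, b, n⟩
        by_cases hn : n = 0
        · by_cases hb : b = 0
          · subst hn hb
            refine tendsto_const_nhds.congr fun t => ?_
            simp [g, mon, ex]
          · refine tendsto_const_nhds.congr fun t => ?_
            simp [g, hb, h.koecher ha x i m b n (Or.inr ⟨hn, hb⟩)]
        · by_cases hn' : n < 0
          · refine tendsto_const_nhds.congr fun t => ?_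
            simp [g, hn, h.koecher ha x i m b n (Or.inl hn')]
          · have : Tendsto (fun t : ℝ => ex n (t * I)) atTop (𝓝 0) := by
              rw [tendsto_zero_iff_norm_tendsto_zero]
              simp only [ex_norm]
              have hp : 0 < Real.pi * n := by
                have : (0:ℝ) < n := by exact_mod_cast (by omega : 0 < n)
                positivity
              refine Real.tendsto_exp_neg_atTop_nhds_zero.comp ?_
              simpa using tendsto_id.const_mul_atTop hp
            have := this.const_mul (a x i m b n * ex m τ)
            simp only [g, Prod.mk.injEq, hn, and_false, if_false]
            rw [mul_zero] at this
            refine this.congr fun t => ?_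
            simp [mon, ez, mul_assoc])
      (by
        filter_upwards [eventually_ge_atTop 1] with t ht
        rintro ⟨m, b, n⟩
        by_cases hn : n < 0
        · simp [h.koecher ha x i m b n (Or.inl hn)]
        · simp only [norm_mul, mon, ex_norm]
          have : (0:ℝ) ≤ n := by exact_mod_cast (by omega : 0 ≤ n)
          gcongr
          simpa using ht)
    have e1 : ∀ᶠ t : ℝ in atTop, ∑' p : ℤ × ℤ × ℤ, a x i p.1 p.2.1 p.2.2 * mon p τ 0 (t * I) = Φ x i (τ, 0, t * I) := by
      filter_upwards [eventually_gt_atTop 0] with t ht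
      exact (ha x i _ _ _ (hmem τ t hτ ht)).tsum_eq
    have e2 := tendsto_nhds_unique (lim.congr' e1) (h.cusp x i τ hτ)
    have hgs : Summable g := by
      refine Summable.of_norm (Summable.of_nonneg_of_le (fun _ => norm_nonneg _) (fun p => ?_) hs)
      obtain ⟨m, b, n⟩ := p
      by_cases hq : (b, n) = ((0:ℤ), (0:ℤ))
      · simp only [Prod.mk.injEq] at hq
        obtain ⟨rfl, rfl⟩ := hq
        simp [g, mon, ex]
      · simp only [g, hq, if_false, norm_zero]; positivity
    have hG := hgs.hasSum
    rw [e2] at hG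
    have inj : Function.Injective fun m : ℤ => ((m, 0, 0) : ℤ × ℤ × ℤ) := fun m m' hm => by simpa using hm
    rw [← inj.hasSum_iff] at hG
    · simpa [g, Function.comp_def] using hG
    · rintro ⟨m, b, n⟩ hp
      simp only [g]
      rw [if_neg]
      intro hq
      apply hp
      simp only [Prod.mk.injEq] at hq
      exact ⟨m, by simp [hq.1, hq.2]⟩
  refine uniq1' (fun m => a x i m 0 0) 1 ?_ ?_ m
  · exact (key _ (by simp)).summable
  · intro τ hτ
    exact (key τ (by rw [hτ]; exact one_pos)).tsum_eq

lemma AD.c_supp [Finite ι] (h : AD j Φ) (ha : FEx Φ a) (x : ι) (i : ℕ) (m b n : ℤ) (hx : a x i m b n ≠ 0) :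
    1 ≤ m ∧ 1 ≤ n := by
  have hn : ∀ x i m b n, a x i m b n ≠ 0 → 1 ≤ n := by
    intro x i m b n hx
    by_contra hc
    rcases lt_trichotomy n 0 with hn | hn | hn
    · exact hx (h.koecher ha x i m b n (Or.inl hn))
    · by_cases hb : b = 0
      · subst hn hb
        exact hx (h.c_cusp ha x i m)
      · exact hx (h.koecher ha x i m b n (Or.inr ⟨hn, hb⟩))
    · omega
  refine ⟨?_, hn x i m b n hx⟩
  have hi : i ≤ j := by by_contra hc; exact hx (h.c_deg ha _ _ _ _ _ (by omega))
  obtain ⟨y, hy⟩ := h.c_swap ha x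
  have := hy (j - i) (by omega) m b n
  rw [show j - (j - i) = i by omega] at this
  rw [← this] at hx
  exact hn _ _ _ _ _ hx

lemma AD.c_bb [Finite ι] (h : AD j Φ) (ha : FEx Φ a) {x : ι} {i : ℕ} {m b n : ℤ} (hx : a x i m b n ≠ 0) :
    -(m + n) ≤ b ∧ b ≤ m + n := by
  have hi : i ≤ j := by by_contra hc; exact hx (h.c_deg ha _ _ _ _ _ (by omega))
  have sh : ∀ s, 1 ≤ m + s * b + s ^ 2 * n := by
    intro s
    obtain ⟨y, hy⟩ := h.c_shiftP ha x s
    by_contra hc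
    have h0 : cpol j a y (m + s * b + s ^ 2 * n) (b + 2 * s * n) n = 0 := by
      have : ∀ i, a y i (m + s * b + s ^ 2 * n) (b + 2 * s * n) n = 0 := by
        intro i
        by_contra hd
        exact hc (h.c_supp ha _ _ _ _ _ hd).1
      simp [cpol, this]
    rw [hy] at h0
    have h1 : cpol j a x m b n = 0 := by
      have := congrArg (fun p => p.comp (Polynomial.X - Polynomial.C (s : ℂ))) h0
      simpa [Polynomial.comp_assoc] using this
    have := CD.cpol_coeff (j := j) (a := a) x m b n i
    rw [h1, if_pos (by omega)] at this
    exact hx (by simpa using this.symm)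
  have h1 := sh 1
  have h2 := sh (-1)
  constructor <;> linarith
end

lemma lead (α : ℕ → ℂ) (f : ℂ → ℂ) (K : ℕ) (hf : ∀ z, HasSum (fun k => α k * z ^ k) (f z))
    (h0 : ∀ k < K, α k = 0) : Tendsto (fun z => f z / z ^ K) (𝓝[≠] 0) (𝓝 (α K)) := by
  have hs1 : Summable fun k => ‖α (k + K)‖ := by
    have := (hf 1).summable.norm
    simp only [one_pow, mul_one] at this
    exact (summable_nat_add_iff (f := fun k => ‖α k‖) K).2 this
  have hc : ContinuousOn (fun z : ℂ => ∑' k, α (k + K) * z ^ k) (Metric.closedBall 0 1) := by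
    refine continuousOn_tsum (u := fun k => ‖α (k + K)‖) (fun k => by fun_prop) hs1 ?_
    intro k z hz
    rw [norm_mul, norm_pow]
    have : ‖z‖ ≤ 1 := by simpa using hz
    exact mul_le_of_le_one_right (norm_nonneg _) (pow_le_one₀ (norm_nonneg _) this)
  have hc0 := (hc.continuousAt (Metric.closedBall_mem_nhds 0 one_pos)).tendsto
  have e0 : ∑' k, α (k + K) * (0 : ℂ) ^ k = α K := by
    rw [tsum_eq_single 0]
    · simp
    · intro k hk; simp [hk]
  rw [e0] at hc0
  refine (hc0.mono_left nhdsWithin_le_nhds).congr' ?_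
  filter_upwards [self_mem_nhdsWithin] with z hz
  have hz : z ≠ 0 := hz
  have h1 := (hf z).summable.sum_add_tsum_nat_add K
  rw [(hf z).tsum_eq, Finset.sum_eq_zero (fun k hk => by rw [h0 k (Finset.mem_range.1 hk)]; ring), zero_add] at h1
  rw [← h1, eq_div_iff (pow_ne_zero _ hz), ← tsum_mul_right]
  exact tsum_congr fun k => by ring

section
variable {ι : Type} {j : ℕ} {Φ : ι → ℕ → ℂ × ℂ × ℂ → ℂ} {a : ι → ℕ → ℤ → ℤ → ℤ → ℂ}

def cct (a : ι → ℕ → ℤ → ℤ → ℤ → ℂ) (x : ι) (i : ℕ) (m : ℤ) (z σ : ℂ) (q : ℤ × ℤ) : ℂ :=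
  a x i m q.1 q.2 * (ex q.1 z * ex q.2 σ)

def cc (a : ι → ℕ → ℤ → ℤ → ℤ → ℂ) (x : ι) (i : ℕ) (m : ℤ) (z σ : ℂ) : ℂ :=
  ∑' q : ℤ × ℤ, cct a x i m z σ q

def Dk (a : ι → ℕ → ℤ → ℤ → ℤ → ℂ) (x : ι) (i k : ℕ) (m : ℤ) (σ : ℂ) : ℂ :=
  ∑' q : ℤ × ℤ, (q.1 : ℂ) ^ k * a x i m q.1 q.2 * ex q.2 σ

lemma ex_ne (n : ℤ) (τ : ℂ) : ex n τ ≠ 0 := Complex.exp_ne_zero _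

lemma mem_DD_big (z σ : ℂ) (hσ : 0 < σ.im) : ∀ᶠ T : ℝ in atTop, ∀ τ : ℂ, τ.im = T → (τ, z, σ) ∈ DD := by
  filter_upwards [eventually_gt_atTop 0, eventually_gt_atTop (z.im ^ 2 / σ.im)] with T h1 h2 τ hτ
  rw [div_lt_iff₀ hσ] at h2
  refine ⟨by simpa [hτ] using h1, by simpa [hτ] using h2⟩

lemma FEx.cc_summ (ha : FEx Φ a) (x : ι) (i : ℕ) (m : ℤ) (z σ : ℂ) (hσ : 0 < σ.im) :
    Summable (cct a x i m z σ) := by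
  obtain ⟨T, hT⟩ := (mem_DD_big z σ hσ).exists
  have := (ha x i _ _ _ (hT (T * I) (by simp))).summable.prod_factor m
  have := this.mul_left (ex m (T * I))⁻¹
  refine this.congr fun q => ?_
  have := ex_ne m (T * I)
  simp only [mon, cct]
  field_simp

lemma FEx.hasSum_cc (ha : FEx Φ a) (x : ι) (i : ℕ) (τ z σ : ℂ) (h : (τ, z, σ) ∈ DD) :
    HasSum (fun m => cc a x i m z σ * ex m τ) (Φ x i (τ, z, σ)) := by
  refine (ha x i τ z σ h).prod_fiberwise (fun m => ?_)
  have := (ha.cc_summ x i m z σ (DD_pos h)).hasSum.mul_right (ex m τ)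
  refine this.congr_fun fun q => ?_
  simp only [mon, cct]; ring

lemma AD.inv_cc (h : AD j Φ) (ha : FEx Φ a) (x : ι) : ∃ y, ∀ i ≤ j, ∀ (m : ℤ) (z σ : ℂ), 0 < σ.im →
    ex m (-(z ^ 2 / σ)) * cc a x i m (z / σ) (-1 / σ) =
    σ ^ 2 * ∑ l ∈ Finset.range (i + 1), ((j - l).choose (i - l) : ℂ) * z ^ (i - l) * σ ^ l * cc a y l m z σ := by
  obtain ⟨y, hy⟩ := h.inv x
  refine ⟨y, fun i hi m z σ hσ => ?_⟩
  have him : 0 < (-1 / σ).im := by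
    have h0 : σ ≠ 0 := by rintro rfl; simp at hσ
    rw [neg_div, one_div, Complex.neg_im, Complex.inv_im, neg_div, neg_neg]
    exact div_pos hσ (Complex.normSq_pos.2 h0)
  obtain ⟨T, hT1, hT2⟩ := ((mem_DD_big z σ hσ).and
    ((tendsto_atTop_add_const_right atTop (-(z ^ 2 / σ).im) tendsto_id).eventually (mem_DD_big (z / σ) (-1 / σ) him))).exists
  have main : ∀ τ : ℂ, τ.im = T → HasSum (fun m => (ex m (-(z ^ 2 / σ)) * cc a x i m (z / σ) (-1 / σ) -
    σ ^ 2 * ∑ l ∈ Finset.range (i + 1), ((j - l).choose (i - l) : ℂ) * z ^ (i - l) * σ ^ l * cc a y l m z σ) * ex m τ) 0 := by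
    intro τ hτ
    have h1 := ha.hasSum_cc x i (τ - z ^ 2 / σ) (z / σ) (-1 / σ) (hT2 _ (by simp [hτ]; ring))
    have h2 := (hasSum_sum (s := Finset.range (i + 1)) fun l _ => (ha.hasSum_cc y l τ z σ (hT1 τ hτ)).mul_left
      (((j - l).choose (i - l) : ℂ) * z ^ (i - l) * σ ^ l)).mul_left (σ ^ 2)
    rw [← hy i hi τ z σ (hT1 τ hτ)] at h2
    have h3 := h1.sub h2
    rw [sub_self] at h3
    refine h3.congr_fun fun m => ?_
    rw [sub_mul, sub_eq_add_neg τ, ex_add]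
    congr 1
    · ring
    · rw [mul_assoc, Finset.sum_mul]
      congr 1
      exact Finset.sum_congr rfl fun l _ => by ring
  refine sub_eq_zero.1 (uniq1' (fun m => (ex m (-(z ^ 2 / σ)) * cc a x i m (z / σ) (-1 / σ) -
    σ ^ 2 * ∑ l ∈ Finset.range (i + 1), ((j - l).choose (i - l) : ℂ) * z ^ (i - l) * σ ^ l * cc a y l m z σ)) T
    (main _ (by simp)).summable (fun τ hτ => (main τ hτ).tsum_eq) m)

set_option maxHeartbeats 1000000 in
lemma FEx.dbl (ha : FEx Φ a) (x : ι) (i : ℕ) (m : ℤ) (z σ : ℂ) (hσ : 0 < σ.im) :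
    Summable fun p : (ℤ × ℤ) × ℕ => a x i m p.1.1 p.1.2 * ex p.1.2 σ * ((Real.pi * I * p.1.1 * z) ^ p.2 / (p.2.factorial : ℂ)) := by
  apply Summable.of_norm
  have hex : ∀ r : ℝ, HasSum (fun k : ℕ => r ^ k / (k.factorial : ℝ)) (Real.exp r) := by
    intro r
    have := NormedSpace.expSeries_div_hasSum_exp r
    rwa [← Real.exp_eq_exp_ℝ] at this
  have e : ∀ p : (ℤ × ℤ) × ℕ, ‖a x i m p.1.1 p.1.2 * ex p.1.2 σ * ((Real.pi * I * p.1.1 * z) ^ p.2 / (p.2.factorial : ℂ))‖ =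
      ‖a x i m p.1.1 p.1.2 * ex p.1.2 σ‖ * ((Real.pi * |(p.1.1 : ℝ)| * ‖z‖) ^ p.2 / (p.2.factorial : ℝ)) := by
    intro p
    rw [norm_mul _ (_ / _), norm_div, norm_pow]
    simp [abs_of_pos Real.pi_pos]
  rw [summable_congr e]
  clear e
  have hnn : ∀ p : (ℤ × ℤ) × ℕ, 0 ≤ ‖a x i m p.1.1 p.1.2 * ex p.1.2 σ‖ * ((Real.pi * |(p.1.1 : ℝ)| * ‖z‖) ^ p.2 / (p.2.factorial : ℝ)) := by
    intro p
    have := Real.pi_pos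
    exact mul_nonneg (norm_nonneg _) (div_nonneg (pow_nonneg (mul_nonneg (mul_nonneg this.le (abs_nonneg _)) (norm_nonneg _)) _) (Nat.cast_nonneg _))
  refine (summable_prod_of_nonneg (f := fun p : (ℤ × ℤ) × ℕ => ‖a x i m p.1.1 p.1.2 * ex p.1.2 σ‖ * ((Real.pi * |(p.1.1 : ℝ)| * ‖z‖) ^ p.2 / (p.2.factorial : ℝ))) hnn).2
    ⟨fun q => ?_, ?_⟩
  · dsimp only
    exact (hex (Real.pi * |(q.1 : ℝ)| * ‖z‖)).summable.mul_left ‖a x i m q.1 q.2 * ex q.2 σ‖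
  have e2 : (fun q : ℤ × ℤ => ∑' k : ℕ, ‖a x i m q.1 q.2 * ex q.2 σ‖ * ((Real.pi * |(q.1 : ℝ)| * ‖z‖) ^ k / (k.factorial : ℝ))) =
      fun q : ℤ × ℤ => ‖a x i m q.1 q.2 * ex q.2 σ‖ * Real.exp (Real.pi * |(q.1 : ℝ)| * ‖z‖) := by
    funext q
    rw [tsum_mul_left, (hex _).tsum_eq]
  show Summable (fun q : ℤ × ℤ => ∑' k : ℕ, ‖a x i m q.1 q.2 * ex q.2 σ‖ * ((Real.pi * |(q.1 : ℝ)| * ‖z‖) ^ k / (k.factorial : ℝ)))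
  rw [e2]
  have s1 := (ha.cc_summ x i m (‖z‖ * I) σ hσ).norm
  have s2 := (ha.cc_summ x i m (-‖z‖ * I) σ hσ).norm
  refine Summable.of_nonneg_of_le (fun q => by positivity) (fun q => ?_) (s1.add s2)
  simp only [cct, norm_mul, ex_norm]
  have e1 : Real.exp (Real.pi * |(q.1 : ℝ)| * ‖z‖) ≤ Real.exp (-(Real.pi * q.1 * ((‖z‖ : ℂ) * I).im)) +
      Real.exp (-(Real.pi * q.1 * (-(‖z‖ : ℂ) * I).im)) := by
    rcases abs_cases (q.1 : ℝ) with ⟨h, _⟩ | ⟨h, _⟩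
    · rw [h]
      refine le_add_of_nonneg_of_le (Real.exp_pos _).le (le_of_eq ?_)
      simp
    · rw [h]
      refine le_add_of_le_of_nonneg (le_of_eq ?_) (Real.exp_pos _).le
      simp
  have := mul_le_mul_of_nonneg_left e1 (by positivity : 0 ≤ ‖a x i m q.1 q.2‖ * Real.exp (-(Real.pi * q.2 * σ.im)))
  linarith

lemma FEx.Dk_summ (ha : FEx Φ a) (x : ι) (i k : ℕ) (m : ℤ) (σ : ℂ) (hσ : 0 < σ.im) :
    Summable fun q : ℤ × ℤ => (q.1 : ℂ) ^ k * a x i m q.1 q.2 * ex q.2 σ := by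
  have h := (ha.dbl x i m 1 σ hσ).comp_injective (i := fun q : ℤ × ℤ => (q, k)) (fun q q' hq => by simpa using hq)
  have := h.mul_left (((Real.pi * I) ^ k / (k.factorial : ℂ)))⁻¹
  refine this.congr fun q => ?_
  have h1 : (Real.pi * I : ℂ) ≠ 0 := by simp [Real.pi_ne_zero]
  have h2 : (k.factorial : ℂ) ≠ 0 := by exact_mod_cast k.factorial_ne_zero
  simp only [Function.comp_apply, mul_one, mul_pow (Real.pi * I : ℂ)]
  have h3 := pow_ne_zero k h1
  generalize (Real.pi * I : ℂ) ^ k = A at *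
  field_simp

lemma FEx.cc_taylor (ha : FEx Φ a) (x : ι) (i : ℕ) (m : ℤ) (z σ : ℂ) (hσ : 0 < σ.im) :
    HasSum (fun k : ℕ => ((Real.pi * I) ^ k / (k.factorial : ℂ) * Dk a x i k m σ) * z ^ k) (cc a x i m z σ) := by
  have hd := ha.dbl x i m z σ hσ
  have h1 : HasSum (fun p : (ℤ × ℤ) × ℕ => a x i m p.1.1 p.1.2 * ex p.1.2 σ * ((Real.pi * I * p.1.1 * z) ^ p.2 / (p.2.factorial : ℂ)))
      (cc a x i m z σ) := by
    have := hd.hasSum.prod_fiberwise (g := cct a x i m z σ) (fun q => by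
      have := (NormedSpace.expSeries_div_hasSum_exp (Real.pi * I * q.1 * z : ℂ)).mul_left (a x i m q.1 q.2 * ex q.2 σ)
      rw [← Complex.exp_eq_exp_ℂ] at this
      have e : cct a x i m z σ q = a x i m q.1 q.2 * ex q.2 σ * Complex.exp (Real.pi * I * q.1 * z) := by
        simp only [cct, ex]; ring
      rw [e]; exact this)
    have e : cc a x i m z σ = _ := this.tsum_eq
    rw [e]
    exact hd.hasSum
  have h2 := (Equiv.prodComm ℕ (ℤ × ℤ)).hasSum_iff.2 h1
  refine h2.prod_fiberwise (fun k => ?_)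
  have := (ha.Dk_summ x i k m σ hσ).hasSum.mul_left ((Real.pi * I) ^ k / (k.factorial : ℂ) * z ^ k)
  have e : (Real.pi * I) ^ k / (k.factorial : ℂ) * z ^ k * ∑' q : ℤ × ℤ, (q.1 : ℂ) ^ k * a x i m q.1 q.2 * ex q.2 σ =
    ((Real.pi * I) ^ k / (k.factorial : ℂ) * Dk a x i k m σ) * z ^ k := by rw [Dk]; ring
  rw [e] at this
  refine this.congr_fun fun q => ?_
  simp only [Function.comp_apply, Equiv.prodComm_apply, Prod.swap_prod_mk, mul_pow]
  ring

lemma AD.Dk_eq [Finite ι] (h : AD j Φ) (ha : FEx Φ a) (x : ι) (i k : ℕ) (m : ℤ) (σ : ℂ) (hσ : 0 < σ.im) :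
    HasSum (fun n => cmom a x i k m n * ex n σ) (Dk a x i k m σ) := by
  have h1 := (Equiv.prodComm ℤ ℤ).hasSum_iff.2 (ha.Dk_summ x i k m σ hσ).hasSum
  refine h1.prod_fiberwise (fun n => ?_)
  rw [cmom, Finset.sum_mul]
  apply hasSum_sum_of_ne_finset_zero
  intro b hb
  simp only [Function.comp_apply, Equiv.prodComm_apply, Prod.swap_prod_mk]
  have : a x i m b n = 0 := by
    by_contra hc
    have := h.c_bb ha hc
    exact hb (Finset.mem_Icc.2 this)
  rw [this]; ring

lemma AD.c_ml [Finite ι] (h : AD j Φ) (ha : FEx Φ a) (i k : ℕ) (m M : ℤ) (hi : i ≤ j) (hM : 1 ≤ M)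
    (hw : (2 + i + k : ℤ) ≤ 5 * M)
    (H : ∀ l k' : ℕ, l ≤ i → k' + (i - l) ≤ k → ¬ (l = i ∧ k' = k) → ∀ x n, cmom a x l k' m n = 0)
    (H0 : ∀ x n, n < M → cmom a x i k m n = 0) (x : ι) (n : ℤ) : cmom a x i k m n = 0 := by
  have HD : ∀ l k' : ℕ, l ≤ i → k' + (i - l) ≤ k → ¬ (l = i ∧ k' = k) → ∀ x σ, 0 < σ.im → Dk a x l k' m σ = 0 := by
    intro l k' h1 h2 h3 x σ hσ
    rw [← (h.Dk_eq ha x l k' m σ hσ).tsum_eq]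
    simp [H l k' h1 h2 h3]
  have gge : ∀ x σ, 0 < σ.im → gg (fun n => cmom a x i k m n) σ = Dk a x i k m σ :=
    fun x σ hσ => (h.Dk_eq ha x i k m σ hσ).tsum_eq
  refine onevar (fun x n => cmom a x i k m n) (2 + i + k) M hM (by push_cast; exact hw)
    (fun x τ hτ => (h.Dk_eq ha x i k m τ hτ).summable) (fun x n hn => H0 x n hn) ?_ ?_ x n
  · intro x
    obtain ⟨y, hy⟩ := h.c_tr2 ha x
    refine ⟨y, fun τ _ => tsum_congr fun n => ?_⟩
    simp only [cmom, hy, ex_add, ex_one, Finset.sum_mul]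
    exact Finset.sum_congr rfl fun b _ => by ring
  · intro x
    obtain ⟨y, hy⟩ := h.inv_cc ha x
    refine ⟨y, fun σ hσ => ?_⟩
    have h0 : σ ≠ 0 := by rintro rfl; simp at hσ
    have him : 0 < (-1 / σ).im := by
      rw [neg_div, one_div, Complex.neg_im, Complex.inv_im, neg_div, neg_neg]
      exact div_pos hσ (Complex.normSq_pos.2 h0)
    rw [gge _ _ him, gge _ _ hσ]
    set C : ℂ := (Real.pi * I) ^ k / (k.factorial : ℂ) with hC
    have hC0 : C ≠ 0 := by
      have h1 : (Real.pi * I : ℂ) ≠ 0 := by simp [Real.pi_ne_zero]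
      have h2 : (k.factorial : ℂ) ≠ 0 := by exact_mod_cast k.factorial_ne_zero
      exact div_ne_zero (pow_ne_zero _ h1) h2
    have L1 := lead (fun k => ((Real.pi * I) ^ k / (k.factorial : ℂ) * Dk a x i k m (-1 / σ)) / σ ^ k)
      (fun z => cc a x i m (z / σ) (-1 / σ)) k (fun z => by
        refine (ha.cc_taylor x i m (z / σ) (-1 / σ) him).congr_fun fun k => ?_
        rw [div_pow]; ring) (fun k' hk' => by
        rw [HD i k' le_rfl (by omega) (by omega) x _ him]; simp)
    have L0 : Tendsto (fun z : ℂ => ex m (-(z ^ 2 / σ))) (𝓝[≠] 0) (𝓝 1) := by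
      have : Continuous fun z : ℂ => ex m (-(z ^ 2 / σ)) := by unfold ex; fun_prop
      have := this.tendsto 0
      simp only [ne_eq, OfNat.ofNat_ne_zero, not_false_eq_true, zero_pow, zero_div, neg_zero] at this
      rw [show ex m 0 = 1 by simp [ex]] at this
      exact this.mono_left nhdsWithin_le_nhds
    have L2 := L0.mul L1
    have R : ∀ l ∈ Finset.range (i + 1), Tendsto (fun z : ℂ => ((j - l).choose (i - l) : ℂ) * σ ^ l *
        (z ^ (i - l) * cc a y l m z σ / z ^ k)) (𝓝[≠] 0)
        (𝓝 (if l = i then σ ^ i * (C * Dk a y i k m σ) else 0)) := by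
      intro l hl
      rw [Finset.mem_range] at hl
      by_cases hli : l = i
      · subst hli
        have := lead _ (fun z => cc a y l m z σ) k (fun z => ha.cc_taylor y l m z σ hσ) (fun k' hk' => by
          rw [HD l k' le_rfl (by omega) (by omega) y _ hσ]; simp)
        have := this.const_mul (σ ^ l)
        simpa using this
      · rw [if_neg hli]
        have l1 := lead _ (fun z => cc a y l m z σ) (k + 1 - (i - l)) (fun z => ha.cc_taylor y l m z σ hσ) (fun k' hk' => by
          rw [HD l k' (by omega) (by omega) (by omega) y _ hσ]; simp)
        have l2 : Tendsto (fun z : ℂ => z ^ ((i - l) + (k + 1 - (i - l)) - k)) (𝓝[≠] 0) (𝓝 0) := by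
          have : Continuous fun z : ℂ => z ^ ((i - l) + (k + 1 - (i - l)) - k) := by fun_prop
          have := this.tendsto 0
          rw [zero_pow (by omega)] at this
          exact this.mono_left nhdsWithin_le_nhds
        have l3 := (l2.mul l1).const_mul (((j - l).choose (i - l) : ℂ) * σ ^ l)
        rw [zero_mul, mul_zero] at l3
        refine l3.congr' ?_
        filter_upwards [self_mem_nhdsWithin] with z hz
        have hz : z ≠ 0 := hz
        congr 1
        rw [mul_div_assoc', div_eq_div_iff (pow_ne_zero _ hz) (pow_ne_zero _ hz)]
        have : z ^ ((i - l) + (k + 1 - (i - l)) - k) * z ^ k = z ^ (i - l) * z ^ (k + 1 - (i - l)) := by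
          rw [← pow_add, ← pow_add]; congr 1; omega
        linear_combination (cc a y l m z σ) * this
    have R2 := (tendsto_finsetSum _ R).const_mul (σ ^ 2)
    have L3 : Tendsto (fun z : ℂ => σ ^ 2 * ∑ l ∈ Finset.range (i + 1), ((j - l).choose (i - l) : ℂ) * σ ^ l *
        (z ^ (i - l) * cc a y l m z σ / z ^ k)) (𝓝[≠] 0) (𝓝 (1 * (C * Dk a x i k m (-1 / σ) / σ ^ k))) := by
      refine L2.congr fun z => ?_
      rw [mul_div_assoc', hy i hi m z σ hσ, mul_div_assoc, Finset.sum_div]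
      congr 1
      exact Finset.sum_congr rfl fun l _ => by ring
    have E := tendsto_nhds_unique L3 R2
    rw [Finset.sum_ite_eq' , if_pos (by simp)] at E
    have hk := pow_ne_zero k h0
    rw [one_mul, div_eq_iff hk] at E
    apply mul_left_cancel₀ hC0
    rw [E]
    ring

theorem AD.cd [Finite ι] (h : AD j Φ) (ha : FEx Φ a) : CD j a where
  deg := h.c_deg ha
  shift := h.c_shiftP ha
  swap := h.c_swap ha
  zsh := h.c_trz ha
  supp := h.c_supp ha
  ml := h.c_ml ha

theorem AD.vanish [Finite ι] (h : AD j Φ) (hj : j ≤ 10) (x : ι) (i : ℕ) (τ z σ : ℂ) (hm : (τ, z, σ) ∈ DD) :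
    Φ x i (τ, z, σ) = 0 := by
  obtain ⟨a, ha⟩ := h.fex
  have hs := ha x i τ z σ hm
  rw [← hs.tsum_eq]
  simp [(h.cd ha).vanish hj]
end

lemma memH2_iff (τ : Fin 2 → Fin 2 → ℂ) : τ ∈ H2 ↔ τ 1 0 = τ 0 1 ∧ (τ 0 0, τ 0 1, τ 1 1) ∈ DD := by
  have e : (Matrix.of τ).IsSymm ↔ τ 1 0 = τ 0 1 := by
    constructor
    · intro h
      exact h.apply 0 1
    · intro h
      ext i j
      fin_cases i <;> fin_cases j <;> simp [h]
  simp only [H2, Set.mem_ofPred_eq, e, DD]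
  refine and_congr_right fun hs => ?_
  rw [Matrix.posDef_iff_dotProduct_mulVec]
  constructor
  · rintro ⟨-, h⟩
    have h1 := @h ![1, 0] (by simp)
    have h2 := @h ![-(τ 0 1).im, (τ 0 0).im] (by
      intro hc
      have := congrFun hc 1
      simp [dotProduct, mulVec, Fin.sum_univ_two] at this h1
      linarith)
    simp [dotProduct, mulVec, Fin.sum_univ_two, hs] at h1 h2
    refine ⟨h1, ?_⟩
    have : 0 < (τ 0 0).im * ((τ 0 0).im * (τ 1 1).im - (τ 0 1).im ^ 2) := by nlinarith
    have := (mul_pos_iff_of_pos_left h1).1 this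
    linarith
  · rintro ⟨h1, h2⟩
    refine ⟨?_, ?_⟩
    · ext i j
      fin_cases i <;> fin_cases j <;> simp [hs]
    · intro x hx
      simp [dotProduct, mulVec, Fin.sum_univ_two, hs]
      have h3 : x 0 ≠ 0 ∨ x 1 ≠ 0 := by
        by_contra hc
        push Not at hc
        exact hx (by ext i; fin_cases i <;> simp [hc])
      have : 0 < (τ 0 0).im * (x 0 * ((τ 0 0).im * x 0 + (τ 0 1).im * x 1) + x 1 * ((τ 0 1).im * x 0 + (τ 1 1).im * x 1)) := by
        have e : (τ 0 0).im * (x 0 * ((τ 0 0).im * x 0 + (τ 0 1).im * x 1) + x 1 * ((τ 0 1).im * x 0 + (τ 1 1).im * x 1)) =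
          ((τ 0 0).im * x 0 + (τ 0 1).im * x 1) ^ 2 + ((τ 0 0).im * (τ 1 1).im - (τ 0 1).im ^ 2) * x 1 ^ 2 := by ring
        rw [e]
        by_cases h4 : x 1 = 0
        · have h5 : x 0 ≠ 0 := by tauto
          rw [h4]
          have := mul_ne_zero h1.ne' h5
          have := sq_pos_of_ne_zero this
          simpa using this
        · have := sq_pos_of_ne_zero h4
          have := mul_pos (sub_pos.2 h2) this
          positivity
      exact (mul_pos_iff_of_pos_left h1).1 this

lemma qform {τ : Fin 2 → Fin 2 → ℂ} (h : τ ∈ H2) (v : Fin 2 → ℂ) (hv : v ≠ 0) :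
    0 < (star v ⬝ᵥ (Matrix.of τ *ᵥ v)).im := by
  obtain ⟨hs, h1, h2⟩ := (memH2_iff τ).1 h
  simp only at h1 h2
  have h3 : v 0 ≠ 0 ∨ v 1 ≠ 0 := by
    by_contra hc
    push Not at hc
    exact hv (by ext i; fin_cases i <;> simp [hc])
  have e : (τ 0 0).im * (star v ⬝ᵥ (Matrix.of τ *ᵥ v)).im = ((τ 0 0).im * (v 0).re + (τ 0 1).im * (v 1).re) ^ 2 +
    ((τ 0 0).im * (v 0).im + (τ 0 1).im * (v 1).im) ^ 2 +
    ((τ 0 0).im * (τ 1 1).im - (τ 0 1).im ^ 2) * ((v 1).re ^ 2 + (v 1).im ^ 2) := by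
    simp [dotProduct, mulVec, Fin.sum_univ_two, hs]
    ring
  refine (mul_pos_iff_of_pos_left h1).1 ?_
  rw [e]
  by_cases h4 : v 1 = 0
  · have h5 : v 0 ≠ 0 := by tauto
    rw [h4]
    have h6 : 0 < (v 0).re ^ 2 + (v 0).im ^ 2 := by
      have := Complex.normSq_pos.2 h5
      rw [Complex.normSq_apply] at this; nlinarith
    have := mul_pos (pow_pos h1 2) h6
    simp; nlinarith
  · have h6 : 0 < (v 1).re ^ 2 + (v 1).im ^ 2 := by
      have := Complex.normSq_pos.2 h4
      rw [Complex.normSq_apply] at this; nlinarith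
    have := mul_pos (sub_pos.2 h2) h6
    positivity

lemma memH2_of {τ : Fin 2 → Fin 2 → ℂ} (hs : τ 1 0 = τ 0 1)
    (h : ∀ v : Fin 2 → ℂ, v ≠ 0 → 0 < (star v ⬝ᵥ (Matrix.of τ *ᵥ v)).im) : τ ∈ H2 := by
  refine (memH2_iff τ).2 ⟨hs, ?_⟩
  have h1 := h ![1, 0] (by simp)
  have h2 := h ![-((τ 0 1).im : ℂ), ((τ 0 0).im : ℂ)] (by
      intro hc
      have := congrFun hc 1
      simp [dotProduct, mulVec, Fin.sum_univ_two] at this h1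
      linarith)
  simp [dotProduct, mulVec, Fin.sum_univ_two, hs] at h1 h2
  refine ⟨h1, ?_⟩
  have : 0 < (τ 0 0).im * ((τ 0 0).im * (τ 1 1).im - (τ 0 1).im ^ 2) := by nlinarith
  have := (mul_pos_iff_of_pos_left h1).1 this
  show (τ 0 1).im ^ 2 < (τ 0 0).im * (τ 1 1).im
  linarith

lemma blk_mul (γ δ : Matrix (Fin 4) (Fin 4) ℤ) (r s : Fin 2) :
    blk (γ * δ) r s = blk γ r 0 * blk δ 0 s + blk γ r 1 * blk δ 1 s := by
  ext i j
  simp only [blk, Matrix.of_apply, Matrix.add_apply, Matrix.mul_apply, Fin.sum_univ_four, Fin.sum_univ_two]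
  push_cast
  rw [← add_assoc]
  rfl

lemma blk_transpose (γ : Matrix (Fin 4) (Fin 4) ℤ) (r s : Fin 2) : blk γᵀ r s = (blk γ s r)ᵀ := by
  ext i j; rfl

lemma blk_J00 : blk J4 0 0 = 0 := by
  ext i j; fin_cases i <;> fin_cases j <;> simp [blk, J4]
lemma blk_J01 : blk J4 0 1 = 1 := by
  ext i j; fin_cases i <;> fin_cases j <;> simp [blk, J4]
lemma blk_J10 : blk J4 1 0 = -1 := by
  ext i j; fin_cases i <;> fin_cases j <;> simp [blk, J4]
lemma blk_J11 : blk J4 1 1 = 0 := by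
  ext i j; fin_cases i <;> fin_cases j <;> simp [blk, J4]

lemma sp_rel {γ : Matrix (Fin 4) (Fin 4) ℤ} (h : γ ∈ Sp4Z) (r s : Fin 2) :
    (blk γ 0 r)ᵀ * blk γ 1 s - (blk γ 1 r)ᵀ * blk γ 0 s = blk J4 r s := by
  have h' : γᵀ * J4 * γ = J4 := h
  conv_rhs => rw [← h']
  simp only [blk_mul, blk_transpose, blk_J00, blk_J01, blk_J10, blk_J11]
  simp
  abel

def num (γ : Matrix (Fin 4) (Fin 4) ℤ) (τ : Fin 2 → Fin 2 → ℂ) : Matrix (Fin 2) (Fin 2) ℂ :=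
  blk γ 0 0 * Matrix.of τ + blk γ 0 1

lemma blk_conj (γ : Matrix (Fin 4) (Fin 4) ℤ) (r s : Fin 2) : (blk γ r s)ᴴ = (blk γ r s)ᵀ := by
  ext i j; simp [blk]

lemma sp_rel2 {γ : Matrix (Fin 4) (Fin 4) ℤ} (h : γ ∈ Sp4Z) (t τ : Matrix (Fin 2) (Fin 2) ℂ) :
    (t * (blk γ 0 0)ᵀ + (blk γ 0 1)ᵀ) * (blk γ 1 0 * τ + blk γ 1 1) -
    (t * (blk γ 1 0)ᵀ + (blk γ 1 1)ᵀ) * (blk γ 0 0 * τ + blk γ 0 1) = t - τ := by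
  have h00 := sp_rel h 0 0
  have h01 := sp_rel h 0 1
  have h10 := sp_rel h 1 0
  have h11 := sp_rel h 1 1
  rw [blk_J00] at h00
  rw [blk_J01] at h01
  rw [blk_J10] at h10
  rw [blk_J11] at h11
  calc _ = t * ((blk γ 0 0)ᵀ * blk γ 1 0 - (blk γ 1 0)ᵀ * blk γ 0 0) * τ +
      t * ((blk γ 0 0)ᵀ * blk γ 1 1 - (blk γ 1 0)ᵀ * blk γ 0 1) +
      ((blk γ 0 1)ᵀ * blk γ 1 0 - (blk γ 1 1)ᵀ * blk γ 0 0) * τ +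
      ((blk γ 0 1)ᵀ * blk γ 1 1 - (blk γ 1 1)ᵀ * blk γ 0 1) := by noncomm_ring
    _ = _ := by rw [h00, h01, h10, h11]; simp [sub_eq_add_neg]

lemma num_sym {γ : Matrix (Fin 4) (Fin 4) ℤ} (h : γ ∈ Sp4Z) {τ : Fin 2 → Fin 2 → ℂ} (hτ : τ ∈ H2) :
    (num γ τ)ᵀ * den γ τ = (den γ τ)ᵀ * num γ τ := by
  have hs : (Matrix.of τ)ᵀ = Matrix.of τ := hτ.1
  have := sp_rel2 h (Matrix.of τ) (Matrix.of τ)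
  rw [sub_self, sub_eq_zero] at this
  simp only [num, den, Matrix.transpose_add, Matrix.transpose_mul, hs]
  exact this

lemma num_herm {γ : Matrix (Fin 4) (Fin 4) ℤ} (h : γ ∈ Sp4Z) (τ : Fin 2 → Fin 2 → ℂ) :
    (num γ τ)ᴴ * den γ τ - (den γ τ)ᴴ * num γ τ = (Matrix.of τ)ᴴ - Matrix.of τ := by
  have := sp_rel2 h (Matrix.of τ)ᴴ (Matrix.of τ)
  simp only [num, den, Matrix.conjTranspose_add, Matrix.conjTranspose_mul, blk_conj]
  exact this

lemma herm_im (M : Matrix (Fin 2) (Fin 2) ℂ) (v : Fin 2 → ℂ) :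
    star v ⬝ᵥ ((Mᴴ - M) *ᵥ v) = -(2 * I * (star v ⬝ᵥ (M *ᵥ v)).im) := by
  apply Complex.ext <;> simp [dotProduct, mulVec, Fin.sum_univ_two] <;> ring

lemma den_det {γ : Matrix (Fin 4) (Fin 4) ℤ} (h : γ ∈ Sp4Z) {τ : Fin 2 → Fin 2 → ℂ} (hτ : τ ∈ H2) :
    (den γ τ).det ≠ 0 := by
  intro hc
  obtain ⟨v, hv, hv0⟩ := Matrix.exists_mulVec_eq_zero_iff.2 hc
  have h1 := qform hτ v hv
  have h2 := herm_im (Matrix.of τ) v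
  rw [← num_herm h, Matrix.sub_mulVec, ← Matrix.mulVec_mulVec, ← Matrix.mulVec_mulVec, hv0, Matrix.mulVec_zero, zero_sub,
    dotProduct_neg, Matrix.dotProduct_mulVec, ← Matrix.star_mulVec, hv0] at h2
  rw [star_zero, zero_dotProduct, neg_zero] at h2
  have h3 := mul_eq_zero.1 (neg_eq_zero.1 h2.symm)
  rcases h3 with h3 | h3
  · simp at h3
  · exact h1.ne' (Complex.ofReal_injective h3)

lemma moeb_eq (γ : Matrix (Fin 4) (Fin 4) ℤ) (τ : Fin 2 → Fin 2 → ℂ) :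
    Matrix.of (moeb γ τ) = num γ τ * (den γ τ)⁻¹ := rfl

lemma moeb_den {γ : Matrix (Fin 4) (Fin 4) ℤ} (h : γ ∈ Sp4Z) {τ : Fin 2 → Fin 2 → ℂ} (hτ : τ ∈ H2) :
    Matrix.of (moeb γ τ) * den γ τ = num γ τ := by
  rw [moeb_eq, Matrix.mul_assoc, Matrix.nonsing_inv_mul _ (den_det h hτ).isUnit, Matrix.mul_one]

lemma moeb_mem {γ : Matrix (Fin 4) (Fin 4) ℤ} (h : γ ∈ Sp4Z) {τ : Fin 2 → Fin 2 → ℂ} (hτ : τ ∈ H2) :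
    moeb γ τ ∈ H2 := by
  have hu := (den_det h hτ).isUnit
  have hmd := moeb_den h hτ
  have hsym : (Matrix.of (moeb γ τ))ᵀ = Matrix.of (moeb γ τ) := by
    have h1 := num_sym h hτ
    rw [← hmd, Matrix.transpose_mul] at h1
    have h2 : (den γ τ)ᵀ * ((Matrix.of (moeb γ τ))ᵀ * den γ τ) = (den γ τ)ᵀ * (Matrix.of (moeb γ τ) * den γ τ) := by
      rw [← h1, Matrix.mul_assoc]
    have hu' : IsUnit (den γ τ)ᵀ.det := by rwa [Matrix.det_transpose]
    have h3 := congrArg (fun M => ((den γ τ)ᵀ)⁻¹ * M * (den γ τ)⁻¹) h2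
    simp only [Matrix.nonsing_inv_mul_cancel_left _ _ hu', Matrix.mul_nonsing_inv_cancel_right _ _ hu] at h3
    exact h3
  refine memH2_of ?_ ?_
  · exact congrFun (congrFun hsym 0) 1
  · intro v hv
    obtain ⟨w, hwv⟩ : ∃ w, den γ τ *ᵥ w = v := ⟨(den γ τ)⁻¹ *ᵥ v, by
      rw [Matrix.mulVec_mulVec, Matrix.mul_nonsing_inv _ hu, Matrix.one_mulVec]⟩
    subst hwv
    have hw0 : w ≠ 0 := by
      rintro rfl; exact hv (Matrix.mulVec_zero _)
    set v := den γ τ *ᵥ w with hvw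
    have h1 := qform hτ w hw0
    have h2 := herm_im (Matrix.of τ) w
    have h3 := herm_im (Matrix.of (moeb γ τ)) v
    have h4 : star w ⬝ᵥ (((Matrix.of τ)ᴴ - Matrix.of τ) *ᵥ w) = star v ⬝ᵥ (((Matrix.of (moeb γ τ))ᴴ - Matrix.of (moeb γ τ)) *ᵥ v) := by
      rw [← num_herm h, ← hmd, Matrix.conjTranspose_mul, hvw, Matrix.star_mulVec, ← Matrix.dotProduct_mulVec,
        Matrix.mulVec_mulVec, Matrix.mulVec_mulVec]
      congr 2
      noncomm_ring
    rw [h2, h3] at h4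
    have h5 : (((star w ⬝ᵥ (Matrix.of τ *ᵥ w)).im : ℝ) : ℂ) = ((star v ⬝ᵥ (Matrix.of (moeb γ τ) *ᵥ v)).im : ℝ) := by
      have := neg_injective h4
      exact mul_left_cancel₀ (by simp) this
    have := Complex.ofReal_injective h5
    linarith

lemma den_mul {γ δ : Matrix (Fin 4) (Fin 4) ℤ} (hδ : δ ∈ Sp4Z) {τ : Fin 2 → Fin 2 → ℂ} (hτ : τ ∈ H2) :
    den (γ * δ) τ = den γ (moeb δ τ) * den δ τ := by
  have h := moeb_den hδ hτ
  rw [den.eq_1 γ, Matrix.add_mul, Matrix.mul_assoc, h, den.eq_1, den.eq_1, num, blk_mul, blk_mul]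
  noncomm_ring

lemma num_mul {γ δ : Matrix (Fin 4) (Fin 4) ℤ} (hδ : δ ∈ Sp4Z) {τ : Fin 2 → Fin 2 → ℂ} (hτ : τ ∈ H2) :
    num (γ * δ) τ = num γ (moeb δ τ) * den δ τ := by
  have h := moeb_den hδ hτ
  rw [num.eq_1 γ, Matrix.add_mul, Matrix.mul_assoc, h, num.eq_1, num.eq_1, den.eq_1, blk_mul, blk_mul]
  noncomm_ring

lemma sp_mul {γ δ : Matrix (Fin 4) (Fin 4) ℤ} (hγ : γ ∈ Sp4Z) (hδ : δ ∈ Sp4Z) : γ * δ ∈ Sp4Z := by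
  have h1 : γᵀ * J4 * γ = J4 := hγ
  have h2 : δᵀ * J4 * δ = J4 := hδ
  show (γ * δ)ᵀ * J4 * (γ * δ) = J4
  rw [Matrix.transpose_mul]
  calc _ = δᵀ * (γᵀ * J4 * γ) * δ := by noncomm_ring
    _ = _ := by rw [h1, h2]

lemma moeb_mul {γ δ : Matrix (Fin 4) (Fin 4) ℤ} (hδ : δ ∈ Sp4Z) {τ : Fin 2 → Fin 2 → ℂ} (hτ : τ ∈ H2) :
    moeb (γ * δ) τ = moeb γ (moeb δ τ) := by
  have h := moeb_eq (γ * δ) τ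
  rw [num_mul hδ hτ, den_mul hδ hτ, Matrix.mul_inv_rev, Matrix.mul_assoc,
    Matrix.mul_nonsing_inv_cancel_left _ _ (den_det hδ hτ).isUnit, ← moeb_eq] at h
  exact h

lemma J4_sq : J4 * J4 = -1 := by decide

lemma sp_inv {γ : Matrix (Fin 4) (Fin 4) ℤ} (hγ : γ ∈ Sp4Z) : ∃ δ ∈ Sp4Z, δ * γ = 1 ∧ γ * δ = 1 := by
  have h1 : γᵀ * J4 * γ = J4 := hγ
  have h2 : (-(J4 * γᵀ * J4)) * γ = 1 := by
    calc _ = -(J4 * (γᵀ * J4 * γ)) := by noncomm_ring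
      _ = _ := by rw [h1, J4_sq, neg_neg]
  have h3 : γ * (-(J4 * γᵀ * J4)) = 1 := mul_eq_one_comm.1 h2
  refine ⟨_, ?_, h2, h3⟩
  set δ := (-(J4 * γᵀ * J4))
  have h4 : δᵀ * γᵀ = 1 := by rw [← Matrix.transpose_mul, h3, Matrix.transpose_one]
  show δᵀ * J4 * δ = J4
  conv_lhs => rw [← h1]
  calc _ = (δᵀ * γᵀ) * J4 * (γ * δ) := by noncomm_ring
    _ = _ := by rw [h3, h4]; simp

/-- binary form attached to a vector -/
def EE (j : ℕ) (v : Fin (j + 1) → ℂ) (x y : ℂ) : ℂ := ∑ l : Fin (j + 1), v l * x ^ (j - (l : ℕ)) * y ^ (l : ℕ)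

lemma EE_hom (j : ℕ) (v : Fin (j + 1) → ℂ) (c x y : ℂ) : EE j v (c * x) (c * y) = c ^ j * EE j v x y := by
  rw [EE, EE, Finset.mul_sum]
  refine Finset.sum_congr rfl fun l _ => ?_
  rw [mul_pow, mul_pow]
  have : c ^ j = c ^ (j - (l : ℕ)) * c ^ (l : ℕ) := by
    rw [← pow_add]; congr 1; have := l.isLt; omega
  rw [this]; ring

lemma EE_inj (j : ℕ) (v w : Fin (j + 1) → ℂ) (h : ∀ y, EE j v 1 y = EE j w 1 y) : v = w := by
  set P : (Fin (j + 1) → ℂ) → Polynomial ℂ := fun v => ∑ l : Fin (j + 1), Polynomial.C (v l) * Polynomial.X ^ (l : ℕ)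
  have he : ∀ v y, (P v).eval y = EE j v 1 y := by
    intro v y
    simp [P, EE, Polynomial.eval_finsetSum]
  have hc : ∀ v (l : Fin (j + 1)), (P v).coeff l = v l := by
    intro v l
    simp only [P, Polynomial.finsetSum_coeff, Polynomial.coeff_C_mul, Polynomial.coeff_X_pow]
    rw [Finset.sum_eq_single l]
    · simp
    · intro b _ hb
      rw [if_neg (fun h => hb (Fin.ext h.symm)), mul_zero]
    · simp
  have : P v = P w := Polynomial.funext fun y => by rw [he, he, h]
  funext l
  rw [← hc v, ← hc w, this]

lemma symAct_eval1 (j : ℕ) (m : Matrix (Fin 2) (Fin 2) ℂ) (v : Fin (j + 1) → ℂ) (y : ℂ) :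
    EE j (symAct j m v) 1 y = EE j v (m 0 0 + m 1 0 * y) (m 0 1 + m 1 1 * y) := by
  simp only [EE, symAct, one_pow, mul_one, Finset.sum_mul]
  rw [Finset.sum_comm]
  refine Finset.sum_congr rfl fun l _ => ?_
  set Q : Polynomial ℂ := ((Polynomial.C (m 0 0) + Polynomial.C (m 1 0) * Polynomial.X) ^ (j - (l : ℕ)) *
    (Polynomial.C (m 0 1) + Polynomial.C (m 1 1) * Polynomial.X) ^ (l : ℕ)) with hQ
  have hdeg : Q.natDegree < j + 1 := by
    have h1 : ∀ a b : ℂ, (Polynomial.C a + Polynomial.C b * Polynomial.X : Polynomial ℂ).natDegree ≤ 1 := by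
      intro a b
      compute_degree
    have h2 : Q.natDegree ≤ (j - l) * 1 + l * 1 :=
      (Polynomial.natDegree_mul_le).trans (add_le_add
        (Polynomial.natDegree_pow_le.trans (Nat.mul_le_mul_left _ (h1 _ _)))
        (Polynomial.natDegree_pow_le.trans (Nat.mul_le_mul_left _ (h1 _ _))))
    have := l.isLt
    omega
  have he : Q.eval y = (m 0 0 + m 1 0 * y) ^ (j - (l : ℕ)) * (m 0 1 + m 1 1 * y) ^ (l : ℕ) := by
    simp [hQ]
  rw [Polynomial.eval_eq_sum_range' hdeg, Finset.sum_range] at he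
  rw [mul_assoc, ← he, Finset.mul_sum]
  refine Finset.sum_congr rfl fun i _ => ?_
  rw [symCoeff, ← hQ]; ring

lemma symAct_eval (j : ℕ) (m : Matrix (Fin 2) (Fin 2) ℂ) (v : Fin (j + 1) → ℂ) (x y : ℂ) :
    EE j (symAct j m v) x y = EE j v (m 0 0 * x + m 1 0 * y) (m 0 1 * x + m 1 1 * y) := by
  have key : ∀ x : ℂ, x ≠ 0 → EE j (symAct j m v) x y = EE j v (m 0 0 * x + m 1 0 * y) (m 0 1 * x + m 1 1 * y) := by
    intro x hx
    have h1 := EE_hom j (symAct j m v) x 1 (y / x)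
    have h2 := EE_hom j v x (m 0 0 + m 1 0 * (y / x)) (m 0 1 + m 1 1 * (y / x))
    rw [symAct_eval1, ← h2] at h1
    have e1 : x * (y / x) = y := by field_simp
    have e2 : x * (m 0 0 + m 1 0 * (y / x)) = m 0 0 * x + m 1 0 * y := by field_simp
    have e3 : x * (m 0 1 + m 1 1 * (y / x)) = m 0 1 * x + m 1 1 * y := by field_simp
    rw [mul_one, e1, e2, e3] at h1
    exact h1
  have c1 : Continuous fun x => EE j (symAct j m v) x y := by unfold EE; fun_prop
  have c2 : Continuous fun x => EE j v (m 0 0 * x + m 1 0 * y) (m 0 1 * x + m 1 1 * y) := by unfold EE; fun_prop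
  exact congrFun (Continuous.ext_on (dense_compl_singleton (0 : ℂ)) c1 c2 (fun x hx => key x hx)) x

lemma symAct_mul (j : ℕ) (m n : Matrix (Fin 2) (Fin 2) ℂ) (v : Fin (j + 1) → ℂ) :
    symAct j (m * n) v = symAct j m (symAct j n v) := by
  apply EE_inj
  intro y
  rw [symAct_eval, symAct_eval, symAct_eval]
  simp only [Matrix.mul_apply, Fin.sum_univ_two]
  congr 1 <;> ring

lemma symAct_one (j : ℕ) (v : Fin (j + 1) → ℂ) : symAct j 1 v = v := by
  apply EE_inj
  intro y
  rw [symAct_eval]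
  simp

lemma symAct_neg_one (j : ℕ) (v : Fin (j + 1) → ℂ) : symAct j (-1) v = ((-1) ^ j : ℂ) • v := by
  apply EE_inj
  intro y
  rw [symAct_eval]
  have := EE_hom j v (-1) 1 y
  simp at this ⊢
  rw [this, EE, EE, Finset.mul_sum]
  exact Finset.sum_congr rfl fun l _ => by simp; ring

lemma symAct_inv (j : ℕ) (m : Matrix (Fin 2) (Fin 2) ℂ) (hm : m.det ≠ 0) (v : Fin (j + 1) → ℂ) :
    symAct j m (symAct j m⁻¹ v) = v := by
  rw [← symAct_mul, Matrix.mul_nonsing_inv _ hm.isUnit, symAct_one]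

lemma symAct_inv' (j : ℕ) (m : Matrix (Fin 2) (Fin 2) ℂ) (hm : m.det ≠ 0) (v : Fin (j + 1) → ℂ) :
    symAct j m⁻¹ (symAct j m v) = v := by
  rw [← symAct_mul, Matrix.nonsing_inv_mul _ hm.isUnit, symAct_one]

lemma slash_moeb (j : ℕ) (F : (Fin 2 → Fin 2 → ℂ) → (Fin (j + 1) → ℂ)) {γ δ : Matrix (Fin 4) (Fin 4) ℤ}
    (hγ : γ ∈ Sp4Z) (hδ : δ ∈ Sp4Z) {τ : Fin 2 → Fin 2 → ℂ} (hτ : τ ∈ H2) :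
    slashS j 2 γ F (moeb δ τ) = wt j 2 (den δ τ) (slashS j 2 (γ * δ) F τ) := by
  have h1 := den_det hδ hτ
  have h2 := den_det hγ (moeb_mem hδ hτ)
  rw [wt, slashS, slashS, moeb_mul hδ hτ, den_mul hδ hτ, symAct_smul, smul_smul, Matrix.mul_inv_rev, symAct_mul,
    symAct_inv j _ h1, Matrix.det_mul]
  congr 1
  rw [mul_zpow, ← mul_assoc, mul_comm (_ ^ (2:ℤ)), mul_assoc, ← zpow_add₀ h1]
  simp

lemma wt_inj (j : ℕ) (m : Matrix (Fin 2) (Fin 2) ℂ) (hm : m.det ≠ 0) {v w : Fin (j + 1) → ℂ}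
    (h : wt j 2 m v = wt j 2 m w) : v = w := by
  have h1 : symAct j m v = symAct j m w := smul_right_injective _ (zpow_ne_zero 2 hm) h
  rw [← symAct_inv' j m hm v, h1, symAct_inv' j m hm]

lemma slash_cancel (j : ℕ) (F : (Fin 2 → Fin 2 → ℂ) → (Fin (j + 1) → ℂ)) {γ : Matrix (Fin 4) (Fin 4) ℤ}
    (hγ : γ ∈ Sp4Z) {τ : Fin 2 → Fin 2 → ℂ} (hτ : τ ∈ H2) :
    wt j 2 (den γ τ) (slashS j 2 γ F τ) = F (moeb γ τ) := by
  have h1 := den_det hγ hτ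
  rw [wt, slashS, symAct_smul, smul_smul, symAct_inv j _ h1, ← zpow_add₀ h1]
  simp

/-- reduction -/
def red (γ : Matrix (Fin 4) (Fin 4) ℤ) : Matrix (Fin 4) (Fin 4) (ZMod 2) := γ.map (Int.castRingHom (ZMod 2))

lemma red_mul (γ δ : Matrix (Fin 4) (Fin 4) ℤ) : red (γ * δ) = red γ * red δ := Matrix.map_mul

lemma red_one : red 1 = 1 := Matrix.map_one _ (by simp) (by simp)

lemma mem_sp2 (γ : Matrix (Fin 4) (Fin 4) ℤ) : γ ∈ Sp4Z2 ↔ γ ∈ Sp4Z ∧ red γ = 1 := by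
  rw [Sp4Z2, Set.mem_ofPred_eq]
  refine and_congr_right fun _ => ?_
  rw [← Matrix.ext_iff]
  simp [red, Matrix.one_apply]

lemma slash_red {j : ℕ} {F : (Fin 2 → Fin 2 → ℂ) → (Fin (j + 1) → ℂ)}
    (hF : ∀ γ ∈ Sp4Z2, ∀ τ ∈ H2, F (moeb γ τ) = wt j 2 (den γ τ) (F τ)) {γ γ' : Matrix (Fin 4) (Fin 4) ℤ}
    (hγ : γ ∈ Sp4Z) (hγ' : γ' ∈ Sp4Z) (h : red γ = red γ') {τ : Fin 2 → Fin 2 → ℂ} (hτ : τ ∈ H2) :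
    slashS j 2 γ' F τ = slashS j 2 γ F τ := by
  obtain ⟨δ, hδ, h1, h2⟩ := sp_inv hγ
  have h3 : γ' * δ ∈ Sp4Z2 := (mem_sp2 _).2 ⟨sp_mul hγ' hδ, by rw [red_mul, ← h, ← red_mul, h2, red_one]⟩
  have h4 := slash_moeb j F h3.1 hγ hτ
  rw [Matrix.mul_assoc, h1, Matrix.mul_one] at h4
  have hm := moeb_mem hγ hτ
  have h5 : slashS j 2 (γ' * δ) F (moeb γ τ) = F (moeb γ τ) := by
    apply wt_inj j _ (den_det h3.1 hm)
    rw [slash_cancel j F h3.1 hm, hF _ h3 _ hm]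
  rw [h5] at h4
  apply wt_inj j _ (den_det hγ hτ)
  rw [← h4, slash_cancel j F hγ hτ]

lemma slash_one {j : ℕ} (F : (Fin 2 → Fin 2 → ℂ) → (Fin (j + 1) → ℂ)) (τ : Fin 2 → Fin 2 → ℂ) :
    slashS j 2 1 F τ = F τ := by
  have e : ∀ r s, blk 1 r s = if r = s then 1 else 0 := by
    intro r s
    ext i k
    fin_cases r <;> fin_cases s <;> fin_cases i <;> fin_cases k <;> simp [blk, Matrix.one_apply]
  have hd : den 1 τ = 1 := by simp [den, e]
  have hm : moeb 1 τ = τ := by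
    have := moeb_eq 1 τ
    rw [hd, num, e, e] at this
    simpa using this
  rw [slashS, hd, hm]
  simp [symAct_one]

/-- point of the half space -/
def ptm (p : ℂ × ℂ × ℂ) : Fin 2 → Fin 2 → ℂ := ![![p.1, p.2.1], ![p.2.1, p.2.2]]

lemma ptm_mem {p : ℂ × ℂ × ℂ} : ptm p ∈ H2 ↔ p ∈ DD := by
  rw [memH2_iff]; simp [ptm]

lemma of_ptm (τ z σ : ℂ) : Matrix.of (ptm (τ, z, σ)) = !![τ, z; z, σ] := rfl

lemma ptm_surj {τ : Fin 2 → Fin 2 → ℂ} (h : τ ∈ H2) : τ = ptm (τ 0 0, τ 0 1, τ 1 1) := by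
  have := ((memH2_iff τ).1 h).1
  ext i k
  fin_cases i <;> fin_cases k <;> simp [ptm, this]

lemma moeb_of {γ : Matrix (Fin 4) (Fin 4) ℤ} {τ τ' : Fin 2 → Fin 2 → ℂ} (hd : (den γ τ).det ≠ 0)
    (h : Matrix.of τ' * den γ τ = num γ τ) : moeb γ τ = τ' := by
  have := moeb_eq γ τ
  rw [← h, Matrix.mul_nonsing_inv_cancel_right _ _ hd.isUnit] at this
  exact this

def gT (a b c : ℤ) : Matrix (Fin 4) (Fin 4) ℤ := !![1,0,a,b; 0,1,b,c; 0,0,1,0; 0,0,0,1]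
def gU (s : ℤ) : Matrix (Fin 4) (Fin 4) ℤ := !![1,0,0,0; s,1,0,0; 0,0,1,-s; 0,0,0,1]
def gP : Matrix (Fin 4) (Fin 4) ℤ := !![0,1,0,0; 1,0,0,0; 0,0,0,1; 0,0,1,0]
def gS : Matrix (Fin 4) (Fin 4) ℤ := !![1,0,0,0; 0,0,0,-1; 0,0,1,0; 0,1,0,0]

lemma gT_mem (a b c : ℤ) : gT a b c ∈ Sp4Z := by
  show (gT a b c)ᵀ * J4 * gT a b c = J4
  ext i k
  fin_cases i <;> fin_cases k <;> simp [gT, J4, Matrix.mul_apply, Fin.sum_univ_four]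
lemma gU_mem (s : ℤ) : gU s ∈ Sp4Z := by
  show (gU s)ᵀ * J4 * gU s = J4
  ext i k
  fin_cases i <;> fin_cases k <;> simp [gU, J4, Matrix.mul_apply, Fin.sum_univ_four]
lemma gP_mem : gP ∈ Sp4Z := by
  show gPᵀ * J4 * gP = J4
  decide
lemma gS_mem : gS ∈ Sp4Z := by
  show gSᵀ * J4 * gS = J4
  decide
lemma gN_mem : (-1 : Matrix (Fin 4) (Fin 4) ℤ) ∈ Sp4Z := by
  show (-1)ᵀ * J4 * (-1) = J4
  simp

lemma gT_den (a b c : ℤ) (τ z σ : ℂ) : den (gT a b c) (ptm (τ, z, σ)) = 1 := by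
  ext i k
  fin_cases i <;> fin_cases k <;> simp [den, gT, blk, of_ptm, Matrix.mul_apply, Fin.sum_univ_two]
lemma gU_den (s : ℤ) (τ z σ : ℂ) : den (gU s) (ptm (τ, z, σ)) = !![1, -(s : ℂ); 0, 1] := by
  ext i k
  fin_cases i <;> fin_cases k <;> simp [den, gU, blk, of_ptm, Matrix.mul_apply, Fin.sum_univ_two]
lemma gP_den (τ z σ : ℂ) : den gP (ptm (τ, z, σ)) = !![0, 1; 1, 0] := by
  ext i k
  fin_cases i <;> fin_cases k <;> simp [den, gP, blk, of_ptm, Matrix.mul_apply, Fin.sum_univ_two]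
lemma gS_den (τ z σ : ℂ) : den gS (ptm (τ, z, σ)) = !![1, 0; z, σ] := by
  ext i k
  fin_cases i <;> fin_cases k <;> simp [den, gS, blk, of_ptm, Matrix.mul_apply, Fin.sum_univ_two]
lemma gN_den (τ z σ : ℂ) : den (-1) (ptm (τ, z, σ)) = -1 := by
  ext i k
  fin_cases i <;> fin_cases k <;> simp [den, blk, of_ptm, Matrix.mul_apply, Fin.sum_univ_two, Matrix.one_apply]

lemma gT_moeb (a b c : ℤ) (τ z σ : ℂ) : moeb (gT a b c) (ptm (τ, z, σ)) = ptm (τ + a, z + b, σ + c) := by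
  apply moeb_of
  · simp [gT_den]
  · rw [gT_den]
    ext i k
    fin_cases i <;> fin_cases k <;> simp [num, gT, blk, of_ptm, Matrix.mul_apply, Fin.sum_univ_two]
lemma gU_moeb (s : ℤ) (τ z σ : ℂ) : moeb (gU s) (ptm (τ, z, σ)) = ptm (τ, z + s * τ, σ + 2 * s * z + s ^ 2 * τ) := by
  apply moeb_of
  · simp [gU_den]
  · rw [gU_den]
    ext i k
    fin_cases i <;> fin_cases k <;> simp [num, gU, blk, of_ptm, Matrix.mul_apply, Fin.sum_univ_two] <;> ring
lemma gP_moeb (τ z σ : ℂ) : moeb gP (ptm (τ, z, σ)) = ptm (σ, z, τ) := by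
  apply moeb_of
  · simp [gP_den]
  · rw [gP_den]
    ext i k
    fin_cases i <;> fin_cases k <;> simp [num, gP, blk, of_ptm, Matrix.mul_apply, Fin.sum_univ_two]
lemma gS_moeb (τ z σ : ℂ) (h : σ ≠ 0) : moeb gS (ptm (τ, z, σ)) = ptm (τ - z ^ 2 / σ, z / σ, -1 / σ) := by
  apply moeb_of
  · simp [gS_den, h]
  · rw [gS_den]
    ext i k
    fin_cases i <;> fin_cases k <;> simp [num, gS, blk, of_ptm, Matrix.mul_apply, Fin.sum_univ_two] <;> field_simp <;> ring
lemma gN_moeb (τ z σ : ℂ) : moeb (-1) (ptm (τ, z, σ)) = ptm (τ, z, σ) := by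
  apply moeb_of
  · simp [gN_den, Matrix.det_fin_two]
  · rw [gN_den]
    ext i k
    fin_cases i <;> fin_cases k <;> simp [num, blk, of_ptm, Matrix.mul_apply, Fin.sum_univ_two, Matrix.one_apply]

lemma red_gT (a b c : ℤ) : red (gT (2 * a) (2 * b) (2 * c)) = 1 := by
  have h : (2 : ZMod 2) = 0 := rfl
  ext i k
  fin_cases i <;> fin_cases k <;> simp [red, gT, h]

lemma red_gN : red (-1) = 1 := by decide

lemma symAct_gU (j : ℕ) (s : ℂ) (v : Fin (j + 1) → ℂ) (i : Fin (j + 1)) :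
    symAct j !![1, s; 0, 1] v i = ∑ l : Fin (j + 1), ((l : ℕ).choose i : ℂ) * s ^ ((l : ℕ) - i) * v l := by
  refine Finset.sum_congr rfl fun l _ => ?_
  congr 1
  simp only [symCoeff]
  simp [add_comm (Polynomial.C s), Polynomial.coeff_X_add_C_pow]
  ring

lemma symAct_gP (j : ℕ) (v : Fin (j + 1) → ℂ) (i : Fin (j + 1)) :
    symAct j !![0, 1; 1, 0] v i = v (Fin.rev i) := by
  simp only [symAct, symCoeff]
  rw [Finset.sum_eq_single (Fin.rev i)]
  · have : j - (Fin.rev i : ℕ) = i := by simp [Fin.val_rev]; omega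
    rw [this]; simp
  · intro l _ hl
    have : (i : ℕ) ≠ j - (l : ℕ) := by
      intro hc; apply hl; ext; rw [Fin.val_rev]; have := l.isLt; have := i.isLt; omega
    simp [Polynomial.coeff_X_pow, this]
  · simp

lemma symAct_gS (j : ℕ) (z σ : ℂ) (v : Fin (j + 1) → ℂ) (i : Fin (j + 1)) :
    symAct j !![1, 0; z, σ] v i = ∑ l : Fin (j + 1), if (l : ℕ) ≤ i then
      ((j - (l : ℕ)).choose (i - l) : ℂ) * z ^ ((i : ℕ) - l) * σ ^ (l : ℕ) * v l else 0 := by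
  refine Finset.sum_congr rfl fun l _ => ?_
  simp only [symCoeff]
  have e : ((Polynomial.C ((!![1, 0; z, σ] : Matrix (Fin 2) (Fin 2) ℂ) 0 0) + Polynomial.C ((!![1, 0; z, σ] : Matrix (Fin 2) (Fin 2) ℂ) 1 0) * Polynomial.X) ^ (j - (l : ℕ)) *
    (Polynomial.C ((!![1, 0; z, σ] : Matrix (Fin 2) (Fin 2) ℂ) 0 1) + Polynomial.C ((!![1, 0; z, σ] : Matrix (Fin 2) (Fin 2) ℂ) 1 1) * Polynomial.X) ^ (l : ℕ)) =
     (Polynomial.C (σ ^ (l : ℕ)) * (((Polynomial.X + Polynomial.C (1 : ℂ)) ^ (j - (l : ℕ))).comp (Polynomial.C z * Polynomial.X))) * Polynomial.X ^ (l : ℕ) := by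
    simp
    ring
  rw [e, Polynomial.coeff_mul_X_pow']
  split_ifs with h
  · rw [Polynomial.coeff_C_mul, Polynomial.comp_C_mul_X_coeff, Polynomial.coeff_X_add_C_pow]
    ring
  · simp

/-- index set of residue classes -/
def IX : Type := {M : Matrix (Fin 4) (Fin 4) (ZMod 2) // ∃ γ ∈ Sp4Z, red γ = M}

instance IX_finite : Finite IX := by unfold IX; infer_instance

def IX.g (x : IX) : Matrix (Fin 4) (Fin 4) ℤ := Classical.choose x.2

lemma IX.g_mem (x : IX) : x.g ∈ Sp4Z := (Classical.choose_spec x.2).1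
lemma IX.g_red (x : IX) : red x.g = x.1 := (Classical.choose_spec x.2).2

def IX.mk (γ : Matrix (Fin 4) (Fin 4) ℤ) (h : γ ∈ Sp4Z) : IX := ⟨red γ, γ, h, rfl⟩

lemma IX.mk_red (γ : Matrix (Fin 4) (Fin 4) ℤ) (h : γ ∈ Sp4Z) : red γ = red (IX.mk γ h).g := by
  rw [IX.g_red]; rfl

def PH (j : ℕ) (F : (Fin 2 → Fin 2 → ℂ) → (Fin (j + 1) → ℂ)) (x : IX) (i : ℕ) (p : ℂ × ℂ × ℂ) : ℂ :=
  if h : i < j + 1 then slashS j 2 x.g F (ptm p) ⟨i, h⟩ else 0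

lemma PH_key {j : ℕ} {F : (Fin 2 → Fin 2 → ℂ) → (Fin (j + 1) → ℂ)}
    (hF : ∀ γ ∈ Sp4Z2, ∀ τ ∈ H2, F (moeb γ τ) = wt j 2 (den γ τ) (F τ)) (x : IX)
    {δ : Matrix (Fin 4) (Fin 4) ℤ} (hδ : δ ∈ Sp4Z) : ∃ y : IX, (red δ = 1 → y = x) ∧ ∀ τ ∈ H2,
    slashS j 2 x.g F (moeb δ τ) = wt j 2 (den δ τ) (slashS j 2 y.g F τ) := by
  have hm := sp_mul x.g_mem hδ
  refine ⟨IX.mk _ hm, ?_, fun τ hτ => ?_⟩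
  · intro h
    apply Subtype.ext
    show red (x.g * δ) = x.1
    rw [red_mul, h, mul_one, x.g_red]
  · rw [slash_moeb j F x.g_mem hδ hτ, slash_red hF hm (IX.g_mem _) (IX.mk_red _ hm) hτ]

lemma wt_one (j : ℕ) (v : Fin (j + 1) → ℂ) : wt j 2 1 v = v := by
  simp [wt, symAct_one]

lemma den_inv_entry (f : ℂ × ℂ × ℂ → Matrix (Fin 2) (Fin 2) ℂ) (s : Set (ℂ × ℂ × ℂ))
    (hf : ∀ i k, DifferentiableOn ℂ (fun p => f p i k) s) (h0 : ∀ p ∈ s, (f p).det ≠ 0) (i k : Fin 2) :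
    DifferentiableOn ℂ (fun p => (f p)⁻¹ i k) s := by
  have hd : DifferentiableOn ℂ (fun p => (f p).det) s := by
    simp only [Matrix.det_fin_two]
    exact ((hf 0 0).mul (hf 1 1)).sub ((hf 0 1).mul (hf 1 0))
  have hinv := hd.inv h0
  have e : ∀ p, (f p)⁻¹ i k = ((f p).det)⁻¹ * (!![f p 1 1, -f p 0 1; -f p 1 0, f p 0 0] : Matrix (Fin 2) (Fin 2) ℂ) i k := by
    intro p
    rw [Matrix.inv_def, Matrix.adjugate_fin_two, Ring.inverse_eq_inv']
    rfl
  simp only [e]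
  refine DifferentiableOn.mul hinv ?_
  fin_cases i <;> fin_cases k <;> simp
  · exact hf 1 1
  · exact hf 0 1
  · exact hf 1 0
  · exact hf 0 0

lemma coeff_mul_diff (P Q : ℂ × ℂ × ℂ → Polynomial ℂ) (s : Set (ℂ × ℂ × ℂ))
    (hP : ∀ n, DifferentiableOn ℂ (fun p => (P p).coeff n) s) (hQ : ∀ n, DifferentiableOn ℂ (fun p => (Q p).coeff n) s) (n : ℕ) :
    DifferentiableOn ℂ (fun p => (P p * Q p).coeff n) s := by
  simp only [Polynomial.coeff_mul]
  exact DifferentiableOn.fun_sum fun q _ => (hP _).mul (hQ _)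

lemma coeff_pow_diff (P : ℂ × ℂ × ℂ → Polynomial ℂ) (s : Set (ℂ × ℂ × ℂ))
    (hP : ∀ n, DifferentiableOn ℂ (fun p => (P p).coeff n) s) (k n : ℕ) :
    DifferentiableOn ℂ (fun p => (P p ^ k).coeff n) s := by
  induction k generalizing n with
  | zero => simp only [pow_zero]; exact differentiableOn_const _
  | succ k ih => simp only [pow_succ]; exact coeff_mul_diff _ _ s ih hP n

lemma symCoeff_diff (j : ℕ) (f : ℂ × ℂ × ℂ → Matrix (Fin 2) (Fin 2) ℂ) (s : Set (ℂ × ℂ × ℂ))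
    (hf : ∀ i k, DifferentiableOn ℂ (fun p => f p i k) s) (l i : Fin (j + 1)) :
    DifferentiableOn ℂ (fun p => symCoeff j (f p) l i) s := by
  have h1 : ∀ (k : Fin 2) n, DifferentiableOn ℂ (fun p => (Polynomial.C (f p 0 k) + Polynomial.C (f p 1 k) * Polynomial.X).coeff n) s := by
    intro k n
    simp only [Polynomial.coeff_add, Polynomial.coeff_C_mul, Polynomial.coeff_C]
    refine DifferentiableOn.add ?_ ((hf 1 k).mul (differentiableOn_const _))
    split_ifs
    · exact hf 0 k
    · exact differentiableOn_const _
  exact coeff_mul_diff _ _ s (coeff_pow_diff _ s (h1 0) _) (coeff_pow_diff _ s (h1 1) _) _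

lemma lin_diff (A B : Matrix (Fin 2) (Fin 2) ℂ) (i k : Fin 2) :
    Differentiable ℂ fun p => (A * Matrix.of (ptm p) + B) i k := by
  simp only [Matrix.add_apply, Matrix.mul_apply, Fin.sum_univ_two]
  have : ∀ a b : Fin 2, Differentiable ℂ fun p => Matrix.of (ptm p) a b := by
    intro a b
    fin_cases a <;> fin_cases b <;> simp only [ptm] <;> simp
  exact (((this _ _).const_mul _).add ((this _ _).const_mul _)).add_const _

lemma slash_diff {j : ℕ} {F : (Fin 2 → Fin 2 → ℂ) → (Fin (j + 1) → ℂ)} (hF : DifferentiableOn ℂ F H2)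
    {γ : Matrix (Fin 4) (Fin 4) ℤ} (hγ : γ ∈ Sp4Z) (i : Fin (j + 1)) :
    DifferentiableOn ℂ (fun p => slashS j 2 γ F (ptm p) i) DD := by
  have hden : ∀ i k, DifferentiableOn ℂ (fun p => den γ (ptm p) i k) DD :=
    fun i k => (lin_diff _ _ i k).differentiableOn
  have h0 : ∀ p ∈ DD, (den γ (ptm p)).det ≠ 0 := fun p hp => den_det hγ (ptm_mem.2 hp)
  have hinv := den_inv_entry _ DD hden h0
  have hdet : DifferentiableOn ℂ (fun p => (den γ (ptm p)).det) DD := by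
    simp only [Matrix.det_fin_two]
    exact ((hden 0 0).mul (hden 1 1)).sub ((hden 0 1).mul (hden 1 0))
  have hmo : DifferentiableOn ℂ (fun p => moeb γ (ptm p)) DD := by
    rw [differentiableOn_pi]; intro a
    rw [differentiableOn_pi]; intro b
    simp only [moeb]
    simp only [Matrix.mul_apply (M := blk γ 0 0 * _ + _), Fin.sum_univ_two]
    exact ((lin_diff _ _ a 0).differentiableOn.mul (hinv 0 b)).add ((lin_diff _ _ a 1).differentiableOn.mul (hinv 1 b))
  have hFm : DifferentiableOn ℂ (fun p => F (moeb γ (ptm p))) DD :=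
    hF.comp hmo (fun p hp => moeb_mem hγ (ptm_mem.2 hp))
  rw [differentiableOn_pi] at hFm
  simp only [slashS, Pi.smul_apply, smul_eq_mul, symAct]
  refine DifferentiableOn.mul ?_ (DifferentiableOn.fun_sum fun l _ => (symCoeff_diff j _ DD hinv l i).mul (hFm l))
  exact fun p hp => (hdet p hp).zpow (Or.inl (h0 p hp))

lemma DD_sigma {τ z σ : ℂ} (h : (τ, z, σ) ∈ DD) : σ ≠ 0 := by
  rintro rfl
  have h2 : z.im ^ 2 < τ.im * (0 : ℂ).im := h.2
  simp at h2
  nlinarith [sq_nonneg z.im]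

lemma PH_AD {j : ℕ} {F : (Fin 2 → Fin 2 → ℂ) → (Fin (j + 1) → ℂ)}
    (hF : IsSiegelCuspForm j 2 Sp4Z2 (fun _ => 1) F) : AD j (PH j F) := by
  have hF2 : ∀ γ ∈ Sp4Z2, ∀ τ ∈ H2, F (moeb γ τ) = wt j 2 (den γ τ) (F τ) := by
    intro γ hγ τ hτ
    rw [hF.2.1 γ hγ τ hτ, one_smul]
  have sl : ∀ x i (h : i < j + 1) p, PH j F x i p = slashS j 2 x.g F (ptm p) ⟨i, h⟩ := fun x i h p => dif_pos h
  have sl0 : ∀ x i (h : ¬ i < j + 1) p, PH j F x i p = 0 := fun x i h p => dif_neg h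
  have tr : ∀ x (a b c : ℤ), ∃ y : IX, (red (gT a b c) = 1 → y = x) ∧ ∀ i (τ z σ : ℂ), (τ, z, σ) ∈ DD →
      PH j F x i (τ + a, z + b, σ + c) = PH j F y i (τ, z, σ) := by
    intro x a b c
    obtain ⟨y, hy1, hy⟩ := PH_key hF2 x (gT_mem a b c)
    refine ⟨y, hy1, fun i τ z σ hm => ?_⟩
    by_cases hi : i < j + 1
    · have := hy _ (ptm_mem.2 hm)
      rw [gT_moeb, gT_den, wt_one] at this
      rw [sl _ _ hi, sl _ _ hi, this]
    · rw [sl0 _ _ hi, sl0 _ _ hi]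
  constructor
  · intro x i p h
    exact sl0 _ _ (by omega) _
  · intro x i
    by_cases hi : i < j + 1
    · exact (slash_diff hF.1 x.g_mem ⟨i, hi⟩).congr fun p _ => sl x i hi p
    · exact (differentiableOn_const (0 : ℂ)).congr fun p _ => sl0 x i hi p
  · intro x i τ z σ hm a b c
    obtain ⟨y, hy1, hy⟩ := tr x (2 * a) (2 * b) (2 * c)
    have := hy1 (red_gT a b c)
    subst this
    have := hy i τ z σ hm
    push_cast at this
    exact this
  · intro x
    obtain ⟨y, -, hy⟩ := tr x 0 0 1
    refine ⟨y, fun i τ z σ hm => ?_⟩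
    have := hy i τ z σ hm
    simpa using this
  · intro x
    obtain ⟨y, -, hy⟩ := tr x 0 1 0
    refine ⟨y, fun i τ z σ hm => ?_⟩
    have := hy i τ z σ hm
    simpa using this
  · intro x s
    obtain ⟨y, -, hy⟩ := PH_key hF2 x (gU_mem s)
    refine ⟨y, fun i τ z σ hm => ?_⟩
    by_cases hi : i < j + 1
    · have := hy _ (ptm_mem.2 hm)
      rw [gU_moeb, gU_den, wt] at this
      simp only [Matrix.det_fin_two_of, mul_one, mul_zero, sub_zero, _root_.one_zpow, one_smul] at this
      have h2 := congrArg (symAct j !![1, (s : ℂ); 0, 1]) this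
      rw [← symAct_mul, show (!![1, (s : ℂ); 0, 1] : Matrix (Fin 2) (Fin 2) ℂ) * !![1, -(s : ℂ); 0, 1] = 1 by
        ext a b; fin_cases a <;> fin_cases b <;> simp, symAct_one] at h2
      rw [sl _ _ hi, ← h2, symAct_gU, Finset.sum_range]
      exact Finset.sum_congr rfl fun l _ => by rw [sl _ _ l.isLt]
    · rw [sl0 _ _ hi]
      symm
      apply Finset.sum_eq_zero
      intro l hl
      rw [Finset.mem_range] at hl
      rw [Nat.choose_eq_zero_of_lt (by omega)]
      simp
  · intro x
    obtain ⟨y, -, hy⟩ := PH_key hF2 x gP_mem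
    refine ⟨y, fun i hi τ z σ hm => ?_⟩
    have := hy _ (ptm_mem.2 hm)
    rw [gP_moeb, gP_den, wt] at this
    simp only [Matrix.det_fin_two_of, mul_one, mul_zero, zero_sub] at this
    rw [sl _ _ (by omega), sl _ _ (show j - i < j + 1 by omega), this, Pi.smul_apply, symAct_gP]
    have e : Fin.rev (⟨j - i, by omega⟩ : Fin (j + 1)) = ⟨i, by omega⟩ := by
      ext; simp [Fin.val_rev]; omega
    rw [e]; simp
  · intro x
    obtain ⟨y, -, hy⟩ := PH_key hF2 x gS_mem
    refine ⟨y, fun i hi τ z σ hm => ?_⟩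
    have := hy _ (ptm_mem.2 hm)
    rw [gS_moeb _ _ _ (DD_sigma hm), gS_den, wt] at this
    simp only [Matrix.det_fin_two_of, one_mul, zero_mul, sub_zero] at this
    rw [sl _ _ (by omega), this, Pi.smul_apply, symAct_gS, smul_eq_mul]
    congr 1
    rw [← Finset.sum_filter]
    symm
    refine Finset.sum_bij (fun l hl => ⟨l, by rw [Finset.mem_range] at hl; omega⟩) ?_ ?_ ?_ ?_
    · intro l hl
      rw [Finset.mem_range] at hl
      simp; omega
    · intro a _ b _ hab
      simpa using hab
    · intro b hb
      simp at hb
      exact ⟨b, by simp; omega, rfl⟩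
    · intro l hl
      rw [Finset.mem_range] at hl
      rw [sl _ _ (by omega)]
  · intro x i τ hτ
    by_cases hi : i < j + 1
    · have := (tendsto_pi_nhds.1 (hF.2.2.1 x.g x.g_mem τ hτ)) ⟨i, hi⟩
      refine this.congr fun t => ?_
      rw [sl _ _ hi]
      congr 2
      ext a b
      fin_cases a <;> fin_cases b <;> simp [diagH, ptm]
    · simp only [sl0 _ _ hi]
      exact tendsto_const_nhds

theorem main_vanish (j : ℕ) (hj : j < 12) :
    SiegelCusp j 2 Sp4Z2 (fun _ => 1) = ⊥ := by
  rw [eq_bot_iff]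
  intro F hF
  have hF : IsSiegelCuspForm j 2 Sp4Z2 (fun _ => 1) F := hF
  rw [Submodule.mem_bot]
  funext τ
  by_cases hτ : τ ∈ H2
  swap
  · exact hF.2.2.2 τ hτ
  have hF2 : ∀ γ ∈ Sp4Z2, ∀ τ ∈ H2, F (moeb γ τ) = wt j 2 (den γ τ) (F τ) := by
    intro γ hγ τ hτ
    rw [hF.2.1 γ hγ τ hτ, one_smul]
  have hD : (τ 0 0, τ 0 1, τ 1 1) ∈ DD := ((memH2_iff τ).1 hτ).2
  by_cases h11 : j = 11
  · subst h11
    have h := hF2 (-1) ((mem_sp2 _).2 ⟨gN_mem, red_gN⟩) τ hτ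
    rw [ptm_surj hτ, gN_moeb, gN_den, ← ptm_surj hτ, wt, symAct_neg_one] at h
    have e : ((-1 : Matrix (Fin 2) (Fin 2) ℂ).det) = 1 := by simp [Matrix.det_fin_two]
    rw [e, _root_.one_zpow, one_smul] at h
    have : F τ = -F τ := by
      conv_lhs => rw [h]
      norm_num
    exact self_eq_neg.1 this
  · have hone : (1 : Matrix (Fin 4) (Fin 4) ℤ) ∈ Sp4Z := by
      show (1 : Matrix (Fin 4) (Fin 4) ℤ)ᵀ * J4 * 1 = J4
      simp
    funext i
    have h := (PH_AD hF).vanish (by omega) (IX.mk 1 hone) i _ _ _ hD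
    rw [PH, dif_pos i.isLt, ← ptm_surj hτ, slash_red hF2 hone (IX.g_mem _) (IX.mk_red _ hone) hτ, slash_one] at h
    exact h

/-- For every integer `j` with `0 ≤ j < 12`, the space `S_{j,2}(Γ₂[2])` of Siegel cusp forms
of degree 2 and weight `(j,2)` on the principal congruence subgroup of level 2 is zero. -/
theorem vanishing_Sj2_level_two (j : ℕ) (hj : j < 12) :
    SiegelCusp j 2 Sp4Z2 (fun _ => 1) = ⊥ := by
  exact main_vanish j hj
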